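/- Let D ⊂ ℂⁿ be a strongly α-regular domain, K ⊂ D a compact set, and ψ : K → ℝ a Hölder continuous function with sup_K ψ < 0 admitting a negative α-subharmonic extension to D. Then ω_α(z,K,D,ψ) is Hölder continuous on D if and only if there exist constants C > 0 and 0 < λ ≤ 1 such that |ω_α(z,K,D,ψ) − ψ(w)| ≤ C·(dist(z,K))^λ holds for every z in some neighborhood of K, where w ∈ K is a point closest to z, i.e. |z − w| = dist(z,K). -/

import Mathlib

open MeasureTheory Filter Topology Complex Metric

noncomputable section

/-- Complex `n`-space. -/
abbrev Cn (n : ℕ) := Fin n → ℂ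

/-- The Wirtinger derivative `∂f/∂z_j` of a (real-differentiable) function `f : ℂⁿ → ℂ`. -/
noncomputable def wdz {n : ℕ} (j : Fin n) (f : Cn n → ℂ) (z : Cn n) : ℂ :=
  (fderiv ℝ f z (Pi.single j 1) - Complex.I * fderiv ℝ f z (Pi.single j Complex.I)) / 2

/-- The Wirtinger derivative `∂f/∂z̄_j` of a (real-differentiable) function `f : ℂⁿ → ℂ`. -/
noncomputable def wdzbar {n : ℕ} (j : Fin n) (f : Cn n → ℂ) (z : Cn n) : ℂ :=
  (fderiv ℝ f z (Pi.single j 1) + Complex.I * fderiv ℝ f z (Pi.single j Complex.I)) / 2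

/-- The square of the Euclidean norm `|z|² = ∑ |z_i|²` on `ℂⁿ`. -/
noncomputable def sqNorm {n : ℕ} (z : Cn n) : ℝ := ∑ i, Complex.normSq (z i)

/-- A closed, strictly positive differential form `α` of bidegree `(n-1, n-1)` with `C¹`
coefficients on `ℂⁿ`, recorded through its normalized coefficient matrix:  `coeff j k` is
the Hermitian positive-definite matrix `A_{jk}` such that
`dd^c u ∧ α = (∑_{j,k} A_{jk} ∂²u/∂z_j∂z̄_k) dV`.  In these terms closedness of `α`
reads `∑_j ∂A_{jk}/∂z_j = 0` for every `k` (the conjugate identity follows by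
Hermitian symmetry). -/
structure AlphaForm (n : ℕ) where
  coeff : Fin n → Fin n → Cn n → ℂ
  contDiff : ∀ j k, ContDiff ℝ 1 (coeff j k)
  hermitian : ∀ j k z, coeff k j z = starRingEnd ℂ (coeff j k z)
  strictlyPositive : ∀ z : Cn n, ∀ ξ : Fin n → ℂ, ξ ≠ 0 →
    0 < (∑ j, ∑ k, coeff j k z * ξ j * starRingEnd ℂ (ξ k)).re
  closed : ∀ k, ∀ z : Cn n, (∑ j, wdz j (coeff j k) z) = 0

/-- The second order operator `f ↦ ∑_{j,k} A_{jk} ∂²f/∂z_j∂z̄_k` representing the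
top-degree form `dd^c f ∧ α` (with respect to Lebesgue measure). -/
noncomputable def alphaOp {n : ℕ} (A : AlphaForm n) (f : Cn n → ℂ) (z : Cn n) : ℂ :=
  ∑ j, ∑ k, A.coeff j k z * wdzbar k (wdz j f) z

/-- The operator `alphaOp` applied to a real-valued function, returning the real part. -/
noncomputable def alphaOpR {n : ℕ} (A : AlphaForm n) (ω : Cn n → ℝ) (z : Cn n) : ℝ :=
  (alphaOp A (fun w => (ω w : ℂ)) z).re

/-- `u : ℂⁿ → EReal` is `α`-subharmonic on `D`: it is finite-or-`-∞`, strongly upper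
semicontinuous on `D`, locally integrable on `D`, and the current `dd^c u ∧ α` is
positive, i.e. `∫_D u · (α ∧ dd^c ω) ≥ 0` for every nonnegative test function `ω` on `D`. -/
def IsAlphaSubharmonicE {n : ℕ} (A : AlphaForm n) (D : Set (Cn n)) (u : Cn n → EReal) : Prop :=
  (∀ z ∈ D, u z ≠ ⊤) ∧
  UpperSemicontinuousOn u D ∧
  (∀ z₀ ∈ D, ∀ S : Set (Cn n),
      (∃ N ∈ 𝓝 z₀, volume (N \ S) = 0) → Filter.limsup u (𝓝[S] z₀) = u z₀) ∧
  LocallyIntegrableOn (fun z => (u z).toReal) D volume ∧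
  ∀ ω : Cn n → ℝ, ContDiff ℝ (⊤ : ℕ∞) ω → HasCompactSupport ω → tsupport ω ⊆ D →
    (∀ z, 0 ≤ ω z) → 0 ≤ ∫ z in D, (u z).toReal * alphaOpR A ω z

/-- A real-valued function is `α`-subharmonic on `D` if it is so as an `EReal`-valued
function. -/
def IsAlphaSubharmonic {n : ℕ} (A : AlphaForm n) (D : Set (Cn n)) (u : Cn n → ℝ) : Prop :=
  IsAlphaSubharmonicE A D (fun z => (u z : EReal))

/-- `h` is `α`-harmonic on the open set `U`: `dd^c h ∧ α = 0` there, in the sense of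
currents. -/
def IsAlphaHarmonicOn {n : ℕ} (A : AlphaForm n) (U : Set (Cn n)) (h : Cn n → ℝ) : Prop :=
  LocallyIntegrableOn h U volume ∧
  ∀ ω : Cn n → ℝ, ContDiff ℝ (⊤ : ℕ∞) ω → HasCompactSupport ω → tsupport ω ⊆ U →
    (∫ z in U, h z * alphaOpR A ω z) = 0

/-- `u` is strictly `α`-subharmonic on `G`: for every compact subdomain `G' ⋐ G` there is
`ε > 0` with `u - ε|z|²` `α`-subharmonic on `G'`. -/
def IsStrictlyAlphaSubharmonic {n : ℕ} (A : AlphaForm n) (G : Set (Cn n)) (u : Cn n → ℝ) :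
    Prop :=
  ∀ G' : Set (Cn n), IsOpen G' → IsCompact (closure G') → closure G' ⊆ G →
    ∃ ε > (0 : ℝ), IsAlphaSubharmonic A G' (fun z => u z - ε * sqNorm z)

/-- `D` is a bounded `α`-regular domain: a bounded domain carrying a negative
`α`-subharmonic exhaustion `ρ` with boundary limit `0`. -/
def IsAlphaRegularDomain {n : ℕ} (A : AlphaForm n) (D : Set (Cn n)) : Prop :=
  IsOpen D ∧ IsConnected D ∧ Bornology.IsBounded D ∧
  ∃ ρ : Cn n → ℝ, IsAlphaSubharmonic A D ρ ∧ (∀ z ∈ D, ρ z < 0) ∧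
    ∀ ζ ∈ frontier D, Filter.Tendsto ρ (𝓝[D] ζ) (𝓝 0)

/-- `D` is a strongly `α`-regular domain: `D = {ρ < 0}` for some `ρ` which is `C²` and
strictly `α`-subharmonic on a neighborhood `D⁺` of `closure D`. -/
def IsStronglyAlphaRegularDomain {n : ℕ} (A : AlphaForm n) (D : Set (Cn n)) : Prop :=
  IsOpen D ∧ IsConnected D ∧ Bornology.IsBounded D ∧
  ∃ Dp : Set (Cn n), IsOpen Dp ∧ closure D ⊆ Dp ∧
    ∃ ρ : Cn n → ℝ, ContDiffOn ℝ 2 ρ Dp ∧ IsStrictlyAlphaSubharmonic A Dp ρ ∧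
      D = {z ∈ Dp | ρ z < 0}

/-- The class `U(E, D, ψ)` of `α`-subharmonic functions `u` on `D` with `u ≤ ψ` on `E`
and `u < 0` on `D`. -/
def Uclass {n : ℕ} (A : AlphaForm n) (E D : Set (Cn n)) (ψ : Cn n → ℝ) :
    Set (Cn n → ℝ) :=
  {u | IsAlphaSubharmonic A D u ∧ (∀ z ∈ E, u z ≤ ψ z) ∧ ∀ z ∈ D, u z < 0}

/-- The weighted extremal function `ω_α(z, E, D, ψ)`. -/
noncomputable def omegaW {n : ℕ} (A : AlphaForm n) (E D : Set (Cn n)) (ψ : Cn n → ℝ)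
    (z : Cn n) : ℝ :=
  sSup ((fun u : Cn n → ℝ => u z) '' Uclass A E D ψ)

/-- The weighted `α`-subharmonic measure `ω*_α(z, E, D, ψ)`: the upper semicontinuous
regularization of `ω_α(·, E, D, ψ)`. -/
noncomputable def omegaWStar {n : ℕ} (A : AlphaForm n) (E D : Set (Cn n)) (ψ : Cn n → ℝ)
    (z : Cn n) : ℝ :=
  Filter.limsup (omegaW A E D ψ) (𝓝 z)

/-- The (unweighted) extremal function `ω_α(z, E, D)`. -/
noncomputable def omega0 {n : ℕ} (A : AlphaForm n) (E D : Set (Cn n)) : Cn n → ℝ :=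
  omegaW A E D (fun _ => (-1 : ℝ))

/-- The (unweighted) `α`-subharmonic measure `ω*_α(z, E, D)`. -/
noncomputable def omega0Star {n : ℕ} (A : AlphaForm n) (E D : Set (Cn n)) : Cn n → ℝ :=
  omegaWStar A E D (fun _ => (-1 : ℝ))

/-- `S` is `α`-polar in `D`: there is an `α`-subharmonic `ρ` on `D`, not identically
`-∞`, with `ρ = -∞` on `S`. -/
def IsAlphaPolar {n : ℕ} (A : AlphaForm n) (D S : Set (Cn n)) : Prop :=
  ∃ ρ : Cn n → EReal, IsAlphaSubharmonicE A D ρ ∧ (∃ z ∈ D, ρ z ≠ ⊥) ∧ ∀ z ∈ S, ρ z = ⊥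

/-- `u` is plurisubharmonic on `D`: upper semicontinuous, locally integrable, and with
positive semidefinite complex Hessian in the sense of distributions. -/
def IsPlurisubharmonic {n : ℕ} (D : Set (Cn n)) (u : Cn n → ℝ) : Prop :=
  UpperSemicontinuousOn u D ∧ LocallyIntegrableOn u D volume ∧
  ∀ ξ : Fin n → ℂ, ∀ ω : Cn n → ℝ, ContDiff ℝ (⊤ : ℕ∞) ω → HasCompactSupport ω →
    tsupport ω ⊆ D → (∀ z, 0 ≤ ω z) →
    0 ≤ ∫ z in D, u z *
      (∑ j, ∑ k, ξ j * starRingEnd ℂ (ξ k) * wdzbar k (wdz j (fun w => (ω w : ℂ))) z).re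

/-- The class `U(E,D)` for the plurisubharmonic measure. -/
def UclassPsh {n : ℕ} (E D : Set (Cn n)) : Set (Cn n → ℝ) :=
  {u | IsPlurisubharmonic D u ∧ (∀ z ∈ E, u z ≤ -1) ∧ ∀ z ∈ D, u z < 0}

/-- The plurisubharmonic extremal function `ω(z, E, D)`. -/
noncomputable def omegaPsh {n : ℕ} (E D : Set (Cn n)) (z : Cn n) : ℝ :=
  sSup ((fun u : Cn n → ℝ => u z) '' UclassPsh E D)

/-- The plurisubharmonic measure `ω*(z, E, D)`. -/
noncomputable def omegaPshStar {n : ℕ} (E D : Set (Cn n)) (z : Cn n) : ℝ :=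
  Filter.limsup (omegaPsh E D) (𝓝 z)

end


open MeasureTheory Filter Topology Complex Metric

namespace AH

/-- unit real direction -/
noncomputable def ex {n : ℕ} (j : Fin n) : Cn n := Pi.single j 1
/-- unit imaginary direction -/
noncomputable def ey {n : ℕ} (j : Fin n) : Cn n := Pi.single j Complex.I

/-- mixed second Wirtinger derivative from a real bilinear form -/
noncomputable def Wjk {n : ℕ} (j k : Fin n) (M : Cn n →L[ℝ] Cn n →L[ℝ] ℝ) : ℂ :=
  (((M (ex k) (ex j) + M (ey k) (ey j) : ℝ) : ℂ)
    + Complex.I * ((M (ey k) (ex j) - M (ex k) (ey j) : ℝ) : ℂ)) / 4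

noncomputable def Lam {n : ℕ} (A : AlphaForm n) (z : Cn n) (M : Cn n →L[ℝ] Cn n →L[ℝ] ℝ) : ℝ :=
  (∑ j, ∑ k, A.coeff j k z * Wjk j k M).re

variable {n : ℕ}

lemma Wjk_add (j k : Fin n) (M N : Cn n →L[ℝ] Cn n →L[ℝ] ℝ) :
    Wjk j k (M + N) = Wjk j k M + Wjk j k N := by
  simp [Wjk]; ring

lemma Wjk_smul (j k : Fin n) (c : ℝ) (M : Cn n →L[ℝ] Cn n →L[ℝ] ℝ) :
    Wjk j k (c • M) = c * Wjk j k M := by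
  simp [Wjk]; ring

lemma Lam_add (A : AlphaForm n) (z : Cn n) (M N : Cn n →L[ℝ] Cn n →L[ℝ] ℝ) :
    Lam A z (M + N) = Lam A z M + Lam A z N := by
  simp only [Lam, Wjk_add, mul_add, Finset.sum_add_distrib, Complex.add_re]

lemma Lam_smul (A : AlphaForm n) (z : Cn n) (c : ℝ) (M : Cn n →L[ℝ] Cn n →L[ℝ] ℝ) :
    Lam A z (c • M) = c * Lam A z M := by
  have : ∑ j, ∑ k, A.coeff j k z * Wjk j k (c • M)
      = (c : ℂ) * ∑ j, ∑ k, A.coeff j k z * Wjk j k M := by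
    simp only [Wjk_smul, Finset.mul_sum]
    exact Finset.sum_congr rfl fun j _ => Finset.sum_congr rfl fun k _ => by ring
  simp only [Lam, this, Complex.re_ofReal_mul]

lemma norm_ex (j : Fin n) : ‖(ex j : Cn n)‖ = 1 := by
  rw [ex, Pi.norm_single]; simp
lemma norm_ey (j : Fin n) : ‖(ey j : Cn n)‖ = 1 := by
  rw [ey, Pi.norm_single]; simp

lemma Wjk_norm_le (j k : Fin n) (M : Cn n →L[ℝ] Cn n →L[ℝ] ℝ) : ‖Wjk j k M‖ ≤ ‖M‖ := by
  have h : ∀ v w : Cn n, ‖v‖ = 1 → ‖w‖ = 1 → |M v w| ≤ ‖M‖ := fun v w hv hw => by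
    have := M.le_opNorm₂ v w
    simpa [hv, hw] using this
  have h1 := h _ _ (norm_ex k) (norm_ex j)
  have h2 := h _ _ (norm_ey k) (norm_ey j)
  have h3 := h _ _ (norm_ey k) (norm_ex j)
  have h4 := h _ _ (norm_ex k) (norm_ey j)
  rw [Wjk, norm_div]
  have h5 := norm_add_le ((M (ex k) (ex j) + M (ey k) (ey j) : ℝ) : ℂ)
    (Complex.I * ((M (ey k) (ex j) - M (ex k) (ey j) : ℝ) : ℂ))
  rw [norm_mul, Complex.norm_I, one_mul, Complex.norm_real, Complex.norm_real,
    Real.norm_eq_abs, Real.norm_eq_abs] at h5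
  have h6 := abs_add_le (M (ex k) (ex j)) (M (ey k) (ey j))
  have h7 := abs_sub (M (ey k) (ex j)) (M (ex k) (ey j))
  rw [div_le_iff₀ (by norm_num)]
  norm_num
  push_cast at h5
  linarith

noncomputable def Abd (A : AlphaForm n) (z : Cn n) : ℝ := ∑ j, ∑ k, ‖A.coeff j k z‖

lemma continuous_Abd (A : AlphaForm n) : Continuous (Abd A) :=
  continuous_finsetSum _ fun j _ => continuous_finsetSum _ fun k _ =>
    (A.contDiff j k).continuous.norm

lemma Abd_nonneg (A : AlphaForm n) (z : Cn n) : 0 ≤ Abd A z :=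
  Finset.sum_nonneg fun _ _ => Finset.sum_nonneg fun _ _ => norm_nonneg _

lemma Lam_abs_le (A : AlphaForm n) (z : Cn n) (M : Cn n →L[ℝ] Cn n →L[ℝ] ℝ) :
    |Lam A z M| ≤ Abd A z * ‖M‖ := by
  refine (Complex.abs_re_le_norm _).trans ?_
  refine (norm_sum_le _ _).trans ?_
  rw [Abd, Finset.sum_mul]
  refine Finset.sum_le_sum fun j _ => (norm_sum_le _ _).trans ?_
  rw [Finset.sum_mul]
  refine Finset.sum_le_sum fun k _ => ?_
  rw [norm_mul]
  exact mul_le_mul_of_nonneg_left (Wjk_norm_le j k M) (norm_nonneg _)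

/-- rank one bilinear form -/
noncomputable def rk (l : Cn n →L[ℝ] ℝ) : Cn n →L[ℝ] Cn n →L[ℝ] ℝ := l.smulRight l

lemma rk_apply (l : Cn n →L[ℝ] ℝ) (v w : Cn n) : rk l v w = l v * l w := by
  simp [rk]

lemma Lam_rk_nonneg (A : AlphaForm n) (z : Cn n) (l : Cn n →L[ℝ] ℝ) : 0 ≤ Lam A z (rk l) := by
  set ξ : Fin n → ℂ := fun j => ((l (ex j) : ℝ) - Complex.I * (l (ey j) : ℝ)) / 2 with hξ
  have h : ∑ j, ∑ k, A.coeff j k z * Wjk j k (rk l)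
      = ∑ j, ∑ k, A.coeff j k z * ξ j * starRingEnd ℂ (ξ k) := by
    refine Finset.sum_congr rfl fun j _ => Finset.sum_congr rfl fun k _ => ?_
    rw [mul_assoc]
    congr 1
    simp only [Wjk, rk_apply, hξ, map_div₀, map_sub, map_mul, Complex.conj_ofReal, Complex.conj_I,
      map_ofNat]
    push_cast
    have := Complex.I_sq
    linear_combination ((l (ey k) : ℂ) * (l (ey j) : ℂ) / 4) * this
  rw [Lam, h]
  by_cases h0 : ξ = 0
  · simp [h0]
  · exact (A.strictlyPositive z ξ h0).le

lemma fderiv_ofReal {φ : Cn n → ℝ} {z : Cn n} (h : DifferentiableAt ℝ φ z) (v : Cn n) :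
    fderiv ℝ (fun w => (φ w : ℂ)) z v = (fderiv ℝ φ z v : ℝ) := by
  have := (Complex.ofRealCLM.hasFDerivAt.comp z h.hasFDerivAt).fderiv
  have h2 : (fun w => (φ w : ℂ)) = Complex.ofRealCLM ∘ φ := rfl
  rw [h2, this]; rfl

lemma wdz_ofReal {φ : Cn n → ℝ} {z : Cn n} (h : DifferentiableAt ℝ φ z) (j : Fin n) :
    wdz j (fun w => (φ w : ℂ)) z
      = ((fderiv ℝ φ z (ex j) : ℝ) - Complex.I * (fderiv ℝ φ z (ey j) : ℝ)) / 2 := by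
  rw [wdz, fderiv_ofReal h, fderiv_ofReal h]; rfl

lemma wdzbar_wdz_ofReal {φ : Cn n → ℝ} (h : ContDiff ℝ 2 φ) (j k : Fin n) (z : Cn n) :
    wdzbar k (wdz j (fun w => (φ w : ℂ))) z = Wjk j k (fderiv ℝ (fderiv ℝ φ) z) := by
  have hd : Differentiable ℝ φ := h.differentiable (by norm_num)
  have hd2 : Differentiable ℝ (fderiv ℝ φ) :=
    (h.fderiv_right (m := 1) (by norm_num)).differentiable (by norm_num)
  have h1 : wdz j (fun w => (φ w : ℂ)) = fun z =>
      ((fderiv ℝ φ z (ex j) : ℝ) - Complex.I * (fderiv ℝ φ z (ey j) : ℝ)) / 2 :=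
    funext fun z => wdz_ofReal (hd z) j
  have h2 : ∀ w : Cn n, HasFDerivAt (fun z => ((fderiv ℝ φ z w : ℝ) : ℂ))
      (Complex.ofRealCLM.comp ((ContinuousLinearMap.apply ℝ ℝ w).comp
        (fderiv ℝ (fderiv ℝ φ) z))) z := fun w =>
    Complex.ofRealCLM.hasFDerivAt.comp z
      ((ContinuousLinearMap.apply ℝ ℝ w).hasFDerivAt.comp z (hd2 z).hasFDerivAt)
  have h3 := (((h2 (ex j)).sub ((h2 (ey j)).const_mul Complex.I)).mul_const (1 / 2 : ℂ))
  have h4 : (fun z => (((fderiv ℝ φ z (ex j) : ℝ) : ℂ)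
      - Complex.I * (fderiv ℝ φ z (ey j) : ℝ)) / 2) = (fun z => ((((fderiv ℝ φ z (ex j) : ℝ) : ℂ)
      - Complex.I * (fderiv ℝ φ z (ey j) : ℝ)) * (1 / 2 : ℂ))) := by
    funext z; ring
  rw [h1, h4, wdzbar]
  erw [h3.fderiv]
  simp [Wjk, ex, ey]
  have := Complex.I_sq
  linear_combination (-(fderiv ℝ (fderiv ℝ φ) z (Pi.single k Complex.I) (Pi.single j Complex.I) : ℂ)/4) * this

lemma alphaOpR_eq (A : AlphaForm n) {φ : Cn n → ℝ} (h : ContDiff ℝ 2 φ) (z : Cn n) :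
    alphaOpR A φ z = Lam A z (fderiv ℝ (fderiv ℝ φ) z) := by
  simp only [alphaOpR, alphaOp, Lam, wdzbar_wdz_ofReal h]

lemma alphaOpR_add (A : AlphaForm n) {φ χ : Cn n → ℝ} (h : ContDiff ℝ 2 φ) (h' : ContDiff ℝ 2 χ)
    (z : Cn n) :
    alphaOpR A (φ + χ) z = alphaOpR A φ z + alphaOpR A χ z := by
  rw [alphaOpR_eq A h, alphaOpR_eq A h', alphaOpR_eq A (φ := φ + χ) (h.add h'), ← Lam_add]
  congr 1
  have : fderiv ℝ (φ + χ) = fderiv ℝ φ + fderiv ℝ χ := funext fun x =>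
    fderiv_add (h.differentiable (by norm_num) x) (h'.differentiable (by norm_num) x)
  rw [this]
  exact fderiv_add ((h.fderiv_right (m := 1) (by norm_num)).differentiable (by norm_num) z)
    ((h'.fderiv_right (m := 1) (by norm_num)).differentiable (by norm_num) z)

lemma alphaOpR_smul (A : AlphaForm n) (c : ℝ) {φ : Cn n → ℝ} (h : ContDiff ℝ 2 φ)
    (z : Cn n) :
    alphaOpR A (c • φ) z = c * alphaOpR A φ z := by
  rw [alphaOpR_eq A h, alphaOpR_eq A (φ := c • φ) (h.const_smul c), ← Lam_smul]
  congr 1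
  have : fderiv ℝ (c • φ) = c • fderiv ℝ φ := funext fun x =>
    fderiv_const_smul (h.differentiable (by norm_num) x) c
  rw [this]
  exact fderiv_const_smul ((h.fderiv_right (m := 1) (by norm_num)).differentiable (by norm_num) z) c

lemma alphaOpR_sub (A : AlphaForm n) {φ χ : Cn n → ℝ} (h : ContDiff ℝ 2 φ) (h' : ContDiff ℝ 2 χ)
    (z : Cn n) :
    alphaOpR A (φ - χ) z = alphaOpR A φ z - alphaOpR A χ z := by
  have : φ - χ = φ + (-1 : ℝ) • χ := by ext; simp [sub_eq_add_neg]
  have h2 : ContDiff ℝ 2 ((-1 : ℝ) • χ) := h'.const_smul (-1 : ℝ)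
  rw [this, alphaOpR_add A h h2, alphaOpR_smul A _ h']; ring

lemma continuous_Wjk (j k : Fin n) : Continuous (Wjk (n := n) j k) := by
  unfold Wjk
  fun_prop

lemma continuous_alphaOpR (A : AlphaForm n) {φ : Cn n → ℝ} (h : ContDiff ℝ 2 φ) :
    Continuous (alphaOpR A φ) := by
  have h1 : alphaOpR A φ = fun z => Lam A z (fderiv ℝ (fderiv ℝ φ) z) :=
    funext (alphaOpR_eq A h)
  have h2 : Continuous (fderiv ℝ (fderiv ℝ φ)) :=
    (h.fderiv_right (m := 1) (by norm_num)).continuous_fderiv (by norm_num)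
  rw [h1]
  unfold Lam
  refine Complex.continuous_re.comp ?_
  exact continuous_finsetSum _ fun j _ => continuous_finsetSum _ fun k _ =>
    (A.contDiff j k).continuous.mul ((continuous_Wjk j k).comp h2)

lemma alphaOpR_abs_le (A : AlphaForm n) {φ : Cn n → ℝ} (h : ContDiff ℝ 2 φ) (z : Cn n) :
    |alphaOpR A φ z| ≤ Abd A z * ‖fderiv ℝ (fderiv ℝ φ) z‖ := by
  rw [alphaOpR_eq A h]; exact Lam_abs_le _ _ _

lemma tsupport_alphaOpR (A : AlphaForm n) {φ : Cn n → ℝ} (h : ContDiff ℝ 2 φ) :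
    tsupport (alphaOpR A φ) ⊆ tsupport φ := by
  refine closure_minimal ?_ (isClosed_tsupport _)
  intro z hz
  by_contra hc
  apply hz
  have h1 : fderiv ℝ (fderiv ℝ φ) z = 0 := by
    have := (tsupport_fderiv_subset ℝ (f := fderiv ℝ φ)).trans (tsupport_fderiv_subset ℝ (f := φ))
    exact image_eq_zero_of_notMem_tsupport fun hh => hc (this hh)
  rw [alphaOpR_eq A h, h1]
  simp [Lam, Wjk]

/-- chain rule -/
lemma alphaOpR_comp (A : AlphaForm n) {φ : Cn n → ℝ} {Θ : ℝ → ℝ} (h : ContDiff ℝ 2 φ)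
    (hΘ : ContDiff ℝ 2 Θ) (z : Cn n) :
    alphaOpR A (fun w => Θ (φ w)) z = deriv Θ (φ z) * alphaOpR A φ z
      + deriv (deriv Θ) (φ z) * Lam A z (rk (fderiv ℝ φ z)) := by
  have hc : ContDiff ℝ 2 (fun w => Θ (φ w)) := hΘ.comp h
  rw [alphaOpR_eq A h, alphaOpR_eq A hc, ← Lam_smul, ← Lam_smul, ← Lam_add]
  congr 1
  have hd : Differentiable ℝ φ := h.differentiable (by norm_num)
  have hdΘ : Differentiable ℝ Θ := hΘ.differentiable (by norm_num)
  have hdΘ2 : Differentiable ℝ (deriv Θ) :=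
    (hΘ.iterate_deriv' 1 1).differentiable (by norm_num)
  have hd2 : Differentiable ℝ (fderiv ℝ φ) :=
    (h.fderiv_right (m := 1) (by norm_num)).differentiable (by norm_num)
  have h1 : fderiv ℝ (fun w => Θ (φ w)) = fun z => deriv Θ (φ z) • fderiv ℝ φ z :=
    funext fun x => ((hdΘ (φ x)).hasDerivAt.comp_hasFDerivAt x (hd x).hasFDerivAt).fderiv
  rw [h1]
  have h2 : HasFDerivAt (fun z => deriv Θ (φ z)) (deriv (deriv Θ) (φ z) • fderiv ℝ φ z) z :=
    (hdΘ2 (φ z)).hasDerivAt.comp_hasFDerivAt z (hd z).hasFDerivAt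
  erw [(h2.smul (hd2 z).hasFDerivAt).fderiv]
  ext v w
  simp [rk_apply, mul_assoc]

end AH


open MeasureTheory Filter Topology Complex Metric

namespace AH
variable {n : ℕ}

lemma integral_fderiv_zero {G : Cn n → ℂ} (hG : ContDiff ℝ 1 G) (hc : HasCompactSupport G)
    (v : Cn n) : ∫ z, fderiv ℝ G z v = 0 := by
  have h1 : Continuous fun z => fderiv ℝ G z v :=
    (hG.continuous_fderiv (by norm_num)).clm_apply continuous_const
  have h2 : HasCompactSupport fun z => fderiv ℝ G z v := hc.fderiv_apply ℝ v
  have := integral_bilinear_hasFDerivAt_right_eq_neg_left_of_integrable (μ := volume)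
    (f := G) (g := fun _ => (1 : ℝ)) (v := v) (f' := fderiv ℝ G) (g' := fun _ => 0)
    (B := (ContinuousLinearMap.lsmul ℝ ℝ : ℝ →L[ℝ] ℂ →L[ℝ] ℂ).flip)
    (by simpa using h1.integrable_of_hasCompactSupport h2) (by simp)
    (by simpa using hG.continuous.integrable_of_hasCompactSupport hc)
    (fun x _ => (hG.differentiable (by norm_num) x).hasFDerivAt) (fun x _ => hasFDerivAt_const _ _)
  simpa using this

lemma integral_wdzbar_zero {G : Cn n → ℂ} (hG : ContDiff ℝ 1 G) (hc : HasCompactSupport G)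
    (k : Fin n) : Integrable (wdzbar k G) ∧ ∫ z, wdzbar k G z = 0 := by
  have hi : ∀ v : Cn n, Integrable fun z => fderiv ℝ G z v := fun v =>
    ((hG.continuous_fderiv (by norm_num)).clm_apply
      continuous_const).integrable_of_hasCompactSupport (hc.fderiv_apply ℝ v)
  unfold wdzbar
  refine ⟨((hi _).add ((hi _).const_mul _)).div_const _, ?_⟩
  rw [integral_div, integral_add (hi _) ((hi _).const_mul _), integral_const_mul,
    integral_fderiv_zero hG hc, integral_fderiv_zero hG hc]
  simp

lemma wdzbar_mul {F G : Cn n → ℂ} {z : Cn n} (hF : DifferentiableAt ℝ F z)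
    (hG : DifferentiableAt ℝ G z) (k : Fin n) :
    wdzbar k (fun w => F w * G w) z = wdzbar k F z * G z + F z * wdzbar k G z := by
  unfold wdzbar
  erw [(hF.hasFDerivAt.mul hG.hasFDerivAt).fderiv]
  simp
  ring

lemma conj_fderiv {F : Cn n → ℂ} {z : Cn n} (hF : DifferentiableAt ℝ F z) (v : Cn n) :
    fderiv ℝ (fun w => starRingEnd ℂ (F w)) z v = starRingEnd ℂ (fderiv ℝ F z v) := by
  have h := (Complex.conjCLE.toContinuousLinearMap.hasFDerivAt.comp z hF.hasFDerivAt).fderiv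
  have h2 : (fun w => starRingEnd ℂ (F w)) = Complex.conjCLE.toContinuousLinearMap ∘ F := by
    ext; simp
  rw [h2, h]; simp

lemma wdzbar_conj {F : Cn n → ℂ} {z : Cn n} (hF : DifferentiableAt ℝ F z) (k : Fin n) :
    wdzbar k (fun w => starRingEnd ℂ (F w)) z = starRingEnd ℂ (wdz k F z) := by
  unfold wdzbar wdz
  rw [conj_fderiv hF, conj_fderiv hF]
  simp [Complex.conj_ofNat]

lemma closed' (A : AlphaForm n) (j : Fin n) (z : Cn n) :
    ∑ k, wdzbar k (A.coeff j k) z = 0 := by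
  have h : ∀ k, wdzbar k (A.coeff j k) z = starRingEnd ℂ (wdz k (A.coeff k j) z) := fun k => by
    rw [← wdzbar_conj ((A.contDiff k j).differentiable (by norm_num) z)]
    congr 1
    exact funext fun w => A.hermitian k j w
  simp only [h]
  rw [← map_sum, A.closed, map_zero]

/-- gradient pairing -/
noncomputable def Bp (A : AlphaForm n) (f φ : Cn n → ℝ) (z : Cn n) : ℝ :=
  (∑ j, ∑ k, A.coeff j k z * wdzbar k (fun w => (f w : ℂ)) z * wdz j (fun w => (φ w : ℂ)) z).re

lemma Bp_symm (A : AlphaForm n) {f φ : Cn n → ℝ} (hf : ContDiff ℝ 2 f) (hφ : ContDiff ℝ 2 φ)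
    (z : Cn n) : Bp A f φ z = Bp A φ f z := by
  have hr : ∀ {g : Cn n → ℝ} (hg : ContDiff ℝ 2 g) (k : Fin n),
      wdzbar k (fun w => (g w : ℂ)) z = starRingEnd ℂ (wdz k (fun w => (g w : ℂ)) z) := by
    intro g hg k
    rw [← wdzbar_conj]
    · simp
    · exact (Complex.ofRealCLM.differentiableAt.comp z (hg.differentiable (by norm_num) z))
  unfold Bp
  rw [← Complex.conj_re, map_sum, Finset.sum_congr rfl (fun j _ => map_sum _ _ _), Finset.sum_comm]
  congr 1
  refine Finset.sum_congr rfl fun j _ => Finset.sum_congr rfl fun k _ => ?_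
  rw [hr hf, hr hφ, A.hermitian j k]
  simp only [map_mul, Complex.conj_conj]
  ring

lemma contDiff_wdz {φ : Cn n → ℝ} (h : ContDiff ℝ 2 φ) (j : Fin n) :
    ContDiff ℝ 1 (wdz j (fun w => (φ w : ℂ))) := by
  have h1 : ContDiff ℝ 2 (fun w => (φ w : ℂ)) := Complex.ofRealCLM.contDiff.comp h
  have h2 := h1.fderiv_right (m := 1) (by norm_num)
  unfold wdz
  have h3 : ∀ v : Cn n, ContDiff ℝ 1 fun z => fderiv ℝ (fun w => (φ w : ℂ)) z v := fun v =>
    h2.clm_apply contDiff_const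
  exact ((h3 _).sub (contDiff_const.mul (h3 _))).div_const _

lemma integral_mul_alphaOpR (A : AlphaForm n) {f φ : Cn n → ℝ} (hf : ContDiff ℝ 2 f)
    (hφ : ContDiff ℝ 2 φ) (hc : HasCompactSupport f ∨ HasCompactSupport φ) :
    ∫ z, f z * alphaOpR A φ z = - ∫ z, Bp A f φ z := by
  set F : Cn n → ℂ := fun w => (f w : ℂ) with hF
  have hFd : ContDiff ℝ 2 F := Complex.ofRealCLM.contDiff.comp hf
  set P : Cn n → ℂ := fun w => (φ w : ℂ) with hP
  set G : Fin n → Fin n → Cn n → ℂ := fun j k w => (F w * A.coeff j k w) * wdz j P w with hG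
  have hGc : ∀ j k, ContDiff ℝ 1 (G j k) := fun j k =>
    ((hFd.of_le (by norm_num)).mul (A.contDiff j k)).mul (contDiff_wdz hφ j)
  have hGs : ∀ j k, HasCompactSupport (G j k) := by
    intro j k
    rcases hc with hc | hc
    · have h1 : HasCompactSupport F := hc.comp_left (g := fun x : ℝ => (x : ℂ)) (by simp)
      exact (h1.mul_right).mul_right
    · have h1 : HasCompactSupport P := hc.comp_left (g := fun x : ℝ => (x : ℂ)) (by simp)
      refine HasCompactSupport.mul_left ?_
      have e1 := h1.fderiv_apply ℝ (Pi.single j 1 : Cn n)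
      have e2 := h1.fderiv_apply ℝ (Pi.single j Complex.I : Cn n)
      refine h1.fderiv ℝ |>.mono' ?_
      intro z hz
      by_contra hcon
      apply hz
      have : fderiv ℝ P z = 0 := image_eq_zero_of_notMem_tsupport hcon
      simp [wdz, this]
  have hpt : ∀ z, f z * alphaOpR A φ z + Bp A f φ z = (∑ j, ∑ k, wdzbar k (G j k) z).re := by
    intro z
    have hd : ∀ j k, wdzbar k (G j k) z = (wdzbar k F z * A.coeff j k z
        + F z * wdzbar k (A.coeff j k) z) * wdz j P z
        + (F z * A.coeff j k z) * wdzbar k (wdz j P) z := by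
      intro j k
      have d1 : DifferentiableAt ℝ F z := hFd.differentiable (by norm_num) z
      have d2 := (A.contDiff j k).differentiable (by norm_num) z
      have q1 := wdzbar_mul (k := k) (F := fun w => F w * A.coeff j k w) (d1.mul d2)
        ((contDiff_wdz hφ j).differentiable (by norm_num) z)
      rw [wdzbar_mul d1 d2] at q1
      exact q1
    have e : ∑ j, ∑ k, wdzbar k (G j k) z
        = F z * alphaOp A P z + ∑ j, ∑ k, A.coeff j k z * wdzbar k F z * wdz j P z := by
      have e2 : ∑ j, ∑ k, F z * wdzbar k (A.coeff j k) z * wdz j P z = 0 := by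
        refine Finset.sum_eq_zero fun j _ => ?_
        rw [← Finset.sum_mul, ← Finset.mul_sum, closed']; simp
      simp only [hd, alphaOp, Finset.mul_sum]
      rw [← Finset.sum_add_distrib, ← add_zero (∑ j, ∑ k, _), ← e2, ← Finset.sum_add_distrib]
      refine Eq.symm (Eq.trans ?_ rfl)
      have e3 : ∀ j k, (wdzbar k F z * A.coeff j k z
        + F z * wdzbar k (A.coeff j k) z) * wdz j P z
        + (F z * A.coeff j k z) * wdzbar k (wdz j P) z =
          F z * (A.coeff j k z * wdzbar k (wdz j P) z)
          + A.coeff j k z * wdzbar k F z * wdz j P z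
          + F z * wdzbar k (A.coeff j k) z * wdz j P z := fun j k => by ring
      simp only [e3, Finset.sum_add_distrib]
      simp only [e2, add_zero]
    rw [e, Complex.add_re, Complex.re_ofReal_mul]
    rfl
  have hi : Integrable (fun z => (∑ j, ∑ k, wdzbar k (G j k) z)) :=
    integrable_finsetSum _ fun j _ => integrable_finsetSum _ fun k _ =>
      (integral_wdzbar_zero (hGc j k) (hGs j k) k).1
  have h0 : ∫ z, (∑ j, ∑ k, wdzbar k (G j k) z) = 0 := by
    rw [integral_finsetSum _ fun j _ => integrable_finsetSum _ fun k _ =>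
      (integral_wdzbar_zero (hGc j k) (hGs j k) k).1]
    refine Finset.sum_eq_zero fun j _ => ?_
    rw [integral_finsetSum _ fun k _ =>
      (integral_wdzbar_zero (hGc j k) (hGs j k) k).1]
    exact Finset.sum_eq_zero fun k _ => (integral_wdzbar_zero (hGc j k) (hGs j k) k).2
  have h1 : ∫ z, (f z * alphaOpR A φ z + Bp A f φ z) = 0 := by
    simp only [hpt]
    have := integral_re hi
    simp only [RCLike.re_to_complex] at this
    rw [this, h0]; simp
  have hci : Integrable fun z => f z * alphaOpR A φ z := by
    refine (hf.continuous.mul (continuous_alphaOpR A hφ)).integrable_of_hasCompactSupport ?_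
    rcases hc with hc | hc
    · exact hc.mul_right
    · exact HasCompactSupport.mul_left (hc.mono' ((subset_tsupport _).trans (tsupport_alphaOpR A hφ)))
  have hB : Integrable (Bp A f φ) := by
    have : Bp A f φ = fun z => (∑ j, ∑ k, wdzbar k (G j k) z).re - f z * alphaOpR A φ z := by
      funext z; rw [← hpt]; ring
    rw [this]; exact (hi.re).sub hci
  rw [integral_add hci hB] at h1
  linarith

theorem ibp (A : AlphaForm n) {f φ : Cn n → ℝ} (hf : ContDiff ℝ 2 f)
    (hφ : ContDiff ℝ 2 φ) (hc : HasCompactSupport φ) :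
    ∫ z, f z * alphaOpR A φ z = ∫ z, alphaOpR A f z * φ z := by
  rw [integral_mul_alphaOpR A hf hφ (Or.inr hc)]
  have := integral_mul_alphaOpR A hφ hf (Or.inl hc)
  simp only [mul_comm (alphaOpR A f _)]
  rw [this]
  simp only [Bp_symm A hf hφ]

end AH


open MeasureTheory Filter Topology Complex Metric

namespace AH
variable {n : ℕ}

lemma two_of_smooth {E G : Type*} [NormedAddCommGroup E] [NormedSpace ℝ E]
    [NormedAddCommGroup G] [NormedSpace ℝ G] {f : E → G}
    (h : ContDiff ℝ (⊤ : ℕ∞) f) : ContDiff ℝ 2 f := by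
  exact_mod_cast (contDiff_infty.mp h 2)

/-- test functions on `D` -/
structure IsTest (D : Set (Cn n)) (φ : Cn n → ℝ) : Prop where
  smooth : ContDiff ℝ (⊤ : ℕ∞) φ
  cpt : HasCompactSupport φ
  supp : tsupport φ ⊆ D

lemma IsTest.two {D : Set (Cn n)} {φ : Cn n → ℝ} (h : IsTest D φ) : ContDiff ℝ 2 φ :=
  two_of_smooth h.smooth

lemma IsTest.L_cont {D : Set (Cn n)} {φ : Cn n → ℝ} (A : AlphaForm n) (h : IsTest D φ) :
    Continuous (alphaOpR A φ) := continuous_alphaOpR A h.two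

lemma IsTest.L_cpt {D : Set (Cn n)} {φ : Cn n → ℝ} (A : AlphaForm n) (h : IsTest D φ) :
    HasCompactSupport (alphaOpR A φ) :=
  h.cpt.mono' ((subset_tsupport _).trans (tsupport_alphaOpR A h.two))

lemma IsTest.L_supp {D : Set (Cn n)} {φ : Cn n → ℝ} (A : AlphaForm n) (h : IsTest D φ) :
    tsupport (alphaOpR A φ) ⊆ D := (tsupport_alphaOpR A h.two).trans h.supp

lemma integrable_mul_cpt {D : Set (Cn n)} {a g : Cn n → ℝ} (ha : LocallyIntegrableOn a D volume)
    (hg : Continuous g) (hc : HasCompactSupport g) (hs : tsupport g ⊆ D) :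
    Integrable (fun z => a z * g z) := by
  have h1 : IntegrableOn a (tsupport g) := ha.integrableOn_compact_subset hs hc
  have h2 : IntegrableOn (fun z => a z * g z) (tsupport g) :=
    h1.mul_continuousOn hg.continuousOn hc
  refine (integrableOn_iff_integrable_of_support_subset ?_).1 h2
  intro z hz
  apply subset_tsupport
  intro h
  apply hz
  simp [h]

lemma setIntegral_eq_mul_cpt {D : Set (Cn n)} {a g : Cn n → ℝ} (hs : tsupport g ⊆ D) :
    ∫ z in D, a z * g z = ∫ z, a z * g z := by
  refine setIntegral_eq_integral_of_forall_compl_eq_zero fun z hz => ?_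
  have : g z = 0 := image_eq_zero_of_notMem_tsupport fun h => hz (hs h)
  simp [this]

lemma exists_Theta {ε : ℝ} (hε : 0 < ε) : ∃ Θ : ℝ → ℝ, ContDiff ℝ (⊤ : ℕ∞) Θ ∧
    (∀ t ≤ 0, Θ t = 0) ∧ (∀ t, 0 ≤ deriv Θ t) ∧ (∀ t, deriv Θ t ≤ 1) ∧
    (∀ t, 0 ≤ deriv (deriv Θ) t) ∧ (∀ t, 0 ≤ Θ t) ∧ (∀ t, max t 0 - ε ≤ Θ t) ∧
    (∀ t, Θ t ≤ max t 0) := by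
  set s : ℝ → ℝ := fun t => Real.smoothTransition (t / ε) with hs
  have hsc : ContDiff ℝ (⊤ : ℕ∞) s := Real.smoothTransition.contDiff.comp (contDiff_id.div_const ε)
  have hscont : Continuous s := hsc.continuous
  have hi : ∀ a b, IntervalIntegrable s volume a b := fun a b => hscont.intervalIntegrable a b
  have hmono : Monotone s := fun x y hxy =>
    Real.smoothTransition.monotone (div_le_div_of_nonneg_right hxy hε.le)
  set Θ : ℝ → ℝ := fun t => ∫ x in (0 : ℝ)..t, s x with hΘ
  have hder : ∀ t, HasDerivAt Θ (s t) t := fun t =>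
    intervalIntegral.integral_hasDerivAt_right (hi _ _)
      (hscont.stronglyMeasurableAtFilter _ _) hscont.continuousAt
  have hd : deriv Θ = s := funext fun t => (hder t).deriv
  have hneg : ∀ t ≤ 0, Θ t = 0 := by
    intro t ht
    have : ∫ x in (0 : ℝ)..t, s x = ∫ x in (0 : ℝ)..t, (0 : ℝ) := by
      refine intervalIntegral.integral_congr fun x hx => ?_
      rw [Set.uIcc_of_ge ht] at hx
      exact Real.smoothTransition.zero_of_nonpos (div_nonpos_of_nonpos_of_nonneg hx.2 hε.le)
    simp only [hΘ, this]; simp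
  have hnn : ∀ t, 0 ≤ Θ t := by
    intro t
    rcases le_total t 0 with ht | ht
    · rw [hneg t ht]
    · exact intervalIntegral.integral_nonneg ht fun x _ => Real.smoothTransition.nonneg _
  refine ⟨Θ, ?_, hneg, ?_, ?_, ?_, hnn, ?_, ?_⟩
  · rw [contDiff_infty_iff_deriv]
    exact ⟨fun t => (hder t).differentiableAt, by rw [hd]; exact hsc⟩
  · intro t; rw [hd]; exact Real.smoothTransition.nonneg _
  · intro t; rw [hd]; exact Real.smoothTransition.le_one _
  · intro t; rw [hd]; exact hmono.deriv_nonneg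
  · intro t
    rcases le_total t 0 with ht | ht
    · rw [max_eq_right ht]; linarith [hnn t]
    rw [max_eq_left ht]
    rcases le_total t ε with h2 | h2
    · linarith [hnn t]
    · have e1 : Θ t = (∫ x in (0 : ℝ)..ε, s x) + ∫ x in ε..t, s x :=
        (intervalIntegral.integral_add_adjacent_intervals (hi _ _) (hi _ _)).symm
      have e2 : ∫ x in ε..t, s x = ∫ x in ε..t, (1 : ℝ) := by
        refine intervalIntegral.integral_congr fun x hx => ?_
        rw [Set.uIcc_of_le h2] at hx
        exact Real.smoothTransition.one_of_one_le ((one_le_div hε).2 hx.1)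
      have e3 := hnn ε
      rw [e1, e2]
      simp only [intervalIntegral.integral_const, smul_eq_mul, mul_one]
      simp only [hΘ] at e3
      linarith
  · intro t
    rcases le_total t 0 with ht | ht
    · rw [hneg t ht]; exact le_max_right _ _
    · refine le_trans ?_ (le_max_left _ _)
      have : Θ t ≤ ∫ x in (0 : ℝ)..t, (1 : ℝ) :=
        intervalIntegral.integral_mono_on ht (hi _ _) (by simp)
          fun x _ => Real.smoothTransition.le_one _
      simpa using this

lemma IsTest.comp {D : Set (Cn n)} {φ : Cn n → ℝ} (h : IsTest D φ) {Θ : ℝ → ℝ}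
    (hΘ : ContDiff ℝ (⊤ : ℕ∞) Θ) (h0 : Θ 0 = 0) : IsTest D (fun z => Θ (φ z)) :=
  ⟨hΘ.comp h.smooth, h.cpt.comp_left h0, (tsupport_comp_subset h0 φ).trans h.supp⟩

/-- distributional α-subharmonicity -/
def DistSub (A : AlphaForm n) (D : Set (Cn n)) (a : Cn n → ℝ) : Prop :=
  ∀ φ, IsTest D φ → (∀ z, 0 ≤ φ z) → 0 ≤ ∫ z, a z * alphaOpR A φ z

theorem feasibility (A : AlphaForm n) {D : Set (Cn n)} {a b : Cn n → ℝ}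
    (ha : LocallyIntegrableOn a D volume) (has : DistSub A D a)
    (hb : ContDiff ℝ 2 b) (hab : ∀ z ∈ D, a z ≤ b z) {F : ℝ}
    (hF : ∀ z ∈ D, |alphaOpR A b z| ≤ F) (hF0 : 0 ≤ F) {φ : Cn n → ℝ} (hφ : IsTest D φ) :
    - ∫ z, a z * alphaOpR A φ z ≤ (∫ z, (b z - a z) * max (alphaOpR A φ z) 0)
      + F * ∫ z, max (- φ z) 0 := by
  have hbl : LocallyIntegrableOn b D volume := hb.continuous.locallyIntegrable.locallyIntegrableOn D
  have hbal : LocallyIntegrableOn (fun z => b z - a z) D volume := hbl.sub ha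
  have hm : Continuous fun z => max (alphaOpR A φ z) 0 := (hφ.L_cont A).max continuous_const
  have hmc : HasCompactSupport fun z => max (alphaOpR A φ z) 0 :=
    (hφ.L_cpt A).comp_left (g := fun x => max x 0) (by simp)
  have hms : tsupport (fun z => max (alphaOpR A φ z) 0) ⊆ D :=
    (tsupport_comp_subset (g := fun x : ℝ => max x 0) (by simp) _).trans (hφ.L_supp A)
  have hI1 := integrable_mul_cpt hbal hm hmc hms
  have hI0 := integrable_mul_cpt ha (hφ.L_cont A) (hφ.L_cpt A) (hφ.L_supp A)
  have hIn : Integrable fun z => max (- φ z) 0 :=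
    (hφ.smooth.continuous.neg.max continuous_const).integrable_of_hasCompactSupport
      (hφ.cpt.comp_left (g := fun x => max (-x) 0) (by simp))
  set V : ℝ := (volume (tsupport φ)).toReal with hV
  have hV0 : 0 ≤ V := ENNReal.toReal_nonneg
  have hVfin : volume (tsupport φ) ≠ ⊤ := hφ.cpt.isCompact.measure_lt_top.ne
  have key : ∀ ε > 0, - (F * ε * V) ≤ (∫ z, a z * alphaOpR A φ z)
      + (∫ z, (b z - a z) * max (alphaOpR A φ z) 0) + F * ∫ z, max (- φ z) 0 := by
    intro ε hε
    obtain ⟨Θ, h1, h2, h3, h4, h5, h6, h7, h8⟩ := exists_Theta hε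
    have hT : IsTest D (fun z => Θ (φ z)) := hφ.comp h1 (h2 0 le_rfl)
    set L1 := alphaOpR A (fun z => Θ (φ z)) with hL1
    have hJ0 : Integrable fun z => a z * L1 z := integrable_mul_cpt ha (hT.L_cont A) (hT.L_cpt A) (hT.L_supp A)
    have hJ1 := integrable_mul_cpt hbl (hφ.L_cont A) (hφ.L_cpt A) (hφ.L_supp A)
    have hJ2 : Integrable fun z => b z * L1 z := integrable_mul_cpt hbl (hT.L_cont A) (hT.L_cpt A) (hT.L_supp A)
    have hJ3 : Integrable fun z => b z * alphaOpR A φ z - b z * L1 z := hJ1.sub hJ2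
    have hpos := has _ hT (fun z => h6 _)
    have i1 := ibp A hb hφ.two hφ.cpt
    have i2 := ibp A hb hT.two hT.cpt
    have hLb := continuous_alphaOpR A hb
    have hK1 : Integrable fun z => alphaOpR A b z * φ z :=
      (hLb.mul hφ.smooth.continuous).integrable_of_hasCompactSupport hφ.cpt.mul_left
    have hK2 : Integrable fun z => alphaOpR A b z * Θ (φ z) :=
      (hLb.mul hT.smooth.continuous).integrable_of_hasCompactSupport hT.cpt.mul_left
    have s1 : ∫ z, (b z * alphaOpR A φ z - b z * L1 z + a z * L1 z) ≤
        ∫ z, (a z * alphaOpR A φ z + (b z - a z) * max (alphaOpR A φ z) 0) := by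
      refine integral_mono ((hJ1.sub hJ2).add hJ0) (hI0.add hI1) fun z => ?_
      show b z * alphaOpR A φ z - b z * L1 z + a z * L1 z ≤
        a z * alphaOpR A φ z + (b z - a z) * max (alphaOpR A φ z) 0
      by_cases hz : z ∈ D
      · have hba : 0 ≤ b z - a z := sub_nonneg.2 (hab z hz)
        have hc := alphaOpR_comp A hφ.two (two_of_smooth h1) z
        have hq : 0 ≤ deriv (deriv Θ) (φ z) * Lam A z (rk (fderiv ℝ φ z)) :=
          mul_nonneg (h5 _) (Lam_rk_nonneg A z _)
        have hq2 : deriv Θ (φ z) * alphaOpR A φ z ≤ L1 z := by rw [hL1, hc]; linarith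
        have hq3 : alphaOpR A φ z - L1 z ≤ max (alphaOpR A φ z) 0 := by
          have : alphaOpR A φ z - L1 z ≤ (1 - deriv Θ (φ z)) * alphaOpR A φ z := by linarith
          refine this.trans ?_
          have t1 := h3 (φ z)
          have t2 := h4 (φ z)
          rcases le_total (alphaOpR A φ z) 0 with h | h
          · rw [max_eq_right h]; nlinarith
          · rw [max_eq_left h]; nlinarith
        nlinarith [mul_le_mul_of_nonneg_left hq3 hba]
      · have e1 : alphaOpR A φ z = 0 :=
          image_eq_zero_of_notMem_tsupport fun h => hz (hφ.L_supp A h)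
        have e2 : L1 z = 0 :=
          image_eq_zero_of_notMem_tsupport fun h => hz (hT.L_supp A h)
        simp [e1, e2]
    rw [integral_add hJ3 hJ0, integral_sub hJ1 hJ2, integral_add hI0 hI1] at s1
    have s2 : ∫ z, (-(F * max (- φ z) 0) - (tsupport φ).indicator (fun _ => F * ε) z) ≤
        ∫ z, (alphaOpR A b z * φ z - alphaOpR A b z * Θ (φ z)) := by
      have hind : Integrable ((tsupport φ).indicator (fun _ : Cn n => F * ε)) :=
        (integrable_indicator_iff (isClosed_tsupport φ).measurableSet).2
          (integrableOn_const hVfin)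
      refine integral_mono ((hIn.const_mul F).neg.sub hind) (hK1.sub hK2) fun z => ?_
      show -(F * max (- φ z) 0) - (tsupport φ).indicator (fun _ => F * ε) z ≤
        alphaOpR A b z * φ z - alphaOpR A b z * Θ (φ z)
      by_cases hz : z ∈ tsupport φ
      · rw [Set.indicator_of_mem hz]
        have hf := hF z (hφ.supp hz)
        have u1 : |φ z - Θ (φ z)| ≤ max (- φ z) 0 + ε := by
          have t1 := h7 (φ z)
          have t2 := h8 (φ z)
          rw [abs_le]
          rcases le_total (φ z) 0 with h | h
          · rw [max_eq_left (by linarith : (0:ℝ) ≤ - φ z)]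
            rw [max_eq_right h] at t1 t2
            constructor <;> linarith
          · rw [max_eq_right (by linarith : - φ z ≤ (0:ℝ))]
            rw [max_eq_left h] at t1 t2
            constructor <;> linarith
        have u2 : |alphaOpR A b z * (φ z - Θ (φ z))| ≤ F * (max (- φ z) 0 + ε) := by
          rw [abs_mul]
          exact mul_le_mul hf u1 (abs_nonneg _) hF0
        have := (abs_le.1 u2).1
        linarith
      · rw [Set.indicator_of_notMem hz, image_eq_zero_of_notMem_tsupport hz]
        simp [h2 0 le_rfl]
    have hIn2 : Integrable fun z => -(F * max (- φ z) 0) := (hIn.const_mul F).neg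
    rw [integral_sub hK1 hK2, integral_sub hIn2
      ((integrable_indicator_iff (isClosed_tsupport φ).measurableSet).2
          (integrableOn_const hVfin)), integral_neg, integral_const_mul,
      integral_indicator (isClosed_tsupport φ).measurableSet, setIntegral_const, smul_eq_mul] at s2
    have hVe : volume.real (tsupport φ) = V := rfl
    rw [hVe] at s2
    linarith
  by_contra hcon
  push Not at hcon
  set X := (∫ z, a z * alphaOpR A φ z)
      + (∫ z, (b z - a z) * max (alphaOpR A φ z) 0) + F * ∫ z, max (- φ z) 0 with hX
  have hX0 : X < 0 := by rw [hX]; linarith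
  have hp : 0 < F * V + 1 := by positivity
  have := key (-X / 2 / (F * V + 1)) (by apply div_pos _ hp; linarith)
  have e : F * (-X / 2 / (F * V + 1)) * V = (-X / 2) * ((F * V) / (F * V + 1)) := by
    field_simp
  have e2 : (F * V) / (F * V + 1) ≤ 1 := by rw [div_le_one hp]; linarith
  rw [e] at this
  nlinarith

end AH


open MeasureTheory Filter Topology Complex Metric

namespace AH

lemma hb_abstract {Ω T : Type*} [MeasurableSpace Ω] (m : Measure Ω) [IsFiniteMeasure m]
    [AddCommGroup T] [Module ℝ T] (Lin : T →ₗ[ℝ] Lp ℝ 2 m) (s : T → ℝ)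
    (s_hom : ∀ c : ℝ, 0 < c → ∀ x, s (c • x) = c * s x)
    (s_add : ∀ x y, s (x + y) ≤ s x + s y) (f : T →ₗ[ℝ] ℝ)
    (hf : ∀ φ, f φ ≤ (∫ x, max (Lin φ x) 0 ∂m) + s φ) :
    ∃ h : Ω → ℝ, Measurable h ∧ (∀ x, 0 ≤ h x ∧ h x ≤ 1) ∧
      ∀ φ, f φ - ∫ x, h x * Lin φ x ∂m ≤ s φ := by
  have hIntg : ∀ g : Lp ℝ 2 m, Integrable (g : Ω → ℝ) m := fun g =>
    (Lp.memLp g).integrable (by norm_num)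
  have hintm : ∀ g : Lp ℝ 2 m, Integrable (fun x => max (g x) 0) m := fun g =>
    (hIntg g).pos_part
  set P : Lp ℝ 2 m → ℝ := fun g => ∫ x, max (g x) 0 ∂m with hP
  have P_hom : ∀ c : ℝ, 0 < c → ∀ g, P (c • g) = c * P g := by
    intro c hc g
    simp only [hP]
    rw [← integral_const_mul]
    refine integral_congr_ae ?_
    filter_upwards [Lp.coeFn_smul c g] with x hx
    rw [hx, Pi.smul_apply, smul_eq_mul]
    show max (c * g x) 0 = c * max (g x) 0
    rw [mul_max_of_nonneg _ _ hc.le, mul_zero]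
  have P_add : ∀ g k, P (g + k) ≤ P g + P k := by
    intro g k
    simp only [hP]
    rw [← integral_add (hintm g) (hintm k)]
    refine integral_mono_ae (hintm _) ((hintm g).add (hintm k)) ?_
    filter_upwards [Lp.coeFn_add g k] with x hx
    rw [hx, Pi.add_apply]
    have a1 := le_max_left (g x) 0
    have a2 := le_max_left (k x) 0
    have a3 := le_max_right (g x) 0
    have a4 := le_max_right (k x) 0
    exact max_le (by linarith) (by linarith)
  set f0 : (Lp ℝ 2 m × T) →ₗ.[ℝ] ℝ :=
    ⟨LinearMap.range (Lin.prod LinearMap.id),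
      (f.comp (LinearMap.snd ℝ (Lp ℝ 2 m) T)).domRestrict _⟩ with hf0
  obtain ⟨G, hG1, hG2⟩ := exists_extension_of_le_sublinear f0 (fun x => P x.1 + s x.2)
    (by
      intro c hc x
      simp only [Prod.smul_fst, Prod.smul_snd, P_hom c hc, s_hom c hc]; ring)
    (by
      intro x y
      simp only [Prod.fst_add, Prod.snd_add]
      linarith [P_add x.1 y.1, s_add x.2 y.2])
    (by
      rintro ⟨x, ⟨φ, rfl⟩⟩
      exact hf φ)
  have hG3 : ∀ φ, G (Lin φ, φ) = f φ := fun φ => hG1 ⟨(Lin φ, φ), ⟨φ, rfl⟩⟩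
  have s0 : s 0 = 0 := by
    have := s_hom 2 (by norm_num) 0
    rw [smul_zero] at this; linarith
  have P0 : P 0 = 0 := by
    have := P_hom 2 (by norm_num) 0
    rw [smul_zero] at this; linarith
  set ℓ : Lp ℝ 2 m →ₗ[ℝ] ℝ := G.comp (LinearMap.inl ℝ _ _) with hℓ
  have hℓP : ∀ g, ℓ g ≤ P g := fun g => by
    have := hG2 (g, 0)
    simp only [s0, add_zero] at this
    exact this
  set M : ℝ := (m Set.univ).toReal ^ ((1 : ℝ) / 2) with hM
  have hPn : ∀ g : Lp ℝ 2 m, P g ≤ M * ‖g‖ := by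
    intro g
    have h1 : P g ≤ ∫ x, ‖g x‖ ∂m := integral_mono (hintm g) (hIntg g).norm fun x =>
      max_le (le_abs_self _) (abs_nonneg _)
    refine h1.trans ?_
    have h2 := eLpNorm_le_eLpNorm_mul_rpow_measure_univ (μ := m) (p := 1) (q := 2) (by norm_num)
      (Lp.memLp g).1
    rw [integral_norm_eq_lintegral_enorm (hIntg g).1, ← eLpNorm_one_eq_lintegral_enorm]
    have h3 := ENNReal.toReal_mono ?_ h2
    · refine h3.trans (le_of_eq ?_)
      rw [ENNReal.toReal_mul, ← ENNReal.toReal_rpow, Lp.norm_def, mul_comm, hM]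
      congr 2
      norm_num
    · refine ENNReal.mul_ne_top (Lp.memLp g).2.ne ?_
      refine ENNReal.rpow_ne_top_of_nonneg (by norm_num) (measure_ne_top _ _)
  have hℓn : ∀ g, ‖ℓ g‖ ≤ M * ‖g‖ := by
    intro g
    rw [Real.norm_eq_abs, abs_le]
    have h1 := (hℓP g).trans (hPn g)
    have h2 := (hℓP (-g)).trans (hPn (-g))
    rw [map_neg, norm_neg] at h2
    constructor <;> linarith
  set ℓc := ℓ.mkContinuous M hℓn with hℓc
  set h0 : Lp ℝ 2 m := (InnerProductSpace.toDual ℝ (Lp ℝ 2 m)).symm ℓc with hh0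
  have hrep : ∀ g : Lp ℝ 2 m, ℓ g = ∫ x, h0 x * g x ∂m := by
    intro g
    have : inner ℝ h0 g = ℓ g := by
      rw [hh0, InnerProductSpace.toDual_symm_apply]; rfl
    rw [← this, L2.inner_def]
    refine integral_congr_ae (Eventually.of_forall fun x => ?_)
    simp [mul_comm]
  have hset : ∀ S : Set Ω, MeasurableSet S → m S < ⊤ →
      0 ≤ ∫ x in S, h0 x ∂m ∧ ∫ x in S, h0 x ∂m ≤ ∫ x in S, (1 : ℝ) ∂m := by
    intro S hS hS'
    set g : Lp ℝ 2 m := indicatorConstLp 2 hS hS'.ne (1 : ℝ) with hg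
    have hgc : (g : Ω → ℝ) =ᵐ[m] S.indicator fun _ => (1 : ℝ) := indicatorConstLp_coeFn
    have e1 : ℓ g = ∫ x in S, h0 x ∂m := by
      rw [hrep, ← integral_indicator hS]
      refine integral_congr_ae ?_
      filter_upwards [hgc] with x hx
      rw [hx]
      by_cases hxS : x ∈ S <;> simp [hxS]
    have e2 : P g = ∫ x in S, (1 : ℝ) ∂m := by
      rw [← integral_indicator hS]
      refine integral_congr_ae ?_
      filter_upwards [hgc] with x hx
      rw [hx]
      by_cases hxS : x ∈ S <;> simp [hxS]
    have e3 : P (-g) = 0 := by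
      rw [← integral_zero Ω ℝ (μ := m)]
      refine integral_congr_ae ?_
      filter_upwards [hgc, Lp.coeFn_neg g] with x hx hx2
      rw [hx2, Pi.neg_apply, hx]
      by_cases hxS : x ∈ S <;> simp [hxS]
    have h1 := hℓP g
    have h2 := hℓP (-g)
    rw [map_neg, e3] at h2
    rw [e2] at h1
    rw [← e1]
    exact ⟨by linarith, h1⟩
  have hpos : 0 ≤ᵐ[m] h0 := ae_nonneg_of_forall_setIntegral_nonneg (hIntg h0)
    fun S hS hS' => (hset S hS hS').1
  have hle : h0 ≤ᵐ[m] fun _ => (1 : ℝ) :=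
    ae_le_of_forall_setIntegral_le (hIntg h0) (integrable_const _)
      fun S hS hS' => (hset S hS hS').2
  refine ⟨fun x => max 0 (min 1 (h0 x)), ?_, fun x => ⟨le_max_left _ _, ?_⟩, ?_⟩
  · exact measurable_const.max (measurable_const.min (Lp.stronglyMeasurable h0).measurable)
  · exact max_le zero_le_one (min_le_left _ _)
  · intro φ
    have e1 : ∫ x, max 0 (min 1 (h0 x)) * Lin φ x ∂m = ℓ (Lin φ) := by
      rw [hrep]
      refine integral_congr_ae ?_
      filter_upwards [hpos, hle] with x h1 h2
      have h1' : (0 : ℝ) ≤ h0 x := h1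
      rw [min_eq_right h2, max_eq_right h1']
    rw [e1, ← hG3]
    have h1 := hG2 (0, φ)
    simp only [P0, zero_add] at h1
    have h2 : G (Lin φ, φ) = ℓ (Lin φ) + G (0, φ) := by
      rw [hℓ, LinearMap.comp_apply, ← map_add]; simp
    linarith

variable {n : ℕ}

lemma compact_inner {D : Set (Cn n)} (hDb : Bornology.IsBounded D)
    {t : ℝ} (ht : 0 < t) :
    IsCompact {z | t ≤ infDist z Dᶜ} ∧ {z | t ≤ infDist z Dᶜ} ⊆ D := by
  have hs : {z | t ≤ infDist z Dᶜ} ⊆ D := by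
    intro z hz
    by_contra h
    have h1 : infDist z Dᶜ = 0 := infDist_zero_of_mem h
    have h2 : t ≤ infDist z Dᶜ := hz
    linarith
  exact ⟨Metric.isCompact_of_isClosed_isBounded
    (isClosed_le continuous_const (continuous_infDist_pt _)) (hDb.subset hs), hs⟩

lemma infDist_pos_of_compact {D K : Set (Cn n)} (hDc : Dᶜ.Nonempty) (hD : IsOpen D)
    (hK : IsCompact K) (hKD : K ⊆ D) : ∃ t > 0, ∀ z ∈ K, t ≤ infDist z Dᶜ := by
  rcases K.eq_empty_or_nonempty with rfl | hne
  · exact ⟨1, one_pos, by simp⟩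
  obtain ⟨x, hx, hmin⟩ := hK.exists_isMinOn hne (continuous_infDist_pt Dᶜ).continuousOn
  exact ⟨_, (hD.isClosed_compl.notMem_iff_infDist_pos hDc).1 (fun h => h (hKD hx)),
    fun z hz => hmin hz⟩

lemma exists_weight {D : Set (Cn n)} (hD : IsOpen D) (hDb : Bornology.IsBounded D)
    (hDc : Dᶜ.Nonempty) {c : Cn n → ℝ} (hc : LocallyIntegrableOn c D volume)
    (hcm : Measurable c) :
    ∃ w : Cn n → ℝ, Measurable w ∧ (∀ z, 0 < w z) ∧
      (∀ K, IsCompact K → K ⊆ D → ∃ t > 0, ∀ z ∈ K, t ≤ w z) ∧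
      ∫⁻ z in D, ENNReal.ofReal (w z * c z) < ⊤ := by
  set μ := (volume.restrict D).withDensity (fun z => ENNReal.ofReal (c z)) with hμ
  have hcm' : Measurable fun z => ENNReal.ofReal (c z) := hcm.ennreal_ofReal
  set i : Cn n → ℕ := fun z => ⌈1 / infDist z Dᶜ⌉₊ with hi
  have him : Measurable i :=
    Nat.measurable_ceil.comp (measurable_const.div (continuous_infDist_pt _).measurable)
  set ν := μ.map i with hν
  have hfin : ∀ k, ν {k} < ⊤ := by
    intro k
    rw [hν, Measure.map_apply him (measurableSet_singleton k), hμ,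
      withDensity_apply _ (him (measurableSet_singleton k))]
    have hsub : i ⁻¹' {k} ∩ D ⊆ {z | 1 / ((k : ℝ) + 1) ≤ infDist z Dᶜ} := by
      rintro z ⟨hz, hzD⟩
      have hpos := (hD.isClosed_compl.notMem_iff_infDist_pos hDc (x := z)).1 (fun h => h hzD)
      have h1 : 1 / infDist z Dᶜ ≤ k := by
        have h2 : i z = k := hz
        rw [← h2]; exact Nat.le_ceil _
      rw [div_le_iff₀ hpos] at h1
      show 1 / ((k : ℝ) + 1) ≤ infDist z Dᶜ
      rw [div_le_iff₀ (by positivity)]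
      linarith
    obtain ⟨k1, k2⟩ := compact_inner hDb (t := 1 / ((k : ℝ) + 1)) (by positivity)
    rw [Measure.restrict_restrict (him (measurableSet_singleton k))]
    refine (lintegral_mono_set hsub).trans_lt ?_
    have := (hc.integrableOn_compact_subset k2 k1).lintegral_lt_top
    exact this
  haveI : SigmaFinite ν := ⟨⟨⟨fun k => {k}, fun _ => trivial, hfin, by ext k; simp⟩⟩⟩
  obtain ⟨g, hg0, hgm, hgi⟩ := exists_pos_lintegral_lt_of_sigmaFinite ν (ε := 1) (by simp)
  refine ⟨fun z => g (i z), ?_, fun z => by exact_mod_cast hg0 _, ?_, ?_⟩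
  · exact (measurable_of_countable (fun k => (g k : ℝ))).comp him
  · intro K hK hKD
    obtain ⟨t, ht, hKt⟩ := infDist_pos_of_compact hDc hD hK hKD
    set N := ⌈1 / t⌉₊ with hN
    obtain ⟨k0, -, hk0⟩ := Finset.exists_min_image (Finset.range (N + 1)) g ⟨0, by simp⟩
    refine ⟨g k0, by exact_mod_cast hg0 _, fun z hz => ?_⟩
    have : i z ≤ N := Nat.ceil_mono (one_div_le_one_div_of_le ht (hKt z hz))
    exact_mod_cast hk0 (i z) (by simp; omega)
  · have h1 : ∫⁻ z in D, ENNReal.ofReal (g (i z) * c z) = ∫⁻ k, g k ∂ν := by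
      have q := lintegral_withDensity_eq_lintegral_mul (volume.restrict D) hcm'
          ((measurable_of_countable (fun k => (g k : ENNReal))).comp him)
      rw [hν, lintegral_map (by fun_prop) him, hμ]
      refine Eq.trans ?_ q.symm
      refine lintegral_congr fun z => ?_
      rw [ENNReal.ofReal_mul (by positivity), Pi.mul_apply, mul_comm]
      simp
    rw [h1]
    exact hgi.trans (by simp)

/-- The submodule of test functions. -/
def testSub (D : Set (Cn n)) : Submodule ℝ (Cn n → ℝ) where
  carrier := {φ | IsTest D φ}
  zero_mem' := ⟨contDiff_const, HasCompactSupport.zero, by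
    have : tsupport (0 : Cn n → ℝ) = ∅ := by simp [tsupport_eq_empty_iff]
    simp [this]⟩
  add_mem' := fun {x y} h h' => ⟨h.smooth.add h'.smooth, h.cpt.add h'.cpt,
    (tsupport_add x y).trans (Set.union_subset h.supp h'.supp)⟩
  smul_mem' := fun c x h => ⟨h.smooth.const_smul c,
    h.cpt.comp_left (g := fun t => c * t) (by simp),
    (tsupport_comp_subset (g := fun t : ℝ => c * t) (by simp) x).trans h.supp⟩

theorem exists_between (A : AlphaForm n) {D : Set (Cn n)} (hD : IsOpen D)
    (hDb : Bornology.IsBounded D) (hDc : Dᶜ.Nonempty) {a b : Cn n → ℝ}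
    (ha : LocallyIntegrableOn a D volume) (has : DistSub A D a)
    (hb : ContDiff ℝ 2 b) (hab : ∀ z ∈ D, a z ≤ b z) {F : ℝ}
    (hF : ∀ z ∈ D, |alphaOpR A b z| ≤ F) (hF0 : 0 ≤ F) :
    ∃ v : Cn n → ℝ, LocallyIntegrableOn v D volume ∧ (∀ z ∈ D, a z ≤ v z) ∧
      (∀ z ∈ D, v z ≤ b z) ∧ ∀ φ, IsTest D φ → (∀ z, 0 ≤ φ z) →
        0 ≤ ∫ z, v z * alphaOpR A φ z ∧ ∫ z, v z * alphaOpR A φ z ≤ F * ∫ z, φ z := by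
  have hbl : LocallyIntegrableOn b D volume := hb.continuous.locallyIntegrable.locallyIntegrableOn D
  have hbal : LocallyIntegrableOn (fun z => b z - a z) D volume := hbl.sub ha
  have hasm : AEStronglyMeasurable (fun z => b z - a z) (volume.restrict D) :=
    hbal.aestronglyMeasurable
  set c : Cn n → ℝ := fun z => max (hasm.mk _ z) 0 with hc
  have hcm : Measurable c := hasm.stronglyMeasurable_mk.measurable.max measurable_const
  have hc0 : ∀ z, 0 ≤ c z := fun z => le_max_right _ _
  have hceq : (fun z => b z - a z) =ᵐ[volume.restrict D] c := by
    filter_upwards [hasm.ae_eq_mk, ae_restrict_mem hD.measurableSet] with z hz hzD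
    simp only [hc]
    rw [← hz, max_eq_left (sub_nonneg.2 (hab z hzD))]
  have hcl : LocallyIntegrableOn c D volume := by
    intro x hx
    obtain ⟨u, hu, hu2⟩ := hbal x hx
    refine ⟨u ∩ D, inter_mem hu self_mem_nhdsWithin, ?_⟩
    refine (hu2.mono_set Set.inter_subset_left).congr_fun_ae ?_
    exact ae_mono (Measure.restrict_mono Set.inter_subset_right le_rfl) hceq
  obtain ⟨w, hwm, hw0, hwK, hwi⟩ := exists_weight hD hDb hDc hcl hcm
  set d : Cn n → ENNReal := fun z => ENNReal.ofReal (w z * c z) with hd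
  have hdm : Measurable d := (hwm.mul hcm).ennreal_ofReal
  have hdt : ∀ z, (d z).toReal = w z * c z := fun z =>
    ENNReal.toReal_ofReal (mul_nonneg (hw0 z).le (hc0 z))
  set m := (volume.restrict D).withDensity d with hm
  haveI : IsFiniteMeasure m := isFiniteMeasure_withDensity hwi.ne
  have hlift : ∀ g : Cn n → ℝ, ∫ z, g z ∂m = ∫ z in D, (w z * c z) * g z := by
    intro g
    rw [hm, integral_withDensity_eq_integral_toReal_smul hdm
      (Eventually.of_forall fun z => ENNReal.ofReal_lt_top)]
    simp only [hdt, smul_eq_mul]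
  have hmem : ∀ φ, IsTest D φ → MemLp (fun z => alphaOpR A φ z / w z) 2 m := by
    intro φ hφ
    have hLm : Measurable fun z => alphaOpR A φ z / w z := (hφ.L_cont A).measurable.div hwm
    obtain ⟨t, ht, hKt⟩ := hwK _ (hφ.L_cpt A) (hφ.L_supp A)
    obtain ⟨C, hC⟩ := (hφ.L_cont A).bounded_above_of_compact_support (hφ.L_cpt A)
    refine MemLp.of_bound hLm.aestronglyMeasurable (C / t) (Eventually.of_forall fun z => ?_)
    have hC0 : 0 ≤ C := (norm_nonneg _).trans (hC z)
    by_cases hz : z ∈ tsupport (alphaOpR A φ)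
    · rw [norm_div]
      refine div_le_div₀ hC0 (hC z) ht ?_
      rw [Real.norm_eq_abs, abs_of_pos (hw0 z)]
      exact hKt z hz
    · rw [image_eq_zero_of_notMem_tsupport hz]; simp; positivity
  set Lin : testSub D →ₗ[ℝ] Lp ℝ 2 m :=
    { toFun := fun φ => (hmem φ.1 φ.2).toLp
      map_add' := by
        intro x y
        rw [← MemLp.toLp_add]
        refine MemLp.toLp_congr _ _ (Eventually.of_forall fun z => ?_)
        have := alphaOpR_add A (IsTest.two x.2) (IsTest.two y.2) z
        show alphaOpR A (x.1 + y.1) z / w z = _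
        rw [this, add_div]; rfl
      map_smul' := by
        intro r x
        rw [RingHom.id_apply, ← MemLp.toLp_const_smul]
        refine MemLp.toLp_congr _ _ (Eventually.of_forall fun z => ?_)
        have := alphaOpR_smul A r (IsTest.two x.2) z
        show alphaOpR A (r • x.1) z / w z = _
        rw [this, mul_div_assoc]; rfl } with hLin
  have hLinae : ∀ φ : testSub D, (Lin φ : Cn n → ℝ) =ᵐ[m] fun z => alphaOpR A φ.1 z / w z :=
    fun φ => (hmem φ.1 φ.2).coeFn_toLp
  have hIa : ∀ φ : testSub D, Integrable fun z => a z * alphaOpR A φ.1 z := fun φ =>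
    integrable_mul_cpt ha (IsTest.L_cont A φ.2) (IsTest.L_cpt A φ.2) (IsTest.L_supp A φ.2)
  set f : testSub D →ₗ[ℝ] ℝ :=
    { toFun := fun φ => - ∫ z, a z * alphaOpR A φ.1 z
      map_add' := by
        intro x y
        rw [← neg_add, ← integral_add (hIa x) (hIa y)]
        congr 1
        refine integral_congr_ae (Eventually.of_forall fun z => ?_)
        have := alphaOpR_add A (IsTest.two x.2) (IsTest.two y.2) z
        show a z * alphaOpR A (x.1 + y.1) z = _
        rw [this, mul_add]
      map_smul' := by
        intro r x
        rw [RingHom.id_apply, smul_neg, smul_eq_mul, ← integral_const_mul]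
        congr 1
        refine integral_congr_ae (Eventually.of_forall fun z => ?_)
        have := alphaOpR_smul A r (IsTest.two x.2) z
        show a z * alphaOpR A (r • x.1) z = _
        rw [this]; ring } with hf
  have hIn : ∀ φ : testSub D, Integrable fun z => max (- φ.1 z) 0 := fun φ =>
    ((IsTest.smooth φ.2).continuous.neg.max continuous_const).integrable_of_hasCompactSupport
      ((IsTest.cpt φ.2).comp_left (g := fun x => max (-x) 0) (by simp))
  obtain ⟨h, hhm, hh01, hh⟩ := hb_abstract m Lin (fun φ => F * ∫ z, max (- φ.1 z) 0)
    (by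
      intro r hr x
      rw [mul_left_comm, ← integral_const_mul r]
      congr 1
      refine integral_congr_ae (Eventually.of_forall fun z => ?_)
      show max (-(r * x.1 z)) 0 = r * max (- x.1 z) 0
      rw [mul_max_of_nonneg _ _ hr.le, mul_zero, mul_neg])
    (by
      intro x y
      rw [← mul_add, ← integral_add (hIn x) (hIn y)]
      refine mul_le_mul_of_nonneg_left ?_ hF0
      refine integral_mono (hIn _) ((hIn x).add (hIn y)) fun z => ?_
      show max (-(x.1 z + y.1 z)) 0 ≤ max (- x.1 z) 0 + max (- y.1 z) 0
      have a1 := le_max_left (-x.1 z) 0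
      have a2 := le_max_left (-y.1 z) 0
      have a3 := le_max_right (-x.1 z) 0
      have a4 := le_max_right (-y.1 z) 0
      exact max_le (by linarith) (by linarith)) f
    (by
      intro φ
      have h1 := feasibility A ha has hb hab hF hF0 φ.2
      have h2 : ∫ z, max (Lin φ z) 0 ∂m = ∫ z, (b z - a z) * max (alphaOpR A φ.1 z) 0 := by
        have e1 : ∫ z, max (Lin φ z) 0 ∂m = ∫ z, max (alphaOpR A φ.1 z / w z) 0 ∂m :=
          integral_congr_ae (by filter_upwards [hLinae φ] with z hz; rw [hz])
        rw [e1, hlift, ← setIntegral_eq_mul_cpt (D := D) (a := fun z => b z - a z)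
          (g := fun z => max (alphaOpR A φ.1 z) 0)
          ((tsupport_comp_subset (g := fun x : ℝ => max x 0) (by simp) _).trans
            (IsTest.L_supp A φ.2))]
        refine integral_congr_ae ?_
        filter_upwards [hceq] with z hz
        have hz' : b z - a z = c z := hz
        rw [hz', mul_comm (w z), mul_assoc, mul_max_of_nonneg _ _ (hw0 z).le, mul_zero,
          mul_div_cancel₀ _ (hw0 z).ne']
      rw [h2]
      exact h1)
  have hvl : LocallyIntegrableOn (fun z => a z + h z * (b z - a z)) D volume := by
    refine ha.add ?_
    intro x hx
    obtain ⟨u, hu, hu2⟩ := hbal x hx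
    refine ⟨u, hu, ?_⟩
    exact hu2.bdd_mul (c := 1) hhm.aestronglyMeasurable (Eventually.of_forall fun z => by
      rw [Real.norm_eq_abs, abs_of_nonneg (hh01 z).1]; exact (hh01 z).2)
  have hval : ∀ φ : testSub D, f φ - ∫ z, h z * Lin φ z ∂m =
      - ∫ z, (a z + h z * (b z - a z)) * alphaOpR A φ.1 z := by
    intro φ
    have e1 : ∫ z, h z * Lin φ z ∂m = ∫ z, h z * (alphaOpR A φ.1 z / w z) ∂m :=
      integral_congr_ae (by filter_upwards [hLinae φ] with z hz; rw [hz])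
    have e2 : ∫ z in D, (w z * c z) * (h z * (alphaOpR A φ.1 z / w z))
        = ∫ z in D, (h z * (b z - a z)) * alphaOpR A φ.1 z := by
      refine integral_congr_ae ?_
      filter_upwards [hceq] with z hz
      have hz' : b z - a z = c z := hz
      have := (hw0 z).ne'
      rw [hz']; field_simp
    have hI := integrable_mul_cpt hvl (IsTest.L_cont A φ.2) (IsTest.L_cpt A φ.2)
      (IsTest.L_supp A φ.2)
    have hI2 : Integrable fun z => (h z * (b z - a z)) * alphaOpR A φ.1 z := by
      have := hI.sub (hIa φ)
      refine this.congr (Eventually.of_forall fun z => ?_)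
      simp only [Pi.sub_apply]; ring
    rw [e1, hlift, e2, setIntegral_eq_mul_cpt (IsTest.L_supp A φ.2)]
    show - (∫ z, a z * alphaOpR A φ.1 z) - _ = _
    rw [← neg_add', ← integral_add (hIa φ) hI2]
    congr 1
    refine integral_congr_ae (Eventually.of_forall fun z => ?_)
    simp only []; ring
  refine ⟨fun z => a z + h z * (b z - a z), hvl, ?_, ?_, ?_⟩
  · intro z hz
    have := mul_nonneg (hh01 z).1 (sub_nonneg.2 (hab z hz))
    linarith
  · intro z hz
    have := mul_le_mul_of_nonneg_right (hh01 z).2 (sub_nonneg.2 (hab z hz))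
    linarith
  · intro φ hφ hφ0
    have h1 := hh ⟨φ, hφ⟩
    have h2 := hh (-⟨φ, hφ⟩)
    rw [hval] at h1 h2
    constructor
    · have : ∫ z, max (- φ z) 0 = 0 := by
        have e0 : (fun z => max (- φ z) 0) = fun _ => (0 : ℝ) := funext fun z =>
          max_eq_right (neg_nonpos.2 (hφ0 z))
        rw [e0]; simp
      simp only [this, mul_zero] at h1
      linarith
    · have e1 : ∫ z, max (- (-φ) z) 0 = ∫ z, φ z := by
        refine integral_congr_ae (Eventually.of_forall fun z => ?_)
        simp [hφ0 z]
      have e2 : ∫ z, (a z + h z * (b z - a z)) * alphaOpR A (-φ) z =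
          - ∫ z, (a z + h z * (b z - a z)) * alphaOpR A φ z := by
        rw [← integral_neg]
        refine integral_congr_ae (Eventually.of_forall fun z => ?_)
        have := alphaOpR_smul A (-1) hφ.two z
        have e3 : (-1 : ℝ) • φ = -φ := by simp
        rw [e3] at this
        simp only [this]; ring
      have h3 : - ∫ z, (a z + h z * (b z - a z)) * alphaOpR A (-φ) z ≤
        F * ∫ z, max (- (-φ) z) 0 := h2
      rw [e1, e2] at h3
      linarith

end AH


open MeasureTheory Filter Topology Complex Metric

namespace AH
variable {n : ℕ}

/-- coefficient matrix -/
noncomputable def Mat (A : AlphaForm n) (z : Cn n) : Matrix (Fin n) (Fin n) ℂ :=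
  Matrix.of fun j k => A.coeff j k z

/-- transposed inverse -/
noncomputable def Gm (A : AlphaForm n) (z : Cn n) : Matrix (Fin n) (Fin n) ℂ :=
  ((Mat A z)⁻¹).transpose

lemma Mat_det (A : AlphaForm n) (z : Cn n) : (Mat A z).det ≠ 0 := by
  intro h
  obtain ⟨v, hv0, hv⟩ := Matrix.exists_mulVec_eq_zero_iff.2 h
  have hp := A.strictlyPositive z (fun k => starRingEnd ℂ (v k)) (by
    intro h; apply hv0; ext k
    have := congrFun h k
    simpa using this)
  have : ∑ j, ∑ k, A.coeff j k z * starRingEnd ℂ (v j) * starRingEnd ℂ (starRingEnd ℂ (v k)) = 0 := by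
    refine Finset.sum_eq_zero fun j _ => ?_
    have h1 := congrFun hv j
    simp only [Matrix.mulVec, dotProduct, Mat, Matrix.of_apply, Pi.zero_apply] at h1
    have : ∑ k, A.coeff j k z * starRingEnd ℂ (v j) * starRingEnd ℂ (starRingEnd ℂ (v k))
      = starRingEnd ℂ (v j) * ∑ k, A.coeff j k z * v k := by
      rw [Finset.mul_sum]
      refine Finset.sum_congr rfl fun k _ => ?_
      rw [Complex.conj_conj]; ring
    rw [this, h1, mul_zero]
  rw [this] at hp
  simp at hp

lemma Mat_herm (A : AlphaForm n) (z : Cn n) : (Mat A z).IsHermitian := by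
  ext j k
  simp [Mat, Matrix.conjTranspose_apply, A.hermitian j k z]

lemma Gm_herm (A : AlphaForm n) (z : Cn n) (j k : Fin n) :
    Gm A z k j = starRingEnd ℂ (Gm A z j k) := by
  have := (Mat_herm A z).inv
  have h := congrFun (congrFun this j) k
  simp only [Matrix.conjTranspose_apply] at h
  simp only [Gm, Matrix.transpose_apply]
  exact h.symm

lemma Mat_mul_Gm (A : AlphaForm n) (z : Cn n) : Mat A z * (Gm A z).transpose = 1 := by
  rw [Gm, Matrix.transpose_transpose]
  exact Matrix.mul_nonsing_inv _ ((Mat_det A z).isUnit)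

lemma contDiff_det {m : ℕ} {f : Cn n → Matrix (Fin m) (Fin m) ℂ}
    (h : ∀ i j, ContDiff ℝ 1 fun z => f z i j) : ContDiff ℝ 1 fun z => (f z).det := by
  simp only [Matrix.det_apply]
  refine ContDiff.sum fun σ _ => ?_
  have := contDiff_prod (𝕜 := ℝ) (n := 1) (t := Finset.univ) (f := fun (i : Fin m) z => f z (σ i) i)
    fun i _ => h _ _
  exact this.const_smul (Equiv.Perm.sign σ : ℤ)

lemma contDiff_Gm (A : AlphaForm n) (j k : Fin n) : ContDiff ℝ 1 fun z => Gm A z j k := by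
  have h1 : ContDiff ℝ 1 fun z => (Mat A z).det := contDiff_det fun i j => A.contDiff i j
  have h2 : ContDiff ℝ 1 fun z => (Mat A z).adjugate k j := by
    simp only [Matrix.adjugate_apply]
    refine contDiff_det fun i l => ?_
    simp only [Matrix.updateRow_apply]
    by_cases hi : i = j
    · simp only [hi, if_true]; exact contDiff_const
    · simp only [hi, if_false]; exact A.contDiff i l
  have h3 : (fun z => Gm A z j k) = fun z => ((Mat A z).det)⁻¹ * (Mat A z).adjugate k j := by
    funext z
    simp [Gm, Matrix.inv_def, Matrix.transpose_apply, Matrix.smul_apply]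
  rw [h3]
  exact (h1.inv fun z => Mat_det A z).mul h2

noncomputable def Xc (j : Fin n) : Cn n →L[ℝ] ℝ :=
  Complex.reCLM.comp (ContinuousLinearMap.proj (R := ℝ) (φ := fun _ : Fin n => ℂ) j)
noncomputable def Yc (j : Fin n) : Cn n →L[ℝ] ℝ :=
  Complex.imCLM.comp (ContinuousLinearMap.proj (R := ℝ) (φ := fun _ : Fin n => ℂ) j)

/-- the real symmetric bilinear form of the kernel -/
noncomputable def Bz (A : AlphaForm n) (z : Cn n) : Cn n →L[ℝ] Cn n →L[ℝ] ℝ :=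
  ∑ j, ∑ k, ((Gm A z j k).re • ((Xc j).smulRight (Xc k) + (Yc j).smulRight (Yc k))
    - (Gm A z j k).im • ((Yc j).smulRight (Xc k) - (Xc j).smulRight (Yc k)))

lemma Bz_apply (A : AlphaForm n) (z x y : Cn n) :
    Bz A z x y = (∑ j, ∑ k, Gm A z j k * x j * starRingEnd ℂ (y k)).re := by
  simp only [Bz, Complex.re_sum, ContinuousLinearMap.sum_apply]
  refine Finset.sum_congr rfl fun j _ => Finset.sum_congr rfl fun k _ => ?_
  simp [Xc, Yc]
  ring

lemma Bz_symm (A : AlphaForm n) (z x y : Cn n) : Bz A z x y = Bz A z y x := by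
  rw [Bz_apply, Bz_apply, ← Complex.conj_re, map_sum,
    Finset.sum_congr rfl (fun j _ => map_sum _ _ _), Finset.sum_comm]
  congr 1
  refine Finset.sum_congr rfl fun j _ => Finset.sum_congr rfl fun k _ => ?_
  rw [Gm_herm A z j k]
  simp only [map_mul, Complex.conj_conj]
  ring

lemma contDiff_smul_vec {E F : Type*} [NormedAddCommGroup E] [NormedSpace ℝ E]
    [NormedAddCommGroup F] [NormedSpace ℝ F] {f : E → ℝ} (hf : ContDiff ℝ 1 f) (M : F) :
    ContDiff ℝ 1 fun z => f z • M := hf.smul contDiff_const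

lemma continuous_norm_contDiff {E F : Type*} [NormedAddCommGroup E] [NormedSpace ℝ E]
    [NormedAddCommGroup F] [NormedSpace ℝ F] {f : E → F} (hf : ContDiff ℝ 1 f) :
    Continuous fun z => ‖f z‖ := hf.continuous.norm

lemma contDiff_Bz (A : AlphaForm n) : ContDiff ℝ 1 (Bz A) := by
  unfold Bz
  refine ContDiff.sum fun j _ => ContDiff.sum fun k _ => ?_
  have h1 : ContDiff ℝ 1 fun z => (Gm A z j k).re := Complex.reCLM.contDiff.comp (contDiff_Gm A j k)
  have h2 : ContDiff ℝ 1 fun z => (Gm A z j k).im := Complex.imCLM.contDiff.comp (contDiff_Gm A j k)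
  exact (contDiff_smul_vec h1 ((Xc j).smulRight (Xc k) + (Yc j).smulRight (Yc k))).sub
    (contDiff_smul_vec h2 ((Yc j).smulRight (Xc k) - (Xc j).smulRight (Yc k)))

lemma Bz_ex (A : AlphaForm n) (z x : Cn n) (j : Fin n) :
    Bz A z x (ex j) = (∑ m, Gm A z m j * x m).re := by
  rw [Bz_apply]
  congr 1
  refine Finset.sum_congr rfl fun m _ => ?_
  rw [Finset.sum_eq_single j]
  · simp [ex]
  · intro k _ hk; simp [ex, hk]
  · simp

lemma Bz_ey (A : AlphaForm n) (z x : Cn n) (j : Fin n) :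
    Bz A z x (ey j) = (∑ m, Gm A z m j * x m).im := by
  rw [Bz_apply]
  have : ∑ m, ∑ k, Gm A z m k * x m * starRingEnd ℂ ((ey j : Cn n) k)
      = (-Complex.I) * ∑ m, Gm A z m j * x m := by
    rw [Finset.mul_sum]
    refine Finset.sum_congr rfl fun m _ => ?_
    rw [Finset.sum_eq_single j]
    · simp [ey]; ring
    · intro k _ hk; simp [ey, hk]
    · simp
  rw [this]; simp

lemma Gm_sum_ex (A : AlphaForm n) (z : Cn n) (j k : Fin n) :
    ∑ m, Gm A z m j * (ex k : Cn n) m = Gm A z k j := by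
  rw [Finset.sum_eq_single k]
  · simp [ex]
  · intro m _ hm; simp [ex, hm]
  · simp

lemma Gm_sum_ey (A : AlphaForm n) (z : Cn n) (j k : Fin n) :
    ∑ m, Gm A z m j * (ey k : Cn n) m = Gm A z k j * Complex.I := by
  rw [Finset.sum_eq_single k]
  · simp [ey]
  · intro m _ hm; simp [ey, hm]
  · simp

lemma Wjk_Bz (A : AlphaForm n) (z : Cn n) (j k : Fin n) :
    Wjk j k ((2 : ℝ) • Bz A z) = Gm A z j k := by
  rw [Wjk_smul, Wjk, Bz_ex, Bz_ex, Bz_ey, Bz_ey, Gm_sum_ex, Gm_sum_ey, Gm_herm A z j k]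
  apply Complex.ext <;> simp <;> ring

lemma Lam_Bz (A : AlphaForm n) (z : Cn n) : Lam A z ((2 : ℝ) • Bz A z) = n := by
  have : ∑ j, ∑ k, A.coeff j k z * Wjk j k ((2 : ℝ) • Bz A z) = (n : ℂ) := by
    have h1 : ∀ j, ∑ k, A.coeff j k z * Wjk j k ((2 : ℝ) • Bz A z) = 1 := by
      intro j
      have := congrFun (congrFun (Mat_mul_Gm A z) j) j
      simp only [Matrix.mul_apply, Matrix.transpose_apply, Matrix.one_apply_eq] at this
      rw [← this]
      exact Finset.sum_congr rfl fun k _ => by rw [Wjk_Bz]; rfl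
    simp [h1]
  rw [Lam, this]; simp

lemma Lam_rk_eq (A : AlphaForm n) (z : Cn n) (l : Cn n →L[ℝ] ℝ) :
    Lam A z (rk l) = (∑ j, ∑ k, A.coeff j k z
      * (((l (ex j) : ℝ) - Complex.I * (l (ey j) : ℝ)) / 2)
      * starRingEnd ℂ (((l (ex k) : ℝ) - Complex.I * (l (ey k) : ℝ)) / 2)).re := by
  rw [Lam]
  congr 1
  refine Finset.sum_congr rfl fun j _ => Finset.sum_congr rfl fun k _ => ?_
  rw [mul_assoc]
  congr 1
  simp only [Wjk, rk_apply, map_div₀, map_sub, map_mul, Complex.conj_ofReal, Complex.conj_I,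
      map_ofNat]
  push_cast
  have := Complex.I_sq
  linear_combination ((l (ey k) : ℂ) * (l (ey j) : ℂ) / 4) * this

lemma xi_eq (A : AlphaForm n) (z x : Cn n) (j : Fin n) :
    (((((2 : ℝ) • Bz A z x) (ex j) : ℝ) : ℂ) - Complex.I * ((((2 : ℝ) • Bz A z x) (ey j) : ℝ) : ℂ)) / 2
      = ∑ m, Gm A z j m * starRingEnd ℂ (x m) := by
  have : ∑ m, Gm A z j m * starRingEnd ℂ (x m) = starRingEnd ℂ (∑ m, Gm A z m j * x m) := by
    rw [map_sum]
    refine Finset.sum_congr rfl fun m _ => ?_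
    rw [map_mul, ← Gm_herm]
  rw [this, ContinuousLinearMap.smul_apply, ContinuousLinearMap.smul_apply, Bz_ex, Bz_ey]
  generalize ∑ m, Gm A z m j * x m = S
  apply Complex.ext
  · simp
  · simp; ring

lemma Lam_rk_Bz (A : AlphaForm n) (z x : Cn n) :
    Lam A z (rk ((2 : ℝ) • Bz A z x)) = Bz A z x x := by
  rw [Lam_rk_eq]
  simp only [xi_eq]
  rw [Bz_apply]
  congr 1
  have h1 : ∀ j, ∑ k, A.coeff j k z * starRingEnd ℂ (∑ m, Gm A z k m * starRingEnd ℂ (x m)) = x j := by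
    intro j
    have h2 : ∀ k, starRingEnd ℂ (∑ m, Gm A z k m * starRingEnd ℂ (x m)) = ∑ m, Gm A z m k * x m := by
      intro k
      rw [map_sum]
      refine Finset.sum_congr rfl fun m _ => ?_
      rw [map_mul, ← Gm_herm, Complex.conj_conj]
    simp only [h2, Finset.mul_sum]
    rw [Finset.sum_comm]
    have h3 : ∀ m, ∑ k, A.coeff j k z * (Gm A z m k * x m) = (if j = m then 1 else 0) * x m := by
      intro m
      have := congrFun (congrFun (Mat_mul_Gm A z) j) m
      simp only [Matrix.mul_apply, Matrix.transpose_apply, Matrix.one_apply] at this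
      rw [← this, Finset.sum_mul]
      exact Finset.sum_congr rfl fun k _ => by simp only [Mat, Matrix.of_apply]; ring
    simp [h3]
  have h4 : ∀ j, ∑ k, A.coeff j k z * (∑ m, Gm A z j m * starRingEnd ℂ (x m))
      * starRingEnd ℂ (∑ m, Gm A z k m * starRingEnd ℂ (x m))
      = ∑ k, Gm A z j k * x j * starRingEnd ℂ (x k) := by
    intro j
    have : ∑ k, A.coeff j k z * (∑ m, Gm A z j m * starRingEnd ℂ (x m))
      * starRingEnd ℂ (∑ m, Gm A z k m * starRingEnd ℂ (x m))
      = (∑ m, Gm A z j m * starRingEnd ℂ (x m)) *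
        ∑ k, A.coeff j k z * starRingEnd ℂ (∑ m, Gm A z k m * starRingEnd ℂ (x m)) := by
      rw [Finset.mul_sum]
      exact Finset.sum_congr rfl fun k _ => by ring
    rw [this, h1, Finset.sum_mul]
    exact Finset.sum_congr rfl fun k _ => by ring
  exact Finset.sum_congr rfl fun j _ => h4 j

lemma Bz_pos (A : AlphaForm n) (z x : Cn n) (hx : x ≠ 0) : 0 < Bz A z x x := by
  rw [← Lam_rk_Bz, Lam_rk_eq]
  simp only [xi_eq]
  refine A.strictlyPositive z (fun j => ∑ m, Gm A z j m * starRingEnd ℂ (x m)) fun h => hx ?_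
  have h1 : (Gm A z).mulVec (fun m => starRingEnd ℂ (x m)) = 0 := h
  have hu : IsUnit (Gm A z).det := by
    rw [Gm, Matrix.det_transpose]
    exact Matrix.isUnit_nonsing_inv_det _ (Mat_det A z).isUnit
  by_contra hne
  have := Matrix.exists_mulVec_eq_zero_iff.1 ⟨fun m => starRingEnd ℂ (x m), fun h0 => hne (by
    ext m
    have := congrFun h0 m
    simpa using this), h1⟩
  exact hu.ne_zero this

lemma Bz_smul (A : AlphaForm n) (z x : Cn n) (t : ℝ) :
    Bz A z (t • x) (t • x) = t * (t * Bz A z x x) := by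
  simp only [map_smul, ContinuousLinearMap.coe_smul', Pi.smul_apply, smul_eq_mul]

lemma Bz_lower (A : AlphaForm n) {S : Set (Cn n)} (hSc : IsCompact S) :
    ∃ C1 : ℝ, ∀ z ∈ S, ∀ x : Cn n, ‖x‖ ^ 2 ≤ C1 * Bz A z x x := by
  rcases (S ×ˢ sphere (0 : Cn n) 1).eq_empty_or_nonempty with he | hne
  · refine ⟨0, fun z hz x => ?_⟩
    by_cases hx : x = 0
    · simp [hx]
    · exfalso
      have : (z, ‖x‖⁻¹ • x) ∈ S ×ˢ sphere (0 : Cn n) 1 := by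
        refine ⟨hz, ?_⟩
        simp [norm_smul, hx]
      rw [he] at this; exact this
  · have hcont : Continuous fun p : Cn n × Cn n => Bz A p.1 p.2 p.2 :=
      (((contDiff_Bz A).continuous.comp continuous_fst).clm_apply continuous_snd).clm_apply
        continuous_snd
    obtain ⟨p, hp, hmin⟩ := (hSc.prod (isCompact_sphere (0 : Cn n) 1)).exists_isMinOn hne
      hcont.continuousOn
    have hp0 : p.2 ≠ 0 := by
      intro h
      have := hp.2
      rw [h] at this; simp at this
    have hpos := Bz_pos A p.1 p.2 hp0
    refine ⟨(Bz A p.1 p.2 p.2)⁻¹, fun z hz x => ?_⟩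
    by_cases hx : x = 0
    · simp [hx]
    · have hm : (z, ‖x‖⁻¹ • x) ∈ S ×ˢ sphere (0 : Cn n) 1 := by
        refine ⟨hz, ?_⟩
        simp [norm_smul, hx]
      have h5 : Bz A p.1 p.2 p.2 ≤ Bz A z (‖x‖⁻¹ • x) (‖x‖⁻¹ • x) :=
            isMinOn_iff.1 hmin (z, ‖x‖⁻¹ • x) hm
      rw [Bz_smul] at h5
      have hn : 0 < ‖x‖ := norm_pos_iff.2 hx
      rw [← div_eq_inv_mul, le_div_iff₀ hpos]
      have h6 := mul_le_mul_of_nonneg_left h5 (sq_nonneg ‖x‖)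
      refine h6.trans (le_of_eq ?_)
      field_simp

/-- all the quantitative facts about the kernel form on a ball -/
theorem kernel_data (A : AlphaForm n) (R : ℝ) : ∃ C : ℝ, 1 ≤ C ∧
    (∀ z ∈ closedBall (0 : Cn n) R, ∀ x, ‖x‖ ^ 2 ≤ C * Bz A z x x) ∧
    (∀ z ∈ closedBall (0 : Cn n) R, ‖Bz A z‖ ≤ C) ∧
    (∀ z ∈ closedBall (0 : Cn n) R, ∀ w ∈ closedBall (0 : Cn n) R,
      ‖Bz A z - Bz A w‖ ≤ C * ‖z - w‖) ∧
    (∀ z ∈ closedBall (0 : Cn n) R, ∀ w ∈ closedBall (0 : Cn n) R, ∀ M,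
      |Lam A z M - Lam A w M| ≤ C * ‖z - w‖ * ‖M‖) := by
  set S := closedBall (0 : Cn n) R with hS
  have hSc : IsCompact S := isCompact_closedBall _ _
  have hSx : Convex ℝ S := convex_closedBall _ _
  have hcB : ContinuousOn (fun z => ‖Bz A z‖) S :=
    (continuous_norm_contDiff (contDiff_Bz A)).continuousOn
  obtain ⟨C2, hC2⟩ := hSc.exists_bound_of_continuousOn hcB
  replace hC2 : ∀ z ∈ S, ‖Bz A z‖ ≤ C2 := fun z hz => (le_abs_self _).trans (hC2 z hz)
  obtain ⟨K3, hK3⟩ := (contDiff_Bz A).contDiffOn.exists_lipschitzOnWith (s := S) (by norm_num) hSx hSc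
  have h4 : ∀ j k, ∃ K : NNReal, LipschitzOnWith K (A.coeff j k) S := fun j k =>
    (A.contDiff j k).contDiffOn.exists_lipschitzOnWith (by norm_num) hSx hSc
  choose K4 hK4 using h4
  have h1 := Bz_lower A hSc
  obtain ⟨C1, hC1⟩ := h1
  set C4 : ℝ := ∑ j, ∑ k, (K4 j k : ℝ) with hC4
  have hC40 : 0 ≤ C4 := Finset.sum_nonneg fun _ _ => Finset.sum_nonneg fun _ _ => by positivity
  refine ⟨max 1 (max (max C1 C2) (max K3 C4)), le_max_left _ _, ?_, ?_, ?_, ?_⟩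
  · intro z hz x
    refine (hC1 z hz x).trans (mul_le_mul_of_nonneg_right ?_ ?_)
    · exact (le_max_left _ _).trans ((le_max_left _ _).trans (le_max_right _ _))
    · by_cases hx : x = 0
      · simp [hx]
      · exact (Bz_pos A z x hx).le
  · intro z hz
    exact (hC2 z hz).trans ((le_max_right _ _).trans ((le_max_left _ _).trans (le_max_right _ _)))
  · intro z hz w hw
    have := hK3.dist_le_mul z hz w hw
    rw [dist_eq_norm, dist_eq_norm] at this
    refine this.trans (mul_le_mul_of_nonneg_right ?_ (norm_nonneg _))
    exact (le_max_left _ _).trans ((le_max_right _ _).trans (le_max_right _ _))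
  · intro z hz w hw M
    have h5 : |Lam A z M - Lam A w M| ≤ C4 * ‖z - w‖ * ‖M‖ := by
      rw [Lam, Lam, ← Complex.sub_re]
      refine (Complex.abs_re_le_norm _).trans ?_
      rw [← Finset.sum_sub_distrib, hC4, Finset.sum_mul, Finset.sum_mul]
      refine (norm_sum_le _ _).trans (Finset.sum_le_sum fun j _ => ?_)
      rw [← Finset.sum_sub_distrib, Finset.sum_mul, Finset.sum_mul]
      refine (norm_sum_le _ _).trans (Finset.sum_le_sum fun k _ => ?_)
      rw [← sub_mul, norm_mul]
      have := (hK4 j k).dist_le_mul z hz w hw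
      rw [dist_eq_norm, dist_eq_norm] at this
      exact mul_le_mul this (Wjk_norm_le j k M) (norm_nonneg _) (by positivity)
    refine h5.trans ?_
    gcongr
    exact (le_max_right _ _).trans ((le_max_right _ _).trans (le_max_right _ _))

end AH


open MeasureTheory Filter Topology Complex Metric

namespace AH
variable {n : ℕ}

section quad
variable {E : Type*} [NormedAddCommGroup E] [NormedSpace ℝ E]

lemma quad_hasFDerivAt (B : E →L[ℝ] E →L[ℝ] ℝ) (hB : ∀ x y, B x y = B y x) (z ξ : E) (s : ℝ) :
    HasFDerivAt (fun ξ => s * B (ξ - z) (ξ - z)) ((2 * s) • B (ξ - z)) ξ := by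
  have h1 : HasFDerivAt (fun ξ : E => ξ - z) (ContinuousLinearMap.id ℝ E) ξ :=
    (hasFDerivAt_id ξ).sub_const z
  have h2 : HasFDerivAt (fun ξ : E => B (ξ - z)) (B.comp (ContinuousLinearMap.id ℝ E)) ξ :=
    B.hasFDerivAt.comp ξ h1
  have h3 := (h2.clm_apply h1).const_mul s
  refine h3.congr_fderiv ?_
  ext y
  simp [hB y]
  ring

lemma quad_fderiv (B : E →L[ℝ] E →L[ℝ] ℝ) (hB : ∀ x y, B x y = B y x) (z : E) (s : ℝ) :
    fderiv ℝ (fun ξ => s * B (ξ - z) (ξ - z)) = fun ξ => (2 * s) • B (ξ - z) :=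
  funext fun ξ => (quad_hasFDerivAt B hB z ξ s).fderiv

lemma quad_fderiv2 (B : E →L[ℝ] E →L[ℝ] ℝ) (hB : ∀ x y, B x y = B y x) (z ξ : E) (s : ℝ) :
    fderiv ℝ (fderiv ℝ (fun ξ => s * B (ξ - z) (ξ - z))) ξ = (2 * s) • B := by
  rw [quad_fderiv B hB]
  have h1 : HasFDerivAt (fun ξ : E => ξ - z) (ContinuousLinearMap.id ℝ E) ξ :=
    (hasFDerivAt_id ξ).sub_const z
  have h2 : HasFDerivAt (fun ξ : E => B (ξ - z)) (B.comp (ContinuousLinearMap.id ℝ E)) ξ :=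
    B.hasFDerivAt.comp ξ h1
  have h3 := (h2.const_smul (2 * s)).fderiv
  rw [ContinuousLinearMap.comp_id] at h3
  exact h3

lemma quad_contDiff (B : E →L[ℝ] E →L[ℝ] ℝ) (z : E) (s : ℝ) {m : WithTop ℕ∞} :
    ContDiff ℝ m (fun ξ => s * B (ξ - z) (ξ - z)) := by
  have h1 : ContDiff ℝ m (fun ξ : E => ξ - z) := contDiff_id.sub contDiff_const
  exact contDiff_const.mul ((B.contDiff.comp h1).clm_apply h1)

lemma quad_diff (B B' : E →L[ℝ] E →L[ℝ] ℝ) (x y : E) :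
    |B' y y - B x x| ≤ ‖B' - B‖ * ‖y‖ ^ 2 + ‖B‖ * ‖x - y‖ * (‖x‖ + ‖y‖) := by
  have h : B' y y - B x x = (B' - B) y y - B (x - y) y - B x (x - y) := by
    simp
  have h1 := (B' - B).le_opNorm₂ y y
  have h2 := B.le_opNorm₂ (x - y) y
  have h3 := B.le_opNorm₂ x (x - y)
  rw [Real.norm_eq_abs] at h1 h2 h3
  rw [h]
  have h4 := abs_sub ((B' - B) y y - B (x - y) y) (B x (x - y))
  have h5 := abs_sub ((B' - B) y y) (B (x - y) y)
  nlinarith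

lemma quad_le (B : E →L[ℝ] E →L[ℝ] ℝ) (x : E) : B x x ≤ ‖B‖ * ‖x‖ ^ 2 := by
  have h1 := B.le_opNorm₂ x x
  rw [Real.norm_eq_abs] at h1
  nlinarith [le_abs_self (B x x)]

lemma two_smul_norm {x : E →L[ℝ] E →L[ℝ] ℝ} {C : ℝ}
    (h : ‖x‖ ≤ C) : ‖(2 : ℝ) • x‖ ≤ 2 * C := by
  refine (ContinuousLinearMap.opNorm_smul_le (2 : ℝ) x).trans ?_
  simpa using h

end quad

/-- the kernel quadratic form -/
noncomputable def qf (A : AlphaForm n) (z x : Cn n) : ℝ := Bz A z x x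

lemma rk_norm_le (l : Cn n →L[ℝ] ℝ) : ‖rk l‖ ≤ ‖l‖ ^ 2 := by
  refine ContinuousLinearMap.opNorm_le_bound₂ _ (by positivity) fun x y => ?_
  rw [rk_apply, norm_mul]
  have h1 := l.le_opNorm x
  have h2 := l.le_opNorm y
  calc ‖l x‖ * ‖l y‖ ≤ (‖l‖ * ‖x‖) * (‖l‖ * ‖y‖) := by gcongr
    _ = _ := by ring

lemma rk_smul (s : ℝ) (l : Cn n →L[ℝ] ℝ) : rk (s • l) = (s ^ 2) • rk l := by
  ext x y
  simp [rk_apply]; ring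

theorem qf_data (A : AlphaForm n) (R : ℝ) : ∃ C : ℝ, 1 ≤ C ∧
    (∀ z ∈ closedBall (0 : Cn n) R, ∀ x, ‖x‖ ^ 2 ≤ C * qf A z x) ∧
    (∀ z ∈ closedBall (0 : Cn n) R, ∀ x, qf A z x ≤ C * ‖x‖ ^ 2) ∧
    (∀ z ∈ closedBall (0 : Cn n) R, ∀ w ∈ closedBall (0 : Cn n) R, ∀ x y,
      |qf A w y - qf A z x| ≤ C * ‖z - w‖ * ‖y‖ ^ 2 + C * ‖x - y‖ * (‖x‖ + ‖y‖)) ∧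
    (∀ z ∈ closedBall (0 : Cn n) R, ∀ ξ ∈ closedBall (0 : Cn n) R, ∀ s : ℝ, ∀ Θ : ℝ → ℝ,
      ContDiff ℝ 2 Θ → ∃ e1 e2 : ℝ, |e1| ≤ C * ‖ξ - z‖ ∧ |e2| ≤ C * ‖ξ - z‖ * qf A z (ξ - z) ∧
      alphaOpR A (fun ξ => Θ (s * qf A z (ξ - z))) ξ =
        deriv Θ (s * qf A z (ξ - z)) * (s * (n + e1)) +
        deriv (deriv Θ) (s * qf A z (ξ - z)) * (s ^ 2 * (qf A z (ξ - z) + e2))) := by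
  obtain ⟨C, hC1, hl, hu, hd, hL⟩ := kernel_data A R
  have hCC : C ≤ 4 * C ^ 4 := by
    have : 1 ≤ C ^ 3 := one_le_pow₀ hC1
    nlinarith [mul_le_mul_of_nonneg_left this (by linarith : 0 ≤ C)]
  have hq0 : ∀ z ∈ closedBall (0 : Cn n) R, ∀ x, 0 ≤ qf A z x := by
    intro z hz x
    by_contra h
    push Not at h
    have := hl z hz x
    have h2 : C * Bz A z x x < 0 := mul_neg_of_pos_of_neg (by linarith) h
    nlinarith [sq_nonneg ‖x‖]
  refine ⟨4 * C ^ 4, hC1.trans hCC, ?_, ?_, ?_, ?_⟩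
  · intro z hz x
    exact (hl z hz x).trans (mul_le_mul_of_nonneg_right hCC (hq0 z hz x))
  · intro z hz x
    exact (quad_le _ x).trans
      (mul_le_mul_of_nonneg_right ((hu z hz).trans hCC) (sq_nonneg _))
  · intro z hz w hw x y
    refine (quad_diff (Bz A z) (Bz A w) x y).trans ?_
    have h1 := hd w hw z hz
    rw [norm_sub_rev w z] at h1
    have h1' : ‖Bz A w - Bz A z‖ ≤ 4 * C ^ 4 * ‖z - w‖ := h1.trans (by gcongr)
    have h2 : ‖Bz A z‖ ≤ 4 * C ^ 4 := (hu z hz).trans hCC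
    exact add_le_add (mul_le_mul_of_nonneg_right h1' (sq_nonneg _))
      (mul_le_mul_of_nonneg_right (mul_le_mul_of_nonneg_right h2 (norm_nonneg _)) (by positivity))
  · intro z hz ξ hξ s Θ hΘ
    have hφ : ContDiff ℝ 2 (fun ξ => s * Bz A z (ξ - z) (ξ - z)) := quad_contDiff _ _ _
    have h1 := alphaOpR_comp A hφ hΘ ξ
    rw [alphaOpR_eq A hφ, quad_fderiv2 _ (Bz_symm A z), quad_fderiv _ (Bz_symm A z)] at h1
    beta_reduce at h1
    set x := ξ - z with hx
    refine ⟨Lam A ξ ((2 : ℝ) • Bz A z) - n, Lam A ξ (rk ((2 : ℝ) • Bz A z x)) - qf A z x, ?_, ?_, ?_⟩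
    · have h2 := hL ξ hξ z hz ((2 : ℝ) • Bz A z)
      rw [Lam_Bz] at h2
      refine h2.trans ?_
      have h3 : ‖(2 : ℝ) • Bz A z‖ ≤ 2 * C := two_smul_norm (hu z hz)
      calc C * ‖ξ - z‖ * ‖(2 : ℝ) • Bz A z‖ ≤ C * ‖ξ - z‖ * (2 * C) := by gcongr
        _ = 2 * C ^ 2 * ‖ξ - z‖ := by ring
        _ ≤ 4 * C ^ 4 * ‖ξ - z‖ := by
          gcongr
          · norm_num
          · norm_num
    · have h2 := hL ξ hξ z hz (rk ((2 : ℝ) • Bz A z x))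
      rw [Lam_rk_Bz] at h2
      refine h2.trans ?_
      have h3 : ‖(2 : ℝ) • Bz A z x‖ ≤ 2 * (C * ‖x‖) := by
        rw [norm_smul]
        have := (Bz A z).le_opNorm x
        have h4 := mul_le_mul_of_nonneg_right (hu z hz) (norm_nonneg x)
        simpa using this.trans h4
      have h4 := rk_norm_le ((2 : ℝ) • Bz A z x)
      calc C * ‖ξ - z‖ * ‖rk ((2 : ℝ) • Bz A z x)‖ ≤ C * ‖ξ - z‖ * (2 * (C * ‖x‖)) ^ 2 := by
            gcongr; exact h4.trans (by gcongr)
        _ = 4 * C ^ 3 * ‖ξ - z‖ * ‖x‖ ^ 2 := by ring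
        _ ≤ 4 * C ^ 3 * ‖ξ - z‖ * (C * qf A z x) := by gcongr; exact hl z hz x
        _ = _ := by ring
    · have e1 : (2 * s) • Bz A z = s • ((2 : ℝ) • Bz A z) := by rw [smul_smul, mul_comm]
      have e2 : (2 * s) • Bz A z x = s • ((2 : ℝ) • Bz A z x) := by rw [smul_smul, mul_comm]
      rw [e1, e2, rk_smul, Lam_smul A ξ s, Lam_smul A ξ (s ^ 2)] at h1
      refine Eq.trans h1 ?_
      simp only [qf]
      ring

end AH


open MeasureTheory Filter Topology Complex Metric

namespace AH
variable {n : ℕ}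

/-- cut-off profile -/
noncomputable def kap (t : ℝ) : ℝ := Real.smoothTransition (2 - 2 * t)

lemma kap_smooth : ContDiff ℝ (⊤ : ℕ∞) kap :=
  Real.smoothTransition.contDiff.comp (contDiff_const.sub (contDiff_const.mul contDiff_id))

lemma kap_diff : Differentiable ℝ kap := kap_smooth.differentiable (by simp)

lemma kap_nonneg (t : ℝ) : 0 ≤ kap t := Real.smoothTransition.nonneg _
lemma kap_le_one (t : ℝ) : kap t ≤ 1 := Real.smoothTransition.le_one _
lemma kap_one {t : ℝ} (h : t ≤ 1 / 2) : kap t = 1 :=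
  Real.smoothTransition.one_of_one_le (by linarith)
lemma kap_zero {t : ℝ} (h : 1 ≤ t) : kap t = 0 :=
  Real.smoothTransition.zero_of_nonpos (by linarith)

lemma kap_anti : Antitone kap := fun a b h =>
  Real.smoothTransition.monotone (by linarith)

lemma kap_deriv_nonpos (t : ℝ) : deriv kap t ≤ 0 := kap_anti.deriv_nonpos

lemma kap_deriv_zero {t : ℝ} (h : 1 ≤ t) : deriv kap t = 0 := by
  have : IsLocalMin kap t := Filter.Eventually.of_forall fun s => by
    rw [kap_zero h]; exact kap_nonneg s
  exact this.deriv_eq_zero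

lemma kap_deriv_zero' {t : ℝ} (h : t ≤ 1 / 2) : deriv kap t = 0 := by
  have : IsLocalMax kap t := Filter.Eventually.of_forall fun s => by
    rw [kap_one h]; exact kap_le_one s
  exact this.deriv_eq_zero

lemma kap_deriv_cont : Continuous (deriv kap) :=
  (kap_smooth.continuous_deriv (by simp))

lemma exists_kap_bound : ∃ M : ℝ, 1 ≤ M ∧ (∀ t, |deriv kap t| ≤ M) ∧
    ∀ s t, |kap s - kap t| ≤ M * |s - t| := by
  obtain ⟨M, hM⟩ := (isCompact_Icc (a := (0 : ℝ)) (b := 1)).exists_bound_of_continuousOn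
    kap_deriv_cont.continuousOn
  have h : ∀ t, |deriv kap t| ≤ max 1 M := by
    intro t
    by_cases h0 : t ≤ 1 / 2
    · rw [kap_deriv_zero' h0]; simp
    by_cases h1 : 1 ≤ t
    · rw [kap_deriv_zero h1]; simp
    exact (hM t ⟨by linarith, by linarith⟩).trans (le_max_right _ _)
  refine ⟨max 1 M, le_max_left _ _, h, fun s t => ?_⟩
  exact Convex.norm_image_sub_le_of_norm_deriv_le (f := kap) (s := Set.univ)
    (fun x _ => kap_diff x) (fun x _ => h x) convex_univ trivial trivial

/-- antiderivative of the profile -/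
noncomputable def HH (t : ℝ) : ℝ := -∫ s in (1 : ℝ)..t, kap s

lemma HH_hasDeriv (t : ℝ) : HasDerivAt HH (-kap t) t :=
  ((kap_smooth.continuous.integral_hasStrictDerivAt 1 t).hasDerivAt).neg

lemma HH_deriv : deriv HH = fun t => -kap t := funext fun t => (HH_hasDeriv t).deriv

lemma HH_deriv2 (t : ℝ) : deriv (deriv HH) t = -deriv kap t := by
  rw [HH_deriv]; exact deriv.neg

lemma HH_smooth : ContDiff ℝ (⊤ : ℕ∞) HH := by
  rw [contDiff_infty_iff_deriv]
  refine ⟨fun t => (HH_hasDeriv t).differentiableAt, ?_⟩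
  rw [HH_deriv]
  exact kap_smooth.neg

lemma HH_zero {t : ℝ} (h : 1 ≤ t) : HH t = 0 := by
  rw [HH, intervalIntegral.integral_congr (g := fun _ => (0 : ℝ))]
  · simp
  · intro s hs
    rw [Set.uIcc_of_le h] at hs
    exact kap_zero hs.1

lemma HH_anti : Antitone HH :=
  antitone_of_deriv_nonpos (fun t => (HH_hasDeriv t).differentiableAt) fun t => by
    rw [HH_deriv]; simpa using kap_nonneg t

lemma HH_nonneg (t : ℝ) : 0 ≤ HH t := by
  rcases le_total 1 t with h | h
  · rw [HH_zero h]
  · rw [← HH_zero le_rfl]; exact HH_anti h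

lemma HH_le_one {t : ℝ} (h : 0 ≤ t) : HH t ≤ 1 := by
  refine (HH_anti h).trans ?_
  rw [HH, ← intervalIntegral.integral_symm]
  have : ∫ s in (0:ℝ)..1, kap s ≤ ∫ s in (0:ℝ)..1, (1 : ℝ) :=
    intervalIntegral.integral_mono (by norm_num) (kap_smooth.continuous.intervalIntegrable _ _)
      (by simp) kap_le_one
  simpa using this

/-- Packaged facts about the kernel form. -/
structure QD (A : AlphaForm n) (R C : ℝ) : Prop where
  one : 1 ≤ C
  lower : ∀ z ∈ closedBall (0 : Cn n) R, ∀ x, ‖x‖ ^ 2 ≤ C * qf A z x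
  upper : ∀ z ∈ closedBall (0 : Cn n) R, ∀ x, qf A z x ≤ C * ‖x‖ ^ 2
  diff : ∀ z ∈ closedBall (0 : Cn n) R, ∀ w ∈ closedBall (0 : Cn n) R, ∀ x y,
      |qf A w y - qf A z x| ≤ C * ‖z - w‖ * ‖y‖ ^ 2 + C * ‖x - y‖ * (‖x‖ + ‖y‖)
  L : ∀ z ∈ closedBall (0 : Cn n) R, ∀ ξ ∈ closedBall (0 : Cn n) R, ∀ s : ℝ, ∀ Θ : ℝ → ℝ,
      ContDiff ℝ 2 Θ → ∃ e1 e2 : ℝ, |e1| ≤ C * ‖ξ - z‖ ∧ |e2| ≤ C * ‖ξ - z‖ * qf A z (ξ - z) ∧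
      alphaOpR A (fun ξ => Θ (s * qf A z (ξ - z))) ξ =
        deriv Θ (s * qf A z (ξ - z)) * (s * (n + e1)) +
        deriv (deriv Θ) (s * qf A z (ξ - z)) * (s ^ 2 * (qf A z (ξ - z) + e2))

lemma exists_QD (A : AlphaForm n) (R : ℝ) : ∃ C, QD A R C := by
  obtain ⟨C, h1, h2, h3, h4, h5⟩ := qf_data A R
  exact ⟨C, h1, h2, h3, h4, h5⟩

/-- scaled argument -/
noncomputable def sq (A : AlphaForm n) (z : Cn n) (r : ℝ) (ξ : Cn n) : ℝ :=
  (r ^ 2)⁻¹ * qf A z (ξ - z)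
noncomputable def KK (A : AlphaForm n) (z : Cn n) (r : ℝ) (ξ : Cn n) : ℝ := kap (sq A z r ξ)
noncomputable def QQ (A : AlphaForm n) (z : Cn n) (r : ℝ) (ξ : Cn n) : ℝ :=
  -deriv kap (sq A z r ξ) * sq A z r ξ
noncomputable def GG (A : AlphaForm n) (z : Cn n) (r : ℝ) (ξ : Cn n) : ℝ := HH (sq A z r ξ)

lemma sq_smooth (A : AlphaForm n) (z : Cn n) (r : ℝ) : ContDiff ℝ (⊤ : ℕ∞) (sq A z r) :=
  quad_contDiff (Bz A z) z _

lemma sq_cont (A : AlphaForm n) (z : Cn n) (r : ℝ) : Continuous (sq A z r) :=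
  (sq_smooth A z r).continuous

lemma KK_cont (A : AlphaForm n) (z : Cn n) (r : ℝ) : Continuous (KK A z r) :=
  kap_smooth.continuous.comp (sq_cont A z r)
lemma QQ_cont (A : AlphaForm n) (z : Cn n) (r : ℝ) : Continuous (QQ A z r) :=
  (kap_deriv_cont.comp (sq_cont A z r)).neg.mul (sq_cont A z r)
lemma GG_smooth (A : AlphaForm n) (z : Cn n) (r : ℝ) : ContDiff ℝ (⊤ : ℕ∞) (GG A z r) :=
  HH_smooth.comp (sq_smooth A z r)

lemma qf_nonneg (A : AlphaForm n) (z x : Cn n) : 0 ≤ qf A z x := by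
  by_cases hx : x = 0
  · simp [qf, hx]
  · exact (Bz_pos A z x hx).le

lemma sq_nonneg' (A : AlphaForm n) (z : Cn n) (r : ℝ) (ξ : Cn n) : 0 ≤ sq A z r ξ :=
  mul_nonneg (by positivity) (qf_nonneg _ _ _)

lemma KK_nonneg (A : AlphaForm n) (z : Cn n) (r : ℝ) (ξ : Cn n) : 0 ≤ KK A z r ξ := kap_nonneg _
lemma KK_le_one (A : AlphaForm n) (z : Cn n) (r : ℝ) (ξ : Cn n) : KK A z r ξ ≤ 1 := kap_le_one _
lemma QQ_nonneg (A : AlphaForm n) (z : Cn n) (r : ℝ) (ξ : Cn n) : 0 ≤ QQ A z r ξ :=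
  mul_nonneg (by have := kap_deriv_nonpos (sq A z r ξ); linarith) (sq_nonneg' _ _ _ _)

variable {A : AlphaForm n} {R C : ℝ}

lemma one_le_sq (h : QD A R C) {z : Cn n} (hz : z ∈ closedBall 0 R) {r : ℝ} (hr : 0 < r) {ξ : Cn n}
    (hξ : ξ ∉ closedBall z (C * r)) : 1 ≤ sq A z r ξ := by
  rw [mem_closedBall, dist_eq_norm, not_le] at hξ
  have h1 := h.lower z hz (ξ - z)
  have hC := h.one
  have h2 : (C * r) ^ 2 ≤ ‖ξ - z‖ ^ 2 := by gcongr
  rw [sq, ← div_eq_inv_mul, le_div_iff₀ (by positivity), one_mul]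
  have h3 : C * r ^ 2 ≤ C * qf A z (ξ - z) := by
    refine le_trans ?_ (h2.trans h1)
    rw [mul_pow]
    have : C ≤ C ^ 2 := by nlinarith
    gcongr
  exact le_of_mul_le_mul_left h3 (by linarith)

lemma supp_of_one_le (h : QD A R C) {z : Cn n} (hz : z ∈ closedBall 0 R) {r : ℝ} (hr : 0 < r)
    {Θ : ℝ → ℝ} (hΘ : ∀ t, 1 ≤ t → Θ t = 0) :
    tsupport (fun ξ => Θ (sq A z r ξ)) ⊆ closedBall z (C * r) := by
  refine closure_minimal (fun ξ hξ => ?_) isClosed_closedBall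
  by_contra hc
  exact hξ (hΘ _ (one_le_sq h hz hr hc))

lemma KK_supp (h : QD A R C) {z : Cn n} (hz : z ∈ closedBall 0 R) {r : ℝ} (hr : 0 < r) :
    tsupport (KK A z r) ⊆ closedBall z (C * r) :=
  supp_of_one_le h hz hr (Θ := kap) fun _ ht => kap_zero ht
lemma QQ_supp (h : QD A R C) {z : Cn n} (hz : z ∈ closedBall 0 R) {r : ℝ} (hr : 0 < r) :
    tsupport (QQ A z r) ⊆ closedBall z (C * r) :=
  supp_of_one_le h hz hr (Θ := fun t => -deriv kap t * t) fun _ ht => by simp [kap_deriv_zero ht]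
lemma GG_supp (h : QD A R C) {z : Cn n} (hz : z ∈ closedBall 0 R) {r : ℝ} (hr : 0 < r) :
    tsupport (GG A z r) ⊆ closedBall z (C * r) :=
  supp_of_one_le h hz hr (Θ := HH) fun _ ht => HH_zero ht

lemma hcs_of {g : Cn n → ℝ} {z : Cn n} {ρ : ℝ} (h : tsupport g ⊆ closedBall z ρ) :
    HasCompactSupport g := (isCompact_closedBall z ρ).of_isClosed_subset (isClosed_tsupport g) h

lemma LGG_est (h : QD A R C) {z : Cn n} (hz : z ∈ closedBall 0 R) {r : ℝ} (hr : 0 < r)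
    (hsub : closedBall z (C * r) ⊆ closedBall 0 R) (ξ : Cn n) :
    |r ^ 2 * alphaOpR A (GG A z r) ξ - (QQ A z r ξ - n * KK A z r ξ)|
      ≤ C ^ 2 * r * (KK A z r ξ + QQ A z r ξ) := by
  have hC := h.one
  by_cases hξ : ξ ∈ closedBall z (C * r)
  · obtain ⟨e1, e2, h1, h2, h3⟩ := h.L z hz ξ (hsub hξ) ((r ^ 2)⁻¹) HH (two_of_smooth HH_smooth)
    have h3' : alphaOpR A (GG A z r) ξ = _ := h3
    rw [HH_deriv2, HH_deriv] at h3'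
    rw [mem_closedBall, dist_eq_norm] at hξ
    have hr2 : r ^ 2 * (r ^ 2)⁻¹ = 1 := mul_inv_cancel₀ (by positivity)
    have e : r ^ 2 * alphaOpR A (GG A z r) ξ - (QQ A z r ξ - n * KK A z r ξ)
        = -(KK A z r ξ * e1) + (-deriv kap (sq A z r ξ)) * ((r ^ 2)⁻¹ * e2) := by
      rw [h3', QQ, KK, sq]
      linear_combination (-kap ((r ^ 2)⁻¹ * qf A z (ξ - z)) * (n + e1)
        - deriv kap ((r ^ 2)⁻¹ * qf A z (ξ - z)) * (r ^ 2)⁻¹ * (qf A z (ξ - z) + e2)) * hr2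
    rw [e]
    have hk := KK_nonneg A z r ξ
    have hd : 0 ≤ -deriv kap (sq A z r ξ) := by linarith [kap_deriv_nonpos (sq A z r ξ)]
    have hc : C * ‖ξ - z‖ ≤ C ^ 2 * r := by nlinarith
    have a1 : |KK A z r ξ * e1| ≤ C ^ 2 * r * KK A z r ξ := by
      rw [abs_mul, abs_of_nonneg hk, mul_comm]
      exact mul_le_mul_of_nonneg_right (h1.trans hc) hk
    have a2 : |(-deriv kap (sq A z r ξ)) * ((r ^ 2)⁻¹ * e2)| ≤ C ^ 2 * r * QQ A z r ξ := by
      rw [abs_mul, abs_of_nonneg hd, abs_mul, abs_of_nonneg (by positivity : 0 ≤ (r ^ 2)⁻¹)]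
      have : |e2| ≤ C ^ 2 * r * qf A z (ξ - z) :=
        h2.trans (mul_le_mul_of_nonneg_right hc (qf_nonneg _ _ _))
      calc _ ≤ -deriv kap (sq A z r ξ) * ((r ^ 2)⁻¹ * (C ^ 2 * r * qf A z (ξ - z))) := by gcongr
        _ = _ := by rw [QQ, sq]; ring
    calc _ ≤ |-(KK A z r ξ * e1)| + _ := abs_add_le _ _
      _ ≤ C ^ 2 * r * KK A z r ξ + C ^ 2 * r * QQ A z r ξ := by rw [abs_neg]; exact add_le_add a1 a2
      _ = _ := by ring
  · have h1 : KK A z r ξ = 0 := image_eq_zero_of_notMem_tsupport fun hh => hξ (KK_supp h hz hr hh)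
    have h2 : QQ A z r ξ = 0 := image_eq_zero_of_notMem_tsupport fun hh => hξ (QQ_supp h hz hr hh)
    have h3 : alphaOpR A (GG A z r) ξ = 0 := image_eq_zero_of_notMem_tsupport fun hh =>
      hξ (GG_supp h hz hr (tsupport_alphaOpR A (two_of_smooth (GG_smooth A z r)) hh))
    rw [h1, h2, h3]; simp

end AH


open MeasureTheory Filter Topology Complex Metric

namespace AH
variable {n : ℕ}

structure FD (A : AlphaForm n) (D : Set (Cn n)) (f : Cn n → ℝ) (F : ℝ) : Prop where
  loc : LocallyIntegrableOn f D volume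
  nonneg : ∀ z, 0 ≤ f z
  F0 : 0 ≤ F
  up : ∀ φ, IsTest D φ → (∀ z, 0 ≤ φ z) → ∫ z, f z * alphaOpR A φ z ≤ 0
  lo : ∀ φ, IsTest D φ → (∀ z, 0 ≤ φ z) → -(F * ∫ z, φ z) ≤ ∫ z, f z * alphaOpR A φ z

noncomputable def JJ (A : AlphaForm n) (f : Cn n → ℝ) (z : Cn n) (r : ℝ) : ℝ :=
  ∫ ξ, f ξ * KK A z r ξ
noncomputable def PP (A : AlphaForm n) (f : Cn n → ℝ) (z : Cn n) (r : ℝ) : ℝ :=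
  ∫ ξ, f ξ * QQ A z r ξ

noncomputable def Vn (n : ℕ) : ℝ := volume.real (ball (0 : Cn n) 1)

lemma Vn_nonneg (n : ℕ) : 0 ≤ Vn n := measureReal_nonneg

lemma Vn_pos (n : ℕ) : 0 < Vn n :=
  ENNReal.toReal_pos (isOpen_ball.measure_pos volume ⟨0, mem_ball_self one_pos⟩).ne'
    measure_ball_lt_top.ne

lemma finrank_Cn (n : ℕ) : Module.finrank ℝ (Cn n) = 2 * n := by
  rw [Module.finrank_pi_fintype]
  simp [Complex.finrank_real_complex, mul_comm]

lemma vol_closedBall (z : Cn n) {ρ : ℝ} (hρ : 0 ≤ ρ) :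
    volume.real (closedBall z ρ) = ρ ^ (2 * n) * Vn n := by
  rw [Measure.addHaar_real_closedBall _ _ hρ, finrank_Cn, Vn]

variable {A : AlphaForm n} {R C F : ℝ} {D : Set (Cn n)} {f : Cn n → ℝ}

lemma int_GG_le (h : QD A R C) {z : Cn n} (hz : z ∈ closedBall 0 R) {r : ℝ} (hr : 0 < r) :
    ∫ ξ, GG A z r ξ ≤ (C * r) ^ (2 * n) * Vn n := by
  have hC := h.one
  rw [← vol_closedBall z (by positivity), ← integral_indicator_one measurableSet_closedBall]
  refine integral_mono ((GG_smooth A z r).continuous.integrable_of_hasCompactSupport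
    (hcs_of (GG_supp h hz hr))) ?_ fun ξ => ?_
  · exact (integrable_indicator_iff measurableSet_closedBall).2
      ((integrableOn_const (measure_closedBall_lt_top.ne)))
  · by_cases hξ : ξ ∈ closedBall z (C * r)
    · simp only [Set.indicator_of_mem hξ, Pi.one_apply]
      exact HH_le_one (sq_nonneg' _ _ _ _)
    · simp only [Set.indicator_of_notMem hξ]
      exact (image_eq_zero_of_notMem_tsupport fun hh => hξ (GG_supp h hz hr hh)).le

lemma fK_int (hf : LocallyIntegrableOn f D volume) (h : QD A R C) {z : Cn n} (hz : z ∈ closedBall 0 R)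
    {r : ℝ} (hr : 0 < r) (hsub : closedBall z (C * r) ⊆ D) :
    Integrable fun ξ => f ξ * KK A z r ξ :=
  integrable_mul_cpt hf (KK_cont A z r) (hcs_of (KK_supp h hz hr)) ((KK_supp h hz hr).trans hsub)

lemma fQ_int (hf : LocallyIntegrableOn f D volume) (h : QD A R C) {z : Cn n} (hz : z ∈ closedBall 0 R)
    {r : ℝ} (hr : 0 < r) (hsub : closedBall z (C * r) ⊆ D) :
    Integrable fun ξ => f ξ * QQ A z r ξ :=
  integrable_mul_cpt hf (QQ_cont A z r) (hcs_of (QQ_supp h hz hr)) ((QQ_supp h hz hr).trans hsub)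

lemma JJ_nonneg (hf : ∀ z, 0 ≤ f z) (z : Cn n) (r : ℝ) : 0 ≤ JJ A f z r :=
  integral_nonneg fun ξ => mul_nonneg (hf ξ) (KK_nonneg _ _ _ _)
lemma PP_nonneg (hf : ∀ z, 0 ≤ f z) (z : Cn n) (r : ℝ) : 0 ≤ PP A f z r :=
  integral_nonneg fun ξ => mul_nonneg (hf ξ) (QQ_nonneg _ _ _ _)

lemma PJ_est0 (h : QD A R C) (hf : FD A D f F) (hDR : D ⊆ closedBall 0 R) {z : Cn n} (hz : z ∈ D)
    {r : ℝ} (hr : 0 < r) (hsub : closedBall z (C * r) ⊆ D) :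
    PP A f z r - n * JJ A f z r ≤ C ^ 2 * r * (JJ A f z r + PP A f z r) ∧
    -(C ^ 2 * r * (JJ A f z r + PP A f z r)) - F * r ^ 2 * ((C * r) ^ (2 * n) * Vn n) ≤
      PP A f z r - n * JJ A f z r := by
  have hC := h.one
  have hzR := hDR hz
  have ht : IsTest D (GG A z r) := ⟨GG_smooth A z r, hcs_of (GG_supp h hzR hr),
    (GG_supp h hzR hr).trans hsub⟩
  have hu := hf.up _ ht fun ξ => HH_nonneg _
  have hl := hf.lo _ ht fun ξ => HH_nonneg _
  have iK := fK_int hf.loc h hzR hr hsub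
  have iQ := fQ_int hf.loc h hzR hr hsub
  have iL : Integrable fun ξ => f ξ * alphaOpR A (GG A z r) ξ :=
    integrable_mul_cpt hf.loc (ht.L_cont A) (ht.L_cpt A) (ht.L_supp A)
  have iKn : Integrable fun ξ => (n : ℝ) * (f ξ * KK A z r ξ) := iK.const_mul _
  have iQK : Integrable fun ξ => f ξ * QQ A z r ξ - n * (f ξ * KK A z r ξ) := iQ.sub iKn
  have iLr : Integrable fun ξ => r ^ 2 * (f ξ * alphaOpR A (GG A z r) ξ) := iL.const_mul _
  have iall : Integrable fun ξ => r ^ 2 * (f ξ * alphaOpR A (GG A z r) ξ)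
      - (f ξ * QQ A z r ξ - n * (f ξ * KK A z r ξ)) := iLr.sub iQK
  have isum : Integrable fun ξ => C ^ 2 * r * (f ξ * KK A z r ξ + f ξ * QQ A z r ξ) :=
    (iK.add iQ).const_mul _
  have key : |r ^ 2 * (∫ ξ, f ξ * alphaOpR A (GG A z r) ξ) - (PP A f z r - n * JJ A f z r)|
      ≤ C ^ 2 * r * (JJ A f z r + PP A f z r) := by
    have e1 : r ^ 2 * (∫ ξ, f ξ * alphaOpR A (GG A z r) ξ) - (PP A f z r - n * JJ A f z r)
        = ∫ ξ, (r ^ 2 * (f ξ * alphaOpR A (GG A z r) ξ) - (f ξ * QQ A z r ξ - n * (f ξ * KK A z r ξ))) := by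
      rw [integral_sub iLr iQK, integral_sub iQ iKn,
        integral_const_mul, integral_const_mul]
      rfl
    have e2 : C ^ 2 * r * (JJ A f z r + PP A f z r)
        = ∫ ξ, C ^ 2 * r * (f ξ * KK A z r ξ + f ξ * QQ A z r ξ) := by
      rw [integral_const_mul, integral_add iK iQ]; rfl
    rw [e1, e2]
    refine (norm_integral_le_integral_norm _).trans (integral_mono
      iall.norm isum fun ξ => ?_)
    have h1 := LGG_est h hzR hr (hsub.trans hDR) ξ
    have h2 := hf.nonneg ξ
    have e3 : r ^ 2 * (f ξ * alphaOpR A (GG A z r) ξ) - (f ξ * QQ A z r ξ - n * (f ξ * KK A z r ξ))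
        = f ξ * (r ^ 2 * alphaOpR A (GG A z r) ξ - (QQ A z r ξ - n * KK A z r ξ)) := by ring
    beta_reduce
    rw [e3, norm_mul, Real.norm_of_nonneg h2, Real.norm_eq_abs]
    refine (mul_le_mul_of_nonneg_left h1 h2).trans (le_of_eq ?_)
    ring
  rw [abs_le] at key
  have hr2 : 0 ≤ r ^ 2 := by positivity
  constructor
  · nlinarith [mul_nonpos_of_nonneg_of_nonpos hr2 hu]
  · have h3 := int_GG_le h hzR hr
    have h4 := mul_le_mul_of_nonneg_left hl hr2
    have h5 := mul_le_mul_of_nonneg_left h3 (mul_nonneg hf.F0 hr2)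
    nlinarith

/-- clean differential inequalities -/
lemma PJ_est (h : QD A R C) (hf : FD A D f F) (hDR : D ⊆ closedBall 0 R) {z : Cn n} (hz : z ∈ D)
    {r : ℝ} (hr : 0 < r) (hsub : closedBall z (C * r) ⊆ D) (hr1 : C ^ 2 * r ≤ 1 / 2) :
    PP A f z r - n * JJ A f z r ≤ (2 * n + 2) * C ^ 2 * r * JJ A f z r ∧
    -((2 * n + 2) * C ^ 2 * r * JJ A f z r) - F * (C ^ (2 * n) * Vn n) * r ^ (2 * n + 2) ≤
      PP A f z r - n * JJ A f z r := by
  obtain ⟨h1, h2⟩ := PJ_est0 h hf hDR hz hr hsub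
  have hC := h.one
  have hJ := JJ_nonneg (A := A) hf.nonneg z r
  have hP := PP_nonneg (A := A) hf.nonneg z r
  set J := JJ A f z r
  set P := PP A f z r
  have h3 : P ≤ (2 * n + 1) * J := by
    have := mul_le_mul_of_nonneg_right hr1 (add_nonneg hJ hP)
    linarith
  have h4 : C ^ 2 * r * (J + P) ≤ (2 * n + 2) * C ^ 2 * r * J := by
    have : C ^ 2 * r * (J + P) ≤ C ^ 2 * r * ((2 * n + 2) * J) := by
      gcongr; linarith
    linarith
  refine ⟨h1.trans h4, ?_⟩
  have h5 : F * r ^ 2 * ((C * r) ^ (2 * n) * Vn n) = F * (C ^ (2 * n) * Vn n) * r ^ (2 * n + 2) := by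
    rw [mul_pow]; ring
  linarith

lemma QQ_le {M : ℝ} (hM : ∀ t, |deriv kap t| ≤ M) (z : Cn n) (r : ℝ) (ξ : Cn n) : QQ A z r ξ ≤ M := by
  have h1 := hM (sq A z r ξ)
  have h0 : 0 ≤ M := (abs_nonneg _).trans h1
  by_cases h : 1 ≤ sq A z r ξ
  · rw [QQ, kap_deriv_zero h]; simpa using h0
  · push Not at h
    rw [QQ]
    have h2 := sq_nonneg' A z r ξ
    have h3 := kap_deriv_nonpos (sq A z r ξ)
    rw [abs_of_nonpos h3] at h1
    nlinarith

lemma KK_hasDeriv (z : Cn n) {r : ℝ} (hr : 0 < r) (ξ : Cn n) :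
    HasDerivAt (fun r => KK A z r ξ) (2 / r * QQ A z r ξ) r := by
  have h1 : HasDerivAt (fun r : ℝ => sq A z r ξ) (-(2 * r) / (r ^ 2) ^ 2 * qf A z (ξ - z)) r := by
    have := ((hasDerivAt_pow 2 r).inv (by positivity)).mul_const (qf A z (ξ - z))
    refine HasDerivAt.congr_deriv (f := fun r : ℝ => sq A z r ξ) this ?_
    norm_num
  have h2 := (kap_diff (sq A z r ξ)).hasDerivAt.comp r h1
  refine h2.congr_deriv ?_
  rw [QQ, sq]
  field_simp

lemma JJ_hasDeriv (hf : LocallyIntegrableOn f D volume) (hf0 : ∀ z, 0 ≤ f z)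
    (h : QD A R C) (hDR : D ⊆ closedBall 0 R) {z : Cn n} (hz : z ∈ D)
    {r r1 : ℝ} (hr : 0 < r) (hrr : r < r1) (hsub : closedBall z (C * r1) ⊆ D) :
    HasDerivAt (JJ A f z) (2 / r * PP A f z r) r := by
  have hC := h.one
  have hzR := hDR hz
  obtain ⟨M, hM1, hM, -⟩ := exists_kap_bound
  have hs : ∀ r' < r1, closedBall z (C * r') ⊆ D := fun r' hr' =>
    (closedBall_subset_closedBall (by gcongr)).trans hsub
  have hIntg : IntegrableOn f (closedBall z (C * r1)) volume :=
    (hf.mono_set hsub).integrableOn_isCompact (isCompact_closedBall _ _)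
  have key := hasDerivAt_integral_of_dominated_loc_of_deriv_le (μ := (volume : Measure (Cn n)))
    (F := fun r ξ => f ξ * KK A z r ξ)
    (F' := fun r ξ => f ξ * (2 / r * QQ A z r ξ)) (x₀ := r) (s := Set.Ioo (r / 2) r1)
    (bound := fun ξ => (4 / r * M) * (closedBall z (C * r1)).indicator f ξ)
    (Ioo_mem_nhds (by linarith) hrr) ?_ (fK_int hf h hzR hr (hs r hrr)) ?_ ?_ ?_ ?_
  · have := key.2
    have e : ∫ ξ, f ξ * (2 / r * QQ A z r ξ) = 2 / r * PP A f z r := by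
      rw [PP, ← integral_const_mul]
      congr 1; ext ξ; ring
    rw [e] at this
    exact this
  · filter_upwards [Ioo_mem_nhds (by linarith : r / 2 < r) hrr] with r' hr'
    exact (fK_int hf h hzR (by linarith [hr'.1]) (hs r' hr'.2)).aestronglyMeasurable
  · have := ((fQ_int hf h hzR hr (hs r hrr)).const_mul (2 / r)).aestronglyMeasurable
    refine this.congr (Eventually.of_forall fun ξ => ?_)
    beta_reduce; ring
  · refine Eventually.of_forall fun ξ r' hr' => ?_
    have hr'0 : 0 < r' := by linarith [hr'.1]
    by_cases hξ : ξ ∈ closedBall z (C * r1)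
    · rw [Set.indicator_of_mem hξ, norm_mul, Real.norm_of_nonneg (hf0 ξ),
        Real.norm_of_nonneg (mul_nonneg (by positivity) (QQ_nonneg _ _ _ _)), mul_comm]
      have h1 := QQ_le hM (A := A) z r' ξ
      have h2 : 2 / r' ≤ 4 / r := by
        rw [div_le_div_iff₀ hr'0 hr]; linarith [hr'.1]
      exact mul_le_mul_of_nonneg_right
        (mul_le_mul h2 h1 (QQ_nonneg _ _ _ _) (by positivity)) (hf0 ξ)
    · rw [Set.indicator_of_notMem hξ]
      have : QQ A z r' ξ = 0 := image_eq_zero_of_notMem_tsupport fun hh => hξ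
        (closedBall_subset_closedBall (by gcongr; exact hr'.2.le) (QQ_supp h hzR hr'0 hh))
      rw [this]; simp
  · exact ((integrable_indicator_iff measurableSet_closedBall).2 hIntg).const_mul _
  · refine Eventually.of_forall fun ξ r' hr' => ?_
    exact (KK_hasDeriv z (by linarith [hr'.1]) ξ).const_mul (f ξ)

end AH


open MeasureTheory Filter Topology Complex Metric

namespace AH
variable {n : ℕ}

lemma ode_limit {J P : ℝ → ℝ} {a r1 G : ℝ} (n : ℕ) (ha : 0 ≤ a) (hG : 0 ≤ G) (hr1 : 0 < r1)
    (hr11 : r1 ≤ 1) (hd : ∀ r ∈ Set.Ioo 0 r1, HasDerivAt J (2 / r * P r) r)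
    (hJ : ∀ r, 0 ≤ J r)
    (hu : ∀ r ∈ Set.Ioo 0 r1, P r - n * J r ≤ a * r * J r)
    (hl : ∀ r ∈ Set.Ioo 0 r1, -(a * r * J r) - G * r ^ (2 * n + 2) ≤ P r - n * J r) :
    ∃ ℓ, 0 ≤ ℓ ∧ Tendsto (fun r => J r / r ^ (2 * n)) (𝓝[>] 0) (𝓝 ℓ) ∧
      ∀ r ∈ Set.Ioo 0 r1, J r / r ^ (2 * n) ≤ Real.exp (2 * a * r) * ℓ ∧
        ℓ ≤ Real.exp (2 * a * r) * (J r / r ^ (2 * n)) + G * Real.exp (2 * a) * r ^ 2 := by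
  set I : ℝ → ℝ := fun r => J r / r ^ (2 * n) with hI
  have hI0 : ∀ r ∈ Set.Ioo 0 r1, 0 ≤ I r := fun r hr => div_nonneg (hJ r) (pow_nonneg hr.1.le _)
  have hId : ∀ r ∈ Set.Ioo 0 r1, HasDerivAt I (2 / r * (P r - n * J r) / r ^ (2 * n)) r := by
    intro r hr
    have hr0 : 0 < r := hr.1
    refine ((hd r hr).div (hasDerivAt_pow (2 * n) r) (by positivity)).congr_deriv ?_
    rcases Nat.eq_zero_or_pos n with h0 | h0
    · subst h0; simp
    · have : r ^ (2 * n) = r ^ (2 * n - 1) * r := by rw [← pow_succ]; congr 1; omega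
      rw [this]
      push_cast
      field_simp
  have h2a : ∀ r, HasDerivAt (fun r : ℝ => Real.exp (2 * a * r)) (Real.exp (2 * a * r) * (2 * a)) r := by
    intro r
    have := (((hasDerivAt_id r).const_mul (2 * a))).exp
    simpa using this
  have h2a' : ∀ r, HasDerivAt (fun r : ℝ => Real.exp (-(2 * a * r))) (Real.exp (-(2 * a * r)) * (-(2 * a))) r := by
    intro r
    have := (((hasDerivAt_id r).const_mul (2 * a))).neg.exp
    simpa using this
  have hud : ∀ r ∈ Set.Ioo 0 r1, HasDerivAt (fun r => Real.exp (-(2 * a * r)) * I r)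
      (Real.exp (-(2 * a * r)) * (-(2 * a)) * I r +
        Real.exp (-(2 * a * r)) * (2 / r * (P r - n * J r) / r ^ (2 * n))) r := fun r hr =>
    (h2a' r).mul (hId r hr)
  have hvd : ∀ r ∈ Set.Ioo 0 r1, HasDerivAt (fun r => Real.exp (2 * a * r) * I r
      + G * Real.exp (2 * a) * r ^ 2)
      (Real.exp (2 * a * r) * (2 * a) * I r +
        Real.exp (2 * a * r) * (2 / r * (P r - n * J r) / r ^ (2 * n))
        + G * Real.exp (2 * a) * (2 * r)) r := fun r hr => by
    have := ((h2a r).mul (hId r hr)).add ((hasDerivAt_pow 2 r).const_mul (G * Real.exp (2 * a)))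
    exact this.congr_deriv (by simp)
  have hanti : AntitoneOn (fun r => Real.exp (-(2 * a * r)) * I r) (Set.Ioo 0 r1) := by
    refine antitoneOn_of_deriv_nonpos (convex_Ioo _ _)
      (fun r hr => (hud r hr).continuousAt.continuousWithinAt) ?_ ?_
    · rw [interior_Ioo]; exact fun r hr => (hud r hr).differentiableAt.differentiableWithinAt
    · rw [interior_Ioo]; intro r hr
      rw [(hud r hr).deriv]
      have hr0 : 0 < r := hr.1
      have h1 : 2 / r * (P r - n * J r) / r ^ (2 * n) ≤ 2 * a * I r := by
        have : 2 / r * (P r - n * J r) ≤ 2 / r * (a * r * J r) :=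
          mul_le_mul_of_nonneg_left (hu r hr) (by positivity)
        calc _ ≤ 2 / r * (a * r * J r) / r ^ (2 * n) := by gcongr
          _ = _ := by rw [hI]; field_simp
      nlinarith [mul_le_mul_of_nonneg_left h1 (Real.exp_pos (-(2 * a * r))).le]
  have hmono : MonotoneOn (fun r => Real.exp (2 * a * r) * I r
      + G * Real.exp (2 * a) * r ^ 2) (Set.Ioo 0 r1) := by
    refine monotoneOn_of_deriv_nonneg (convex_Ioo _ _)
      (fun r hr => (hvd r hr).continuousAt.continuousWithinAt) ?_ ?_
    · rw [interior_Ioo]; exact fun r hr => (hvd r hr).differentiableAt.differentiableWithinAt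
    · rw [interior_Ioo]; intro r hr
      rw [(hvd r hr).deriv]
      have hr0 : 0 < r := hr.1
      have h1 : -(2 * a * I r) - 2 * G * r ≤ 2 / r * (P r - n * J r) / r ^ (2 * n) := by
        have : 2 / r * (-(a * r * J r) - G * r ^ (2 * n + 2)) ≤ 2 / r * (P r - n * J r) :=
          mul_le_mul_of_nonneg_left (hl r hr) (by positivity)
        calc _ = 2 / r * (-(a * r * J r) - G * r ^ (2 * n + 2)) / r ^ (2 * n) := by
              rw [hI, pow_add]; field_simp
          _ ≤ _ := by gcongr
      have h2 := mul_le_mul_of_nonneg_left h1 (Real.exp_pos (2 * a * r)).le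
      have h3 : Real.exp (2 * a * r) ≤ Real.exp (2 * a) := by
        rw [Real.exp_le_exp]
        have := hr.2
        nlinarith
      have h4 : Real.exp (2 * a * r) * (2 * G * r) ≤ Real.exp (2 * a) * (2 * G * r) :=
        mul_le_mul_of_nonneg_right h3 (by positivity)
      nlinarith
  have hbd : BddBelow ((fun r => Real.exp (2 * a * r) * I r
      + G * Real.exp (2 * a) * r ^ 2) '' Set.Ioo 0 r1) := by
    refine ⟨0, ?_⟩
    rintro _ ⟨r, hr, rfl⟩
    have := hI0 r hr
    positivity
  have ht := hmono.tendsto_nhdsWithin_Ioo_right (Set.nonempty_Ioo.2 hr1) hbd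
  set ℓ := sInf ((fun r => Real.exp (2 * a * r) * I r
      + G * Real.exp (2 * a) * r ^ 2) '' Set.Ioo 0 r1) with hℓ
  have hmem : ∀ᶠ r in 𝓝[>] (0 : ℝ), r ∈ Set.Ioo 0 r1 := Ioo_mem_nhdsGT hr1
  have htI : Tendsto I (𝓝[>] 0) (𝓝 ℓ) := by
    have c1 : Tendsto (fun r : ℝ => Real.exp (-(2 * a * r))) (𝓝[>] 0) (𝓝 1) := by
      have : Tendsto (fun r : ℝ => Real.exp (-(2 * a * r))) (𝓝 0) (𝓝 (Real.exp (-(2 * a * 0)))) :=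
        (by fun_prop : Continuous fun r : ℝ => Real.exp (-(2 * a * r))).tendsto 0
      simp at this
      simpa using this.mono_left nhdsWithin_le_nhds
    have c2 : Tendsto (fun r : ℝ => G * Real.exp (2 * a) * r ^ 2) (𝓝[>] 0) (𝓝 0) := by
      have : Tendsto (fun r : ℝ => G * Real.exp (2 * a) * r ^ 2) (𝓝 0) (𝓝 (G * Real.exp (2 * a) * 0 ^ 2)) :=
        (by fun_prop : Continuous fun r : ℝ => G * Real.exp (2 * a) * r ^ 2).tendsto 0
      simp only [ne_eq, OfNat.ofNat_ne_zero, not_false_eq_true, zero_pow, mul_zero] at this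
      exact this.mono_left nhdsWithin_le_nhds
    have := c1.mul (ht.sub c2)
    simp only [sub_zero, one_mul] at this
    refine this.congr fun r => ?_
    rw [add_sub_cancel_right, ← mul_assoc, ← Real.exp_add]; simp
  have hu' : Tendsto (fun r => Real.exp (-(2 * a * r)) * I r) (𝓝[>] 0) (𝓝 ℓ) := by
    have c1 : Tendsto (fun r : ℝ => Real.exp (-(2 * a * r))) (𝓝[>] 0) (𝓝 1) := by
      have : Tendsto (fun r : ℝ => Real.exp (-(2 * a * r))) (𝓝 0) (𝓝 (Real.exp (-(2 * a * 0)))) :=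
        (by fun_prop : Continuous fun r : ℝ => Real.exp (-(2 * a * r))).tendsto 0
      simp at this
      simpa using this.mono_left nhdsWithin_le_nhds
    simpa using c1.mul htI
  refine ⟨ℓ, ge_of_tendsto htI (hmem.mono fun r hr => hI0 r hr), htI, fun r hr => ⟨?_, ?_⟩⟩
  · have : Real.exp (-(2 * a * r)) * I r ≤ ℓ := by
      refine ge_of_tendsto hu' ?_
      filter_upwards [Ioo_mem_nhdsGT hr.1] with s hs
      exact hanti ⟨hs.1, hs.2.trans hr.2⟩ hr hs.2.le
    have h2 := mul_le_mul_of_nonneg_left this (Real.exp_pos (2 * a * r)).le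
    rwa [← mul_assoc, ← Real.exp_add, add_neg_cancel, Real.exp_zero, one_mul] at h2
  · exact csInf_le hbd ⟨r, hr, rfl⟩

end AH


open MeasureTheory Filter Topology Complex Metric

namespace AH
variable {n : ℕ} {A : AlphaForm n} {R C F : ℝ} {D : Set (Cn n)} {f : Cn n → ℝ}

lemma KK_diff (h : QD A R C) {M : ℝ} (hM0 : 1 ≤ M) (hM : ∀ s t, |kap s - kap t| ≤ M * |s - t|)
    {z w : Cn n} (hz : z ∈ closedBall 0 R) (hw : w ∈ closedBall 0 R) {r : ℝ} (hr : 0 < r) (hr1 : r ≤ 1)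
    (hδ : ‖z - w‖ ≤ r) (ξ : Cn n) :
    |KK A w r ξ - KK A z r ξ| ≤ M * (C * (C + 2) ^ 2 + C * (2 * C + 3)) * (‖z - w‖ / r)
      * KK A z (2 * C * (C + 1) * r) ξ := by
  have hC := h.one
  set δ := ‖z - w‖ with hδd
  have hδ0 : 0 ≤ δ := norm_nonneg _
  by_cases hξ : ‖ξ - z‖ ≤ (C + 1) * r
  · have hw' : ‖ξ - w‖ ≤ (C + 2) * r := by
      have : ξ - w = (ξ - z) + (z - w) := by abel
      rw [this]
      refine (norm_add_le _ _).trans ?_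
      linarith
    have h1 : KK A z (2 * C * (C + 1) * r) ξ = 1 := by
      apply kap_one
      rw [sq, ← div_eq_inv_mul, div_le_iff₀ (by positivity)]
      refine (h.upper z hz (ξ - z)).trans ?_
      calc C * ‖ξ - z‖ ^ 2 ≤ C * ((C + 1) * r) ^ 2 := by gcongr
        _ = C * ((C + 1) ^ 2 * r ^ 2) := by ring
        _ ≤ (2 * C ^ 2) * ((C + 1) ^ 2 * r ^ 2) := by gcongr; nlinarith
        _ = _ := by ring
    rw [h1, mul_one]
    refine (hM _ _).trans ?_
    rw [mul_assoc]
    refine mul_le_mul_of_nonneg_left ?_ (by linarith)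
    rw [sq, sq, ← mul_sub, abs_mul, abs_of_nonneg (by positivity : 0 ≤ (r ^ 2)⁻¹)]
    have h2 := h.diff z hz w hw (ξ - z) (ξ - w)
    have h3 : ‖ξ - z - (ξ - w)‖ = δ := by
      rw [sub_sub_sub_cancel_left, norm_sub_rev]
    rw [h3] at h2
    have h4 : C * δ * ‖ξ - w‖ ^ 2 + C * δ * (‖ξ - z‖ + ‖ξ - w‖)
        ≤ r * δ * (C * (C + 2) ^ 2 + C * (2 * C + 3)) := by
      have a1 : C * δ * ‖ξ - w‖ ^ 2 ≤ C * δ * ((C + 2) * r) ^ 2 := by gcongr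
      have a2 : C * δ * (‖ξ - z‖ + ‖ξ - w‖) ≤ C * δ * ((C + 1) * r + (C + 2) * r) := by gcongr
      have a3 : C * δ * ((C + 2) * r) ^ 2 ≤ C * δ * ((C + 2) ^ 2 * r) := by
        rw [mul_pow]
        have : r ^ 2 ≤ r := by nlinarith
        gcongr
      linarith
    calc _ ≤ (r ^ 2)⁻¹ * (r * δ * (C * (C + 2) ^ 2 + C * (2 * C + 3))) := by
          gcongr; exact h2.trans h4
      _ = _ := by field_simp
  · push Not at hξ
    have h1 : KK A z r ξ = 0 := by
      apply kap_zero
      refine one_le_sq h hz hr ?_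
      rw [mem_closedBall, dist_eq_norm]; push Not; nlinarith
    have h2 : KK A w r ξ = 0 := by
      apply kap_zero
      refine one_le_sq h hw hr ?_
      rw [mem_closedBall, dist_eq_norm]; push Not
      have : ξ - z = (ξ - w) - (z - w) := by abel
      have h5 := norm_sub_le (ξ - w) (z - w)
      rw [← this] at h5
      linarith
    rw [h1, h2]
    simp only [sub_self, abs_zero]
    have := KK_nonneg A z (2 * C * (C + 1) * r) ξ
    positivity

lemma JJ_diff (h : QD A R C) {M : ℝ} (hM0 : 1 ≤ M) (hM : ∀ s t, |kap s - kap t| ≤ M * |s - t|)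
    {z w : Cn n} (hz : z ∈ closedBall 0 R) (hw : w ∈ closedBall 0 R) {r : ℝ} (hr : 0 < r) (hr1 : r ≤ 1)
    (hδ : ‖z - w‖ ≤ r) (hf : LocallyIntegrableOn f D volume) (hf0 : ∀ z, 0 ≤ f z)
    (hs : closedBall z (C * (2 * C * (C + 1) * r)) ⊆ D) :
    |JJ A f w r - JJ A f z r| ≤ M * (C * (C + 2) ^ 2 + C * (2 * C + 3)) * (‖z - w‖ / r)
      * JJ A f z (2 * C * (C + 1) * r) := by
  have hC := h.one
  have hΛ : 1 ≤ 2 * C * (C + 1) := by nlinarith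
  have hΛr : (C + 1) * r ≤ C * (2 * C * (C + 1) * r) := by
    have : 1 ≤ C * (2 * C) := by nlinarith
    nlinarith [mul_le_mul_of_nonneg_right this (by positivity : 0 ≤ (C + 1) * r)]
  have i1 := fK_int hf h hz (by positivity : 0 < 2 * C * (C + 1) * r) hs
  have i2 := fK_int hf h hz hr ((closedBall_subset_closedBall (by linarith)).trans hs)
  have i3 := fK_int hf h hw hr (by
    refine (closedBall_subset_closedBall' ?_).trans hs
    rw [dist_comm, dist_eq_norm]; linarith)
  have i4 : Integrable fun ξ => f ξ * KK A w r ξ - f ξ * KK A z r ξ := i3.sub i2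
  rw [JJ, JJ, JJ, ← integral_sub i3 i2, ← integral_const_mul]
  refine (norm_integral_le_integral_norm _).trans (integral_mono i4.norm (i1.const_mul _) fun ξ => ?_)
  beta_reduce
  rw [← mul_sub, norm_mul, Real.norm_of_nonneg (hf0 ξ), Real.norm_eq_abs]
  refine (mul_le_mul_of_nonneg_left (KK_diff h hM0 hM hz hw hr hr1 hδ ξ) (hf0 ξ)).trans (le_of_eq ?_)
  ring

/-- normalising constant -/
noncomputable def cc (A : AlphaForm n) (z : Cn n) : ℝ := ∫ x, kap (qf A z x)

lemma JJ_one (A : AlphaForm n) (z : Cn n) {r : ℝ} (hr : 0 < r) :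
    JJ A (fun _ => 1) z r = r ^ (2 * n) * cc A z := by
  have h1 : JJ A (fun _ => 1) z r = ∫ x, kap ((r ^ 2)⁻¹ * qf A z x) := by
    simp only [JJ, one_mul, KK, sq]
    exact integral_sub_right_eq_self (fun x => kap ((r ^ 2)⁻¹ * qf A z x)) z
  have h2 : ∀ x, kap ((r ^ 2)⁻¹ * qf A z x) = (fun x => kap (qf A z x)) (r⁻¹ • x) := by
    intro x
    simp only [qf, Bz_smul]
    congr 1
    rw [← mul_assoc]; congr 1
    field_simp
  rw [h1, integral_congr_ae (Filter.Eventually.of_forall h2),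
    Measure.integral_comp_smul volume (fun x => kap (qf A z x)) r⁻¹, finrank_Cn, smul_eq_mul, cc]
  congr 1
  rw [inv_pow, inv_inv, abs_of_nonneg (by positivity)]

lemma cc_lower (h : QD A R C) {z : Cn n} (hz : z ∈ closedBall 0 R) :
    (1 / (2 * C)) ^ (2 * n) * Vn n ≤ cc A z := by
  have hC := h.one
  have e : cc A z = JJ A (fun _ => 1) z 1 := by rw [JJ_one A z one_pos]; simp
  have i1 : Integrable fun ξ => (1 : ℝ) * KK A z 1 ξ :=
    fK_int (D := Set.univ) ((continuous_const.locallyIntegrable).locallyIntegrableOn _)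
      h hz one_pos (Set.subset_univ _)
  rw [e, ← vol_closedBall z (by positivity), ← integral_indicator_one measurableSet_closedBall, JJ]
  refine integral_mono ?_ i1 fun ξ => ?_
  · exact (integrable_indicator_iff measurableSet_closedBall).2
      ((integrableOn_const (measure_closedBall_lt_top.ne)))
  · by_cases hξ : ξ ∈ closedBall z (1 / (2 * C))
    · simp only [Set.indicator_of_mem hξ, Pi.one_apply, one_mul]
      refine (kap_one ?_).ge
      rw [mem_closedBall, dist_eq_norm] at hξ
      simp only [sq, one_pow, inv_one, one_mul]
      refine (h.upper z hz _).trans ?_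
      calc C * ‖ξ - z‖ ^ 2 ≤ C * (1 / (2 * C)) ^ 2 := by gcongr
        _ = 1 / (4 * C) := by field_simp; norm_num
        _ ≤ 1 / 2 := by
          apply one_div_le_one_div_of_le <;> linarith
    · simp only [Set.indicator_of_notMem hξ, one_mul]
      exact KK_nonneg _ _ _ _

lemma cc_diff (h : QD A R C) {M : ℝ} (hM0 : 1 ≤ M) (hM : ∀ s t, |kap s - kap t| ≤ M * |s - t|)
    {z w : Cn n} (hz : z ∈ closedBall 0 R) (hw : w ∈ closedBall 0 R) {r : ℝ} (hr : 0 < r) (hr1 : r ≤ 1)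
    (hδ : ‖z - w‖ ≤ r) :
    cc A w ≤ (1 + M * (C * (C + 2) ^ 2 + C * (2 * C + 3)) * (2 * C * (C + 1)) ^ (2 * n) * (‖z - w‖ / r))
      * cc A z := by
  have hC := h.one
  have h1 := JJ_diff (D := Set.univ) (f := fun _ => (1 : ℝ)) h hM0 hM hz hw hr hr1 hδ
    ((continuous_const.locallyIntegrable).locallyIntegrableOn _) (fun _ => zero_le_one)
    (Set.subset_univ _)
  rw [JJ_one A w hr, JJ_one A z hr, JJ_one A z (by positivity)] at h1
  have h2 := (le_abs_self _).trans h1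
  rw [mul_pow _ r] at h2
  have hrp : 0 < r ^ (2 * n) := by positivity
  refine le_of_mul_le_mul_left ?_ hrp
  linarith

lemma ball_sub (hDc : Dᶜ.Nonempty) {z : Cn n} {ρ : ℝ} (h : ρ < infDist z Dᶜ) :
    closedBall z ρ ⊆ D := by
  intro ξ hξ
  by_contra hc
  have := infDist_le_dist_of_mem (x := z) (show ξ ∈ Dᶜ from hc)
  rw [mem_closedBall, dist_comm] at hξ
  linarith

lemma ode_at (h : QD A R C) (hf : FD A D f F) (hD : IsOpen D) (hDc : Dᶜ.Nonempty)
    (hDR : D ⊆ closedBall 0 R) {z : Cn n} (hz : z ∈ D) :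
    ∃ ℓ, 0 ≤ ℓ ∧ Tendsto (fun r => JJ A f z r / r ^ (2 * n)) (𝓝[>] 0) (𝓝 ℓ) ∧
      ∀ r, 0 < r → r < 1 / (2 * C ^ 2) → C * r < infDist z Dᶜ →
        JJ A f z r / r ^ (2 * n) ≤ Real.exp (2 * ((2 * n + 2) * C ^ 2) * r) * ℓ ∧
        ℓ ≤ Real.exp (2 * ((2 * n + 2) * C ^ 2) * r) * (JJ A f z r / r ^ (2 * n))
          + F * (C ^ (2 * n) * Vn n) * Real.exp (2 * ((2 * n + 2) * C ^ 2)) * r ^ 2 := by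
  have hC := h.one
  have hpos : 0 < infDist z Dᶜ :=
    (hD.isClosed_compl.notMem_iff_infDist_pos hDc).1 (by simpa using hz)
  have hV := Vn_nonneg n
  have hF := hf.F0
  have hsub : ∀ r, C * r < infDist z Dᶜ → closedBall z (C * r) ⊆ D := fun r hr => ball_sub hDc hr
  have hmem : ∀ r ∈ Set.Ioo 0 (min (1 / (2 * C ^ 2)) (infDist z Dᶜ / C)),
      0 < r ∧ C ^ 2 * r ≤ 1 / 2 ∧ C * r < infDist z Dᶜ := by
    intro r hr
    have h1 := hr.2.trans_le (min_le_left _ _)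
    have h2 := hr.2.trans_le (min_le_right _ _)
    rw [lt_div_iff₀ (by positivity)] at h1 h2
    exact ⟨hr.1, by linarith, by linarith⟩
  have k1 : ∀ r ∈ Set.Ioo 0 (min (1 / (2 * C ^ 2)) (infDist z Dᶜ / C)),
      HasDerivAt (JJ A f z) (2 / r * PP A f z r) r := by
    intro r hr
    obtain ⟨a1, a2, a3⟩ := hmem r hr
    have : r < infDist z Dᶜ / C := by rw [lt_div_iff₀ (by positivity)]; linarith
    obtain ⟨r', hr', hr''⟩ := _root_.exists_between this
    refine JJ_hasDeriv hf.loc hf.nonneg h hDR hz a1 hr' (hsub r' ?_)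
    rw [lt_div_iff₀ (by positivity)] at hr''; linarith
  obtain ⟨ℓ, h0, h1, h2⟩ := ode_limit (J := JJ A f z) (P := PP A f z)
    (a := (2 * n + 2) * C ^ 2) (r1 := min (1 / (2 * C ^ 2)) (infDist z Dᶜ / C))
    (G := F * (C ^ (2 * n) * Vn n)) n (by positivity) (by positivity)
    (lt_min (by positivity) (by positivity))
    ((min_le_left _ _).trans (by rw [div_le_one (by positivity)]; nlinarith))
    k1 (fun r => JJ_nonneg hf.nonneg z r)
    (fun r hr => (PJ_est h hf hDR hz (hmem r hr).1 (hsub r (hmem r hr).2.2) (hmem r hr).2.1).1)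
    (fun r hr => (PJ_est h hf hDR hz (hmem r hr).1 (hsub r (hmem r hr).2.2) (hmem r hr).2.1).2)
  refine ⟨ℓ, h0, h1, fun r hr hr1 hr2 => h2 r ⟨hr, lt_min hr1 ?_⟩⟩
  rw [lt_div_iff₀ (by positivity)]; linarith

end AH


open MeasureTheory Filter Topology Complex Metric

namespace AH
variable {n : ℕ} {A : AlphaForm n} {R C F : ℝ} {D : Set (Cn n)} {f : Cn n → ℝ}

lemma harnack_real {a r x E L T l w I I' cz cw c0 G y t : ℝ} (hr : 0 < r) (hr1 : r ≤ 1)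
    (hx : 0 ≤ x) (hx1 : x ≤ 1) (ha : 0 ≤ a)
    (hE : 0 ≤ E) (hL : 0 ≤ L) (hT : T = Real.exp a) (hG : 0 ≤ G)
    (hl0 : 0 ≤ l) (hI0 : 0 ≤ I) (hI' : 0 ≤ I')
    (h1 : w ≤ Real.exp (a * r) * I' + G * T * r ^ 2)
    (h2 : I' ≤ I + E * x * (L * t)) (h3 : I ≤ Real.exp (a * r) * l) (h4 : t ≤ T * l)
    (hc0 : 0 < c0) (hcw : c0 ≤ cw) (hcz : cz ≤ (1 + E * L * x) * cw) (hly : l = y * cz)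
    (hy : 0 ≤ y) {ν : ℝ} (hν : w = ν * cw) :
    ν ≤ (1 + (2 * (a * T) + (a * T) ^ 2 + T * E * L * T + E * L + (2 * (a * T) + (a * T) ^ 2) * (E * L)
        + T * E * L * T * (E * L)) * (r + x)) * y
      + G * T / c0 * r ^ 2 := by
  have hT0 : 0 < T := hT ▸ Real.exp_pos _
  have e1 : Real.exp (a * r) ≤ T := by
    rw [hT]; apply Real.exp_le_exp.2; nlinarith
  have e2 : Real.exp (a * r) ≤ 1 + a * T * r := by
    have := Real.add_one_le_exp (-(a * r))
    have h5 : Real.exp (a * r) * Real.exp (-(a * r)) = 1 := by rw [← Real.exp_add]; simp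
    have h6 := Real.exp_pos (a * r)
    have h7 : Real.exp (a * r) * (1 - a * r) ≤ 1 := by
      rw [← h5]; gcongr; linarith
    have : Real.exp (a * r) * (a * r) ≤ T * (a * r) := by gcongr
    linarith
  set B := a * T
  have hB : 0 ≤ B := by positivity
  set e := Real.exp (a * r)
  have he : 0 < e := Real.exp_pos _
  have k1 : e * I' ≤ (1 + (2 * B + B ^ 2) * r + T * E * L * T * x) * l := by
    have q1 : e * I' ≤ e * (e * l) + T * (E * x * (L * (T * l))) := by
      calc e * I' ≤ e * (I + E * x * (L * t)) := by gcongr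
        _ = e * I + e * (E * x * (L * t)) := by ring
        _ ≤ e * (e * l) + e * (E * x * (L * (T * l))) := by gcongr
        _ ≤ _ := by gcongr
    have q2 : e * (e * l) ≤ (1 + B * r) * ((1 + B * r) * l) := by gcongr
    have q3 : B ^ 2 * r ^ 2 * l ≤ B ^ 2 * r * l := by
      have : r ^ 2 ≤ r := by nlinarith
      gcongr
    nlinarith
  have hcw0 : 0 < cw := hc0.trans_le hcw
  have k2 : ν * cw ≤ ((1 + (2 * B + B ^ 2) * r + T * E * L * T * x) * ((1 + E * L * x) * y) +
      G * T / c0 * r ^ 2) * cw := by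
    have q1 : G * T * r ^ 2 ≤ G * T / c0 * r ^ 2 * cw := by
      have : 1 ≤ cw / c0 := by rw [one_le_div hc0]; exact hcw
      calc G * T * r ^ 2 ≤ G * T * r ^ 2 * (cw / c0) := le_mul_of_one_le_right (by positivity) this
        _ = _ := by ring
    have q2 : l ≤ (1 + E * L * x) * y * cw := by
      rw [hly]; calc y * cz ≤ y * ((1 + E * L * x) * cw) := by gcongr
        _ = _ := by ring
    have q3 : (1 + (2 * B + B ^ 2) * r + T * E * L * T * x) * l ≤
      (1 + (2 * B + B ^ 2) * r + T * E * L * T * x) * ((1 + E * L * x) * y * cw) := by gcongr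
    rw [← hν]
    linarith
  have k3 := le_of_mul_le_mul_right k2 hcw0
  refine k3.trans ?_
  gcongr ?_ + _
  rw [← mul_assoc]
  gcongr
  set S := E * L with hS
  have hS0 : 0 ≤ S := by positivity
  have : T * E * L * T = T * S * T := by rw [hS]; ring
  rw [this]
  set U := T * S * T
  have hU : 0 ≤ U := by positivity
  set V := 2 * B + B ^ 2
  have hV : 0 ≤ V := by positivity
  have p1 : U * S * x * x ≤ U * S * x := mul_le_of_le_one_right (by positivity) hx1
  have p2 : V * S * r * x ≤ V * S * x := by
    have : V * S * r * x ≤ V * S * 1 * x := by gcongr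
    linarith
  have p3 : 0 ≤ (U + S + U * S) * r := by positivity
  have p4 : 0 ≤ V * x := by positivity
  have p5 : 0 ≤ V * S * r := by positivity
  nlinarith

noncomputable def LL (A : AlphaForm n) (f : Cn n → ℝ) (z : Cn n) : ℝ :=
  limUnder (𝓝[>] (0 : ℝ)) (fun r => JJ A f z r / r ^ (2 * n))

/-- the precise representative -/
noncomputable def FT (A : AlphaForm n) (f : Cn n → ℝ) (z : Cn n) : ℝ := LL A f z / cc A z

lemma cc_pos (h : QD A R C) {z : Cn n} (hz : z ∈ closedBall 0 R) : 0 < cc A z := by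
  have := h.one
  have hV := Vn_pos n
  exact lt_of_lt_of_le (by positivity) (cc_lower h hz)

lemma LL_tendsto (h : QD A R C) (hf : FD A D f F) (hD : IsOpen D) (hDc : Dᶜ.Nonempty)
    (hDR : D ⊆ closedBall 0 R) {z : Cn n} (hz : z ∈ D) :
    Tendsto (fun r => JJ A f z r / r ^ (2 * n)) (𝓝[>] 0) (𝓝 (LL A f z)) := by
  obtain ⟨l, _, h1, _⟩ := ode_at h hf hD hDc hDR hz
  rw [LL, h1.limUnder_eq]; exact h1

lemma LL_nonneg (h : QD A R C) (hf : FD A D f F) (hD : IsOpen D) (hDc : Dᶜ.Nonempty)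
    (hDR : D ⊆ closedBall 0 R) {z : Cn n} (hz : z ∈ D) : 0 ≤ LL A f z := by
  obtain ⟨l, h0, h1, _⟩ := ode_at h hf hD hDc hDR hz
  rw [LL, h1.limUnder_eq]; exact h0

lemma FT_nonneg (h : QD A R C) (hf : FD A D f F) (hD : IsOpen D) (hDc : Dᶜ.Nonempty)
    (hDR : D ⊆ closedBall 0 R) {z : Cn n} (hz : z ∈ D) : 0 ≤ FT A f z :=
  div_nonneg (LL_nonneg h hf hD hDc hDR hz) (cc_pos h (hDR hz)).le

set_option maxHeartbeats 2000000 in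
theorem harnack (A : AlphaForm n) (R : ℝ) : ∃ C, 1 ≤ C ∧ ∃ r0, 0 < r0 ∧ r0 ≤ 1 ∧
    ∀ (D : Set (Cn n)) (f : Cn n → ℝ) (F : ℝ), IsOpen D → Dᶜ.Nonempty → D ⊆ closedBall 0 R →
      FD A D f F → ∀ z ∈ D, ∀ w r, 0 < r → r ≤ r0 → ‖z - w‖ ≤ r → C * r ≤ infDist z Dᶜ →
        FT A f w ≤ (1 + C * (r + ‖z - w‖ / r)) * FT A f z + C * F * r ^ 2 := by
  obtain ⟨C, h⟩ := exists_QD A R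
  obtain ⟨M, hM1, _, hM⟩ := exists_kap_bound
  have hC := h.one
  have hC2 : 1 ≤ C ^ 2 := one_le_pow₀ hC
  have hV := Vn_pos n
  set E := M * (C * (C + 2) ^ 2 + C * (2 * C + 3)) with hE
  set Λ := 2 * C * (C + 1) with hΛ
  have hΛ1 : 1 ≤ Λ := by nlinarith
  set a := 2 * ((2 * n + 2) * C ^ 2) with ha
  set L := Λ ^ (2 * n) with hL
  set T := Real.exp a with hT
  have hE0 : 0 ≤ E := by positivity
  have ha0 : 0 ≤ a := by positivity
  have hL0 : 0 ≤ L := by positivity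
  set c0 := (1 / (2 * C)) ^ (2 * n) * Vn n with hc0
  have hc00 : 0 < c0 := by positivity
  set N1 := (2 * (a * T) + (a * T) ^ 2 + T * E * L * T + E * L + (2 * (a * T) + (a * T) ^ 2) * (E * L)
        + T * E * L * T * (E * L)) with hN1
  set N2 := (C ^ (2 * n) * Vn n) * T / c0 with hN2
  have hT0 : 0 < T := Real.exp_pos _
  have hN10 : 0 ≤ N1 := by positivity
  have hN20 : 0 ≤ N2 := by positivity
  refine ⟨1 + N1 + N2 + 2 * (C * Λ), ?_, 1 / (4 * C ^ 2 * Λ), by positivity, ?_, ?_⟩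
  · have : 0 ≤ C * Λ := by positivity
    linarith
  · rw [div_le_one (by positivity)]
    nlinarith [one_le_pow₀ hC (n := 2)]
  intro D f F hD hDc hDR hf z hz w r hr hr0 hδ hdist
  have hF := hf.F0
  have hr0' : Λ * r ≤ 1 / (4 * C ^ 2) := by
    calc Λ * r ≤ Λ * (1 / (4 * C ^ 2 * Λ)) := by gcongr
      _ = _ := by field_simp
  have hb : 1 / (4 * C ^ 2) < 1 / (2 * C ^ 2) := by
    apply one_div_lt_one_div_of_lt <;> linarith
  have hb1 : 1 / (4 * C ^ 2) ≤ 1 := by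
    rw [div_le_one (by positivity)]; linarith
  have hrΛ : r ≤ Λ * r := le_mul_of_one_le_left hr.le hΛ1
  have hΛr : 0 < Λ * r := by positivity
  have hd1 : 2 * (C * (Λ * r)) ≤ infDist z Dᶜ - r := by
    have : 0 ≤ (N1 + N2) * r := by positivity
    have h6 : r * (1 + N1 + N2 + 2 * (C * Λ)) = r + (N1 + N2) * r + 2 * (C * (Λ * r)) := by ring
    linarith
  have hCr : C * r ≤ C * (Λ * r) := by gcongr
  have hwi : infDist z Dᶜ ≤ infDist w Dᶜ + ‖z - w‖ := by
    have := infDist_le_infDist_add_dist (s := Dᶜ) (x := z) (y := w)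
    rwa [dist_eq_norm] at this
  have hCΛ : 0 < C * (Λ * r) := by positivity
  have hwD : w ∈ D := by
    refine ball_sub hDc (z := z) (ρ := r) (by linarith) ?_
    rwa [mem_closedBall, dist_comm, dist_eq_norm]
  obtain ⟨lz, hz0, hz1, hz2⟩ := ode_at h hf hD hDc hDR hz
  obtain ⟨lw, hw0, hw1, hw2⟩ := ode_at h hf hD hDc hDR hwD
  have eLz : LL A f z = lz := hz1.limUnder_eq
  have eLw : LL A f w = lw := hw1.limUnder_eq
  have hcz := cc_pos h (hDR hz)
  have hcw := cc_pos h (hDR hwD)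
  have c1 := (hz2 r hr (by linarith) (by linarith)).1
  have c2 := (hz2 (Λ * r) hΛr (by linarith) (by linarith)).1
  have c3 := (hw2 r hr (by linarith) (by linarith)).2
  have c4 := JJ_diff h hM1 hM (hDR hz) (hDR hwD) hr (by linarith) hδ hf.loc hf.nonneg
    (ball_sub hDc (by rw [← hΛ]; linarith))
  have hrp : 0 < r ^ (2 * n) := by positivity
  have c5 : JJ A f w r / r ^ (2 * n) ≤ JJ A f z r / r ^ (2 * n) +
      E * (‖z - w‖ / r) * (L * (JJ A f z (Λ * r) / (Λ * r) ^ (2 * n))) := by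
    have := (le_abs_self _).trans c4
    rw [div_le_iff₀ hrp, mul_pow]
    have e : (JJ A f z r / r ^ (2 * n) +
      E * (‖z - w‖ / r) * (L * (JJ A f z (Λ * r) / (Λ ^ (2 * n) * r ^ (2 * n))))) * r ^ (2 * n)
      = JJ A f z r + E * (‖z - w‖ / r) * JJ A f z (Λ * r) := by
      rw [hL]; field_simp
    rw [e]; linarith
  have c6 : JJ A f z (Λ * r) / (Λ * r) ^ (2 * n) ≤ T * lz := by
    refine c2.trans (mul_le_mul_of_nonneg_right ?_ hz0)
    rw [hT]; apply Real.exp_le_exp.2; exact mul_le_of_le_one_right ha0 (by linarith)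
  have c7 := cc_diff h hM1 hM (hDR hwD) (hDR hz) hr (by linarith) (by rwa [norm_sub_rev])
  rw [norm_sub_rev] at c7
  have key := harnack_real (a := a) (r := r) (x := ‖z - w‖ / r) (E := E) (L := L) (T := T) (l := lz)
    (w := lw) (I := JJ A f z r / r ^ (2 * n)) (I' := JJ A f w r / r ^ (2 * n)) (cz := cc A z)
    (cw := cc A w) (c0 := c0) (G := F * (C ^ (2 * n) * Vn n)) (y := FT A f z)
    (t := JJ A f z (Λ * r) / (Λ * r) ^ (2 * n)) (ν := FT A f w)
    hr (by linarith) (by positivity) (by rw [div_le_one hr]; exact hδ) ha0 hE0 hL0 rfl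
    (by positivity) hz0 (div_nonneg (JJ_nonneg hf.nonneg _ _) hrp.le)
    (div_nonneg (JJ_nonneg hf.nonneg _ _) hrp.le) c3 c5 c1 c6 hc00
    (cc_lower h (hDR hwD)) c7 (by rw [FT, eLz]; field_simp)
    (FT_nonneg h hf hD hDc hDR hz) (by rw [FT, eLw]; field_simp)
  refine key.trans ?_
  have hy := FT_nonneg h hf hD hDc hDR hz
  have q1 : N1 ≤ 1 + N1 + N2 + 2 * (C * Λ) := by
    have : 0 ≤ C * Λ := by positivity
    linarith
  have q2 : F * (C ^ (2 * n) * Vn n) * T / c0 ≤ (1 + N1 + N2 + 2 * (C * Λ)) * F := by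
    have e : F * (C ^ (2 * n) * Vn n) * T / c0 = N2 * F := by rw [hN2]; ring
    rw [e]
    have : 0 ≤ C * Λ := by positivity
    gcongr; linarith
  gcongr

end AH


open MeasureTheory Filter Topology Complex Metric

namespace AH
variable {n : ℕ} {A : AlphaForm n} {R C F : ℝ} {D : Set (Cn n)} {f : Cn n → ℝ}

lemma JJ_avg (h : QD A R C) {z : Cn n} (hz : z ∈ closedBall 0 R)
    (hf : LocallyIntegrableOn f D volume) {r : ℝ} (hr : 0 < r) (hs : closedBall z (C * r) ⊆ D) :
    |JJ A f z r / r ^ (2 * n) - cc A z * f z| ≤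
      (C ^ (2 * n) * Vn n) * ⨍ y in closedBall z (C * r), ‖f y - f z‖ := by
  have hC := h.one
  have hV := Vn_pos n
  have i1 := fK_int hf h hz hr hs
  have i2 : Integrable fun ξ => (1 : ℝ) * KK A z r ξ :=
    fK_int (D := Set.univ) ((continuous_const.locallyIntegrable).locallyIntegrableOn _)
      h hz hr (Set.subset_univ _)
  have hrp : 0 < r ^ (2 * n) := by positivity
  have e1 : JJ A f z r / r ^ (2 * n) - cc A z * f z = (∫ ξ, (f ξ - f z) * KK A z r ξ) / r ^ (2 * n) := by
    have e0 := JJ_one A z hr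
    have i3 : Integrable fun ξ => f z * ((1 : ℝ) * KK A z r ξ) := i2.const_mul _
    have e2 : ∫ ξ, (f ξ - f z) * KK A z r ξ = JJ A f z r - f z * JJ A (fun _ => 1) z r := by
      rw [JJ, JJ, ← integral_const_mul, ← integral_sub i1 i3]
      congr 1; ext ξ; ring
    rw [e2, e0]; field_simp
  have ic : IntegrableOn f (closedBall z (C * r)) :=
    hf.integrableOn_compact_subset hs (isCompact_closedBall _ _)
  have ic2 : IntegrableOn (fun y => ‖f y - f z‖) (closedBall z (C * r)) :=
    (Integrable.sub ic (integrableOn_const (measure_closedBall_lt_top.ne))).norm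
  have b1 : |∫ ξ, (f ξ - f z) * KK A z r ξ| ≤ ∫ y in closedBall z (C * r), ‖f y - f z‖ := by
    rw [← integral_indicator measurableSet_closedBall]
    refine (norm_integral_le_integral_norm _).trans (integral_mono_of_nonneg
      (Filter.Eventually.of_forall fun ξ => norm_nonneg ((f ξ - f z) * KK A z r ξ))
      ((integrable_indicator_iff measurableSet_closedBall).2 ic2)
      (Filter.Eventually.of_forall fun ξ => ?_))
    beta_reduce
    by_cases hξ : ξ ∈ closedBall z (C * r)
    · rw [Set.indicator_of_mem hξ, norm_mul, Real.norm_of_nonneg (KK_nonneg _ _ _ _)]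
      exact mul_le_of_le_one_right (norm_nonneg _) (KK_le_one _ _ _ _)
    · rw [Set.indicator_of_notMem hξ]
      have : KK A z r ξ = 0 := image_eq_zero_of_notMem_tsupport fun hc => hξ (KK_supp h hz hr hc)
      rw [this]; simp
  rw [e1, abs_div, abs_of_pos hrp, div_le_iff₀ hrp]
  refine b1.trans (le_of_eq ?_)
  rw [setAverage_eq, vol_closedBall z (by positivity), smul_eq_mul, mul_pow]
  field_simp

lemma FT_eq_ae (h : QD A R C) (hf : FD A D f F) (hD : IsOpen D) (hDb : Bornology.IsBounded D)
    (hDc : Dᶜ.Nonempty) (hDR : D ⊆ closedBall 0 R) : ∀ᵐ z ∂volume, z ∈ D → FT A f z = f z := by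
  have hC := h.one
  have hpos : ∀ z ∈ D, 0 < infDist z Dᶜ := fun z hz =>
    (hD.isClosed_compl.notMem_iff_infDist_pos hDc).1 (by simpa using hz)
  set Km : ℕ → Set (Cn n) := fun m => {z | 1 / ((m : ℝ) + 1) ≤ infDist z Dᶜ} with hKm
  have hKc : ∀ m, IsCompact (Km m) ∧ Km m ⊆ D := fun m => compact_inner hDb (by positivity)
  have hIntg : ∀ m, LocallyIntegrable ((Km m).indicator f) volume := fun m =>
    ((integrable_indicator_iff (hKc m).1.measurableSet).2
      (hf.loc.integrableOn_compact_subset (hKc m).2 (hKc m).1)).locallyIntegrable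
  have hae : ∀ᵐ z ∂volume, ∀ m : ℕ, Tendsto (fun r : ℝ => ⨍ y in closedBall z (C * r),
      ‖(Km m).indicator f y - (Km m).indicator f z‖) (𝓝[>] 0) (𝓝 0) := by
    rw [ae_all_iff]; intro m
    filter_upwards [IsUnifLocDoublingMeasure.ae_tendsto_average_norm_sub volume (hIntg m) 1] with z hz
    refine hz (l := 𝓝[>] (0 : ℝ)) (fun _ => z) (fun r => C * r) ?_ ?_
    · refine tendsto_nhdsWithin_iff.2 ⟨?_, ?_⟩
      · have : Tendsto (fun r : ℝ => C * r) (𝓝 0) (𝓝 (C * 0)) := (continuous_const_mul C).tendsto 0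
        rw [mul_zero] at this
        exact this.mono_left nhdsWithin_le_nhds
      · filter_upwards [self_mem_nhdsWithin] with r hr
        have : 0 < r := hr
        exact Set.mem_Ioi.2 (by positivity)
    · filter_upwards [self_mem_nhdsWithin] with r hr
      have : 0 < r := hr
      exact mem_closedBall_self (by positivity)
  filter_upwards [hae] with z hz hzD
  have hp := hpos z hzD
  obtain ⟨m, hm⟩ := exists_nat_one_div_lt (half_pos hp)
  have h1 := hz m
  have h2 : Tendsto (fun r => JJ A f z r / r ^ (2 * n)) (𝓝[>] 0) (𝓝 (cc A z * f z)) := by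
    rw [tendsto_iff_norm_sub_tendsto_zero]
    have h3 := h1.const_mul (C ^ (2 * n) * Vn n)
    rw [mul_zero] at h3
    refine squeeze_zero' (Filter.Eventually.of_forall fun _ => norm_nonneg _) ?_ h3
    have : Set.Ioo 0 (infDist z Dᶜ / (2 * C)) ∈ 𝓝[>] (0 : ℝ) :=
      Ioo_mem_nhdsGT (by positivity)
    filter_upwards [this] with r hr
    have hr0 : 0 < r := hr.1
    have hr1 : C * r < infDist z Dᶜ / 2 := by
      have := hr.2
      rw [lt_div_iff₀ (by positivity)] at this
      linarith
    have hsub : closedBall z (C * r) ⊆ D := ball_sub hDc (by linarith)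
    have hsubK : closedBall z (C * r) ⊆ Km m := by
      intro ξ hξ
      rw [mem_closedBall, dist_comm] at hξ
      have := infDist_le_infDist_add_dist (s := Dᶜ) (x := z) (y := ξ)
      simp only [hKm, Set.mem_setOf_eq]
      linarith
    refine (JJ_avg h (hDR hzD) hf.loc hr0 hsub).trans (le_of_eq ?_)
    congr 1
    rw [setAverage_eq, setAverage_eq]
    congr 1
    refine setIntegral_congr_fun measurableSet_closedBall fun ξ hξ => ?_
    rw [Set.indicator_of_mem (hsubK hξ), Set.indicator_of_mem (hsubK (mem_closedBall_self (by positivity)))]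
  have h4 := tendsto_nhds_unique (LL_tendsto h hf hD hDc hDR hzD) h2
  have := cc_pos h (hDR hzD)
  rw [FT, h4]; field_simp

lemma FT_cont (hf : FD A D f F) (hD : IsOpen D) (hDb : Bornology.IsBounded D)
    (hDc : Dᶜ.Nonempty) : ContinuousOn (FT A f) D := by
  obtain ⟨R, hDR⟩ := hDb.subset_closedBall 0
  obtain ⟨CQ, hQ⟩ := exists_QD A R
  obtain ⟨C, hC, r0, hr0, hr1, H⟩ := harnack A R
  have H := H D f F hD hDc hDR hf
  have hF := hf.F0
  intro z hz
  refine ContinuousAt.continuousWithinAt ?_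
  have hp : 0 < infDist z Dᶜ := (hD.isClosed_compl.notMem_iff_infDist_pos hDc).1 (by simpa using hz)
  set g : Cn n → ℝ := fun w => Real.sqrt ‖z - w‖ with hg
  have hgc : Continuous g := by fun_prop
  have hg0 : g z = 0 := by simp [hg]
  have hgt : Tendsto g (𝓝 z) (𝓝 0) := by rw [← hg0]; exact hgc.tendsto z
  have hzn := FT_nonneg hQ hf hD hDc hDR hz
  have key : ∀ᶠ w in 𝓝 z, FT A f w ≤ (1 + C * (g w + g w)) * FT A f z + C * F * (g w) ^ 2 ∧
      (FT A f z - C * F * (g w) ^ 2) / (1 + C * (g w + g w)) ≤ FT A f w := by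
    have e1 : ∀ᶠ w in 𝓝 z, g w < min r0 (min 1 (infDist z Dᶜ / (2 * C))) :=
      hgt.eventually (gt_mem_nhds (by positivity))
    filter_upwards [e1] with w hw
    have h1 := hw.trans_le (min_le_left _ _)
    have h2 := hw.trans_le ((min_le_right _ _).trans (min_le_left _ _))
    have h3 := hw.trans_le ((min_le_right _ _).trans (min_le_right _ _))
    rw [lt_div_iff₀ (by positivity)] at h3
    have hg0' : 0 ≤ g w := Real.sqrt_nonneg _
    have hgsq : g w ^ 2 = ‖z - w‖ := Real.sq_sqrt (norm_nonneg _)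
    rcases eq_or_ne z w with rfl | hne
    · rw [hg0]; simp
    have hgp : 0 < g w := Real.sqrt_pos.2 (norm_pos_iff.2 (sub_ne_zero.2 hne))
    have hdiv : ‖z - w‖ / g w = g w := by rw [← hgsq]; field_simp
    have hle : ‖z - w‖ ≤ g w := by rw [← hgsq]; nlinarith
    have hgC : g w ≤ g w * C := le_mul_of_one_le_right hg0' hC
    have hwi := infDist_le_infDist_add_dist (s := Dᶜ) (x := z) (y := w)
    rw [dist_eq_norm] at hwi
    have hwD : w ∈ D := by
      refine ball_sub hDc (z := z) (ρ := g w) (by linarith) ?_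
      rwa [mem_closedBall, dist_comm, dist_eq_norm]
    have a1 := H z hz w (g w) hgp h1.le hle (by linarith)
    have a2 := H w hwD z (g w) hgp h1.le (by rwa [norm_sub_rev]) (by linarith)
    rw [norm_sub_rev w z] at a2
    rw [hdiv] at a1 a2
    refine ⟨a1, ?_⟩
    rw [div_le_iff₀ (by positivity)]
    linarith
  have t1 : Tendsto (fun w => (1 + C * (g w + g w)) * FT A f z + C * F * (g w) ^ 2) (𝓝 z) (𝓝 (FT A f z)) := by
    have : Continuous fun w => (1 + C * (g w + g w)) * FT A f z + C * F * (g w) ^ 2 := by fun_prop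
    have h := this.tendsto z
    rw [hg0] at h
    simpa using h
  have t2 : Tendsto (fun w => (FT A f z - C * F * (g w) ^ 2) / (1 + C * (g w + g w))) (𝓝 z) (𝓝 (FT A f z)) := by
    have c1 : Continuous fun w => (FT A f z - C * F * (g w) ^ 2) := by fun_prop
    have c2 : Continuous fun w => (1 + C * (g w + g w)) := by fun_prop
    have h : Tendsto (fun w => (FT A f z - C * F * (g w) ^ 2) / (1 + C * (g w + g w))) (𝓝 z) _ :=
      (c1.tendsto z).div (c2.tendsto z) (by rw [hg0]; simp)
    rw [hg0] at h
    simpa using h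
  exact tendsto_of_tendsto_of_tendsto_of_le_of_le' t2 t1 (key.mono fun _ h => h.2) (key.mono fun _ h => h.1)

end AH


open MeasureTheory Filter Topology Complex Metric

namespace AH
variable {n : ℕ} {A : AlphaForm n} {R C F : ℝ} {D : Set (Cn n)} {f u v : Cn n → ℝ}

lemma neBot_of_full {z : Cn n} {S : Set (Cn n)} (h : ∃ N ∈ 𝓝 z, volume (N \ S) = 0) :
    (𝓝[S] z).NeBot := by
  obtain ⟨N, hN, h0⟩ := h
  rw [← mem_closure_iff_nhdsWithin_neBot, mem_closure_iff_nhds]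
  intro t ht
  by_contra hc
  rw [Set.not_nonempty_iff_eq_empty] at hc
  have hsub : t ∩ N ⊆ N \ S := fun x hx => ⟨hx.2, fun hS => by
    have : x ∈ t ∩ S := ⟨hx.1, hS⟩
    rw [hc] at this; exact this⟩
  have : 0 < volume (t ∩ N) := Measure.measure_pos_of_mem_nhds volume (inter_mem ht hN)
  exact this.ne' (measure_mono_null hsub h0)

lemma sub_of_cont (hD : IsOpen D) (hv : ContinuousOn v D) (hs : DistSub A D v) :
    IsAlphaSubharmonic A D v := by
  have hvE : ContinuousOn (fun z => (v z : EReal)) D := continuous_coe_real_ereal.comp_continuousOn hv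
  refine ⟨fun z _ => EReal.coe_ne_top _, hvE.upperSemicontinuousOn, ?_, ?_, ?_⟩
  · intro z hz S hS
    haveI := neBot_of_full hS
    exact (((hvE.continuousAt (hD.mem_nhds hz)).tendsto).mono_left nhdsWithin_le_nhds).limsup_eq
  · simp only [EReal.toReal_coe]
    exact hv.locallyIntegrableOn hD.measurableSet
  · intro φ h1 h2 h3 h4
    have hT : IsTest D φ := ⟨h1, h2, h3⟩
    simp only [EReal.toReal_coe]
    rw [setIntegral_eq_mul_cpt (hT.L_supp A)]
    exact hs φ hT h4

lemma sub_loc (h : IsAlphaSubharmonic A D u) : LocallyIntegrableOn u D volume := by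
  simpa only [EReal.toReal_coe] using h.2.2.2.1

lemma sub_dist (h : IsAlphaSubharmonic A D u) : DistSub A D u := by
  intro φ hT h4
  have := h.2.2.2.2 φ hT.smooth hT.cpt hT.supp h4
  simp only [EReal.toReal_coe] at this
  rwa [setIntegral_eq_mul_cpt (hT.L_supp A)] at this

lemma sub_le (h : IsAlphaSubharmonic A D u) (hD : IsOpen D) (hv : ContinuousOn v D)
    (hae : ∀ᵐ z ∂volume, z ∈ D → u z ≤ v z) : ∀ z ∈ D, u z ≤ v z := by
  intro z hz
  have hvE : ContinuousOn (fun z => (v z : EReal)) D := continuous_coe_real_ereal.comp_continuousOn hv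
  set S := {z | u z ≤ v z} with hS
  have hSf : ∃ N ∈ 𝓝 z, volume (N \ S) = 0 := by
    refine ⟨D, hD.mem_nhds hz, ?_⟩
    rw [ae_iff] at hae
    refine measure_mono_null ?_ hae
    intro x hx
    simp only [Set.mem_setOf_eq, Classical.not_imp]
    exact hx
  haveI := neBot_of_full hSf
  have h1 := h.2.2.1 z hz S hSf
  have h2 := (((hvE.continuousAt (hD.mem_nhds hz)).tendsto).mono_left
    (nhdsWithin_le_nhds (s := S))).limsup_eq
  have h3 : limsup (fun z => (u z : EReal)) (𝓝[S] z) ≤ limsup (fun z => (v z : EReal)) (𝓝[S] z) := by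
    refine limsup_le_limsup ?_
    filter_upwards [self_mem_nhdsWithin] with x hx
    exact EReal.coe_le_coe_iff.2 hx
  rw [h1, h2] at h3
  exact EReal.coe_le_coe_iff.1 h3

lemma cont_le {b : Cn n → ℝ} (hD : IsOpen D) (hv : ContinuousOn v D) (hb : ContinuousOn b D)
    (hae : ∀ᵐ z ∂volume, z ∈ D → v z ≤ b z) : ∀ z ∈ D, v z ≤ b z := by
  intro z hz
  by_contra hc
  push Not at hc
  have e : ∀ᶠ x in 𝓝 z, b x < v x ∧ x ∈ D :=
    ((hb.continuousAt (hD.mem_nhds hz)).eventually_lt (hv.continuousAt (hD.mem_nhds hz)) hc).and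
      (hD.mem_nhds hz)
  have : 0 < volume {x | b x < v x ∧ x ∈ D} := Measure.measure_pos_of_mem_nhds volume e
  rw [ae_iff] at hae
  refine this.ne' (measure_mono_null ?_ hae)
  intro x hx
  simp only [Set.mem_setOf_eq, Classical.not_imp, not_le]
  exact ⟨hx.2, hx.1⟩

lemma Lam_zero (A : AlphaForm n) (z : Cn n) : Lam A z 0 = 0 := by
  simp [Lam, Wjk]

lemma int_L_zero (A : AlphaForm n) {φ : Cn n → ℝ} (hT : IsTest D φ) : ∫ z, alphaOpR A φ z = 0 := by
  have h := ibp A (f := fun _ => (1 : ℝ)) contDiff_const hT.two hT.cpt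
  simp only [one_mul] at h
  rw [h]
  have : ∀ z, alphaOpR A (fun _ : Cn n => (1 : ℝ)) z = 0 := by
    intro z
    rw [alphaOpR_eq A contDiff_const]
    have : fderiv ℝ (fun _ : Cn n => (1 : ℝ)) = fun _ => 0 := by ext; simp
    rw [this]
    simpa using Lam_zero A z
  simp [this]

lemma dist_shift (hu : LocallyIntegrableOn u D volume) (hs : DistSub A D u) (c : ℝ) :
    DistSub A D (fun z => u z - c) := by
  intro φ hT h0
  have i1 := integrable_mul_cpt hu (hT.L_cont A) (hT.L_cpt A) (hT.L_supp A)
  have i2 : Integrable fun z => c * alphaOpR A φ z :=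
    ((hT.L_cont A).integrable_of_hasCompactSupport (hT.L_cpt A)).const_mul c
  have e : ∫ z, (u z - c) * alphaOpR A φ z = ∫ z, u z * alphaOpR A φ z := by
    have : ∀ z, (u z - c) * alphaOpR A φ z = u z * alphaOpR A φ z - c * alphaOpR A φ z :=
      fun z => by ring
    simp_rw [this]
    rw [integral_sub i1 i2, integral_const_mul, int_L_zero A hT]; simp
  rw [e]; exact hs φ hT h0

/-- The regularisation theorem with Harnack-type modulus of continuity. -/
theorem regularize (A : AlphaForm n) (R : ℝ) : ∃ C, 1 ≤ C ∧ ∃ r0, 0 < r0 ∧ r0 ≤ 1 ∧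
    ∀ (D : Set (Cn n)) (u b : Cn n → ℝ) (F c : ℝ), IsOpen D → Bornology.IsBounded D → Dᶜ.Nonempty →
      D ⊆ closedBall 0 R → IsAlphaSubharmonic A D u → ContDiff ℝ 2 b → (∀ z ∈ D, u z - c ≤ b z) →
      (∀ z ∈ D, b z < 0) → (∀ z ∈ D, |alphaOpR A b z| ≤ F) → 0 ≤ F →
      ∃ v, IsAlphaSubharmonic A D v ∧ (∀ z ∈ D, u z - c ≤ v z) ∧ (∀ z ∈ D, v z ≤ b z) ∧
        ∀ z ∈ D, ∀ w r, 0 < r → r ≤ r0 → ‖z - w‖ ≤ r → C * r ≤ infDist z Dᶜ →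
          - v w ≤ (1 + C * (r + ‖z - w‖ / r)) * (- v z) + C * F * r ^ 2 := by
  obtain ⟨CQ, hQ⟩ := exists_QD A R
  obtain ⟨C, hC, r0, hr0, hr1, H⟩ := harnack A R
  refine ⟨C, hC, r0, hr0, hr1, ?_⟩
  intro D u b F c hD hDb hDc hDR hu hb hub hb0 hF hF0
  have hua : LocallyIntegrableOn (fun z => u z - c) D volume :=
    (sub_loc hu).sub (continuous_const.locallyIntegrable.locallyIntegrableOn D)
  obtain ⟨v0, hvl, hv1, hv2, hv3⟩ := exists_between A hD hDb hDc hua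
    (dist_shift (sub_loc hu) (sub_dist hu) c) hb hub hF hF0
  set f : Cn n → ℝ := D.indicator (fun z => - v0 z) with hf
  have hIntg : ∀ φ, IsTest D φ → ∫ z, f z * alphaOpR A φ z = - ∫ z, v0 z * alphaOpR A φ z := by
    intro φ hT
    rw [← integral_neg]
    congr 1; ext z
    by_cases hz : z ∈ D
    · rw [hf, Set.indicator_of_mem hz]; ring
    · rw [image_eq_zero_of_notMem_tsupport (fun h => hz (hT.L_supp A h))]; simp
  have hfd : FD A D f F := by
    refine ⟨?_, ?_, hF0, ?_, ?_⟩
    · rw [locallyIntegrableOn_iff hD.isLocallyClosed]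
      intro k hk hkc
      have h1 : IntegrableOn (fun z => - v0 z) k := (hvl.integrableOn_compact_subset hk hkc).neg
      refine h1.congr_fun ?_ hkc.measurableSet
      intro z hz
      rw [hf, Set.indicator_of_mem (hk hz)]
    · intro z
      refine Set.indicator_nonneg (fun z hz => ?_) z
      have := hv2 z hz
      have := hb0 z hz
      linarith
    · intro φ hT h0
      rw [hIntg φ hT]; have := (hv3 φ hT h0).1; linarith
    · intro φ hT h0
      rw [hIntg φ hT]; have := (hv3 φ hT h0).2; linarith
  have hcont := FT_cont hfd hD hDb hDc
  have hae := FT_eq_ae hQ hfd hD hDb hDc hDR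
  have hae' : ∀ᵐ z ∂volume, z ∈ D → - FT A f z = v0 z := by
    filter_upwards [hae] with z hz hzD
    rw [hz hzD, hf, Set.indicator_of_mem hzD, neg_neg]
  have hvc : ContinuousOn (fun z => - FT A f z) D := hcont.neg
  refine ⟨fun z => - FT A f z, ?_, ?_, ?_, ?_⟩
  · refine sub_of_cont hD hvc ?_
    intro φ hT h0
    have : ∫ z, - FT A f z * alphaOpR A φ z = ∫ z, v0 z * alphaOpR A φ z := by
      refine integral_congr_ae ?_
      filter_upwards [hae'] with z hz
      by_cases hzD : z ∈ D
      · rw [hz hzD]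
      · rw [image_eq_zero_of_notMem_tsupport (fun h => hzD (hT.L_supp A h))]; simp
    rw [this]
    exact (hv3 φ hT h0).1
  · intro z hz
    have h1 : ContinuousOn (fun z => - FT A f z + c) D := hvc.add continuousOn_const
    have := sub_le hu hD h1 (by
      filter_upwards [hae'] with x hx hxD
      rw [hx hxD]
      have := hv1 x hxD
      linarith) z hz
    linarith
  · refine cont_le hD hvc hb.continuous.continuousOn ?_
    filter_upwards [hae'] with x hx hxD
    rw [hx hxD]; exact hv2 x hxD
  · intro z hz w r h1 h2 h3 h4
    simp only [neg_neg]
    exact H D f F hD hDc hDR hfd z hz w r h1 h2 h3 h4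

lemma L_sq_nonneg (A : AlphaForm n) (l : Cn n →L[ℝ] ℝ) (z : Cn n) :
    0 ≤ alphaOpR A (fun w => (l w) ^ 2) z := by
  have h := alphaOpR_comp A (φ := fun w => l w) (Θ := fun t => t ^ 2) l.contDiff (contDiff_id.pow 2) z
  have h1 : alphaOpR A (fun w => l w) z = 0 := by
    rw [alphaOpR_eq A l.contDiff]
    have : fderiv ℝ (fun w => l w) = fun _ => l := by ext; simp
    rw [this]
    simpa using Lam_zero A z
  have h2 : deriv (deriv fun t : ℝ => t ^ 2) = fun _ => 2 := by
    have : (deriv fun t : ℝ => t ^ 2) = fun t => 2 * t := by ext; simp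
    rw [this]; ext t
    simpa using ((hasDerivAt_id t).const_mul 2).deriv
  rw [h1, h2, mul_zero, zero_add] at h
  rw [h]
  exact mul_nonneg zero_le_two (Lam_rk_nonneg _ _ _)

lemma L_sum_nonneg (A : AlphaForm n) {ι : Type*} (s : Finset ι) (g : ι → Cn n → ℝ)
    (hg : ∀ i, ContDiff ℝ 2 (g i)) (h0 : ∀ i z, 0 ≤ alphaOpR A (g i) z) (z : Cn n) :
    0 ≤ alphaOpR A (fun w => ∑ i ∈ s, g i w) z := by
  classical
  induction s using Finset.induction_on with
  | empty =>
    simp only [Finset.sum_empty]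
    rw [alphaOpR_eq A contDiff_const]
    have : fderiv ℝ (fun _ : Cn n => (0 : ℝ)) = fun _ => 0 := by ext; simp
    rw [this]
    simpa using (Lam_zero A z).ge
  | insert a s ha ih =>
    have e : (fun w => ∑ i ∈ insert a s, g i w) = g a + fun w => ∑ i ∈ s, g i w := by
      ext w; simp [Finset.sum_insert ha]
    rw [e, alphaOpR_add A (hg a) (ContDiff.sum fun i _ => hg i)]
    exact add_nonneg (h0 a z) ih

noncomputable def reL (i : Fin n) : Cn n →L[ℝ] ℝ :=
  Complex.reCLM.comp (ContinuousLinearMap.proj (R := ℝ) (φ := fun _ : Fin n => ℂ) i)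
noncomputable def imL (i : Fin n) : Cn n →L[ℝ] ℝ :=
  Complex.imCLM.comp (ContinuousLinearMap.proj (R := ℝ) (φ := fun _ : Fin n => ℂ) i)

lemma sqNorm_eq : (sqNorm : Cn n → ℝ) =
    fun z => ∑ i : Fin n, ((fun w => (reL i w) ^ 2) + fun w => (imL i w) ^ 2) z := by
  ext z
  simp only [sqNorm, Complex.normSq_apply, Pi.add_apply, reL, imL]
  refine Finset.sum_congr rfl fun i _ => ?_
  simp [pow_two]

lemma sqNorm_smooth : ContDiff ℝ 2 (sqNorm : Cn n → ℝ) := by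
  rw [sqNorm_eq]
  exact ContDiff.sum fun i _ => ((reL i).contDiff.pow 2).add ((imL i).contDiff.pow 2)

lemma L_sqNorm (A : AlphaForm n) (z : Cn n) : 0 ≤ alphaOpR A sqNorm z := by
  rw [sqNorm_eq]
  refine L_sum_nonneg A _ _ (fun i => ((reL i).contDiff.pow 2).add ((imL i).contDiff.pow 2))
    (fun i z => ?_) z
  have e := alphaOpR_add A (φ := fun w => (reL i w) ^ 2) (χ := fun w => (imL i w) ^ 2)
    ((reL i).contDiff.pow 2) ((imL i).contDiff.pow 2) z
  refine le_of_le_of_eq ?_ e.symm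
  exact add_nonneg (L_sq_nonneg A _ z) (L_sq_nonneg A _ z)

lemma dist_of_strict {ρ : Cn n → ℝ} {ε : ℝ} (hε : 0 < ε) 
    (hρl : LocallyIntegrableOn ρ D volume)
    (h : IsAlphaSubharmonic A D (fun z => ρ z - ε * sqNorm z)) : DistSub A D ρ := by
  intro φ hT h0
  have h1 := sub_dist h φ hT h0
  have hs : LocallyIntegrableOn (sqNorm : Cn n → ℝ) D volume :=
    sqNorm_smooth.continuous.locallyIntegrable.locallyIntegrableOn D
  have i1 := integrable_mul_cpt hρl (hT.L_cont A) (hT.L_cpt A) (hT.L_supp A)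
  have i2 : Integrable fun z => ε * (sqNorm z * alphaOpR A φ z) :=
    (integrable_mul_cpt hs (hT.L_cont A) (hT.L_cpt A) (hT.L_supp A)).const_mul ε
  have e : ∀ z, (ρ z - ε * sqNorm z) * alphaOpR A φ z
      = ρ z * alphaOpR A φ z - ε * (sqNorm z * alphaOpR A φ z) := fun z => by ring
  simp_rw [e] at h1
  rw [integral_sub i1 i2, integral_const_mul, ibp A sqNorm_smooth hT.two hT.cpt] at h1
  have : 0 ≤ ∫ z, alphaOpR A sqNorm z * φ z :=
    integral_nonneg fun z => mul_nonneg (L_sqNorm A z) (h0 z)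
  have := mul_nonneg hε.le this
  linarith

lemma dist_mul (hs : DistSub A D u) {c : ℝ} (hc : 0 ≤ c) : DistSub A D (fun z => c * u z) := by
  intro φ hT h0
  simp_rw [mul_assoc]
  rw [integral_const_mul]
  exact mul_nonneg hc (hs φ hT h0)

end AH


open MeasureTheory Filter Topology Complex Metric

namespace AH

set_option maxSynthPendingDepth 3
section moll
variable {E : Type*} [NormedAddCommGroup E] [NormedSpace ℝ E] [FiniteDimensional ℝ E]
  [MeasurableSpace E] [BorelSpace E]

lemma conv_bound {V : Type*} [NormedAddCommGroup V] [NormedSpace ℝ V]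
    {W : Type*} [NormedAddCommGroup W] [NormedSpace ℝ W] (μ : Measure E)
    (L : V →L[ℝ] ℝ →L[ℝ] W) {f : E → V} (hf : Integrable f μ) {G : E → ℝ} {P : ℝ}
    (hG : ∀ x, |G x| ≤ P) (x : E) :
    ‖convolution f G L μ x‖ ≤ ‖L‖ * (∫ t, ‖f t‖ ∂μ) * P := by
  rw [convolution]
  refine (norm_integral_le_integral_norm _).trans ?_
  have : ‖L‖ * (∫ t, ‖f t‖ ∂μ) * P = ∫ t, ‖L‖ * P * ‖f t‖ ∂μ := by
    rw [integral_const_mul]; ring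
  rw [this]
  refine integral_mono_of_nonneg (Filter.Eventually.of_forall fun t => norm_nonneg _)
    (hf.norm.const_mul _) (Filter.Eventually.of_forall fun t => ?_)
  refine (L.le_opNorm₂ (f t) (G (x - t))).trans ?_
  have := hG (x - t)
  rw [Real.norm_eq_abs]
  calc ‖L‖ * ‖f t‖ * |G (x - t)| ≤ ‖L‖ * ‖f t‖ * P := by gcongr
    _ = _ := by ring

lemma conv_fderiv_bound {V : Type*} [NormedAddCommGroup V] [NormedSpace ℝ V]
    {W : Type*} [NormedAddCommGroup W] [NormedSpace ℝ W] (μ : Measure E) [μ.IsAddHaarMeasure]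
    (L : V →L[ℝ] ℝ →L[ℝ] W) {f : E → V} (hf : ContDiff ℝ 1 f) (hc : HasCompactSupport f) :
    ∃ B : ℝ, 0 ≤ B ∧ ∀ (G : E → ℝ) (P : ℝ), Continuous G → (∀ x, |G x| ≤ P) → ∀ x,
      ‖fderiv ℝ (convolution f G L μ) x‖ ≤ B * P := by
  refine ⟨‖L.precompL E‖ * ∫ t, ‖fderiv ℝ f t‖ ∂μ, by positivity, ?_⟩
  intro G P hG hP x
  rw [(hc.hasFDerivAt_convolution_left L hf hG.locallyIntegrable x).fderiv]
  exact conv_bound μ _ ((hf.continuous_fderiv (by norm_num)).integrable_of_hasCompactSupport (hc.fderiv ℝ)) hP x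

lemma mollify (μ : Measure E) [μ.IsAddHaarMeasure] : ∃ B : ℝ, 0 ≤ B ∧ ∀ (Ψ : E → ℝ) (P t ε : ℝ), Continuous Ψ →
    (∀ x, |Ψ x| ≤ P) → 0 < t → (∀ x y, ‖x - y‖ ≤ t → |Ψ x - Ψ y| ≤ ε) →
    ∃ b : E → ℝ, ContDiff ℝ 2 b ∧ (∀ x, |b x - Ψ x| ≤ ε) ∧
      ∀ x, ‖fderiv ℝ (fderiv ℝ b) x‖ ≤ B * P * (t⁻¹) ^ 2 := by
  let φ : ContDiffBump (0 : E) := ⟨1 / 2, 1, by norm_num, by norm_num⟩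
  set k : E → ℝ := φ.normed μ with hk
  have hks : ContDiff ℝ 2 k := two_of_smooth (φ.contDiff_normed (n := (⊤ : ℕ∞)))
  have hkc : HasCompactSupport k := φ.hasCompactSupport_normed
  have hk1 : ContDiff ℝ 1 (fderiv ℝ k) := hks.fderiv_right (by norm_num)
  have hkc1 : HasCompactSupport (fderiv ℝ k) := hkc.fderiv ℝ
  let L : ℝ →L[ℝ] ℝ →L[ℝ] ℝ := ContinuousLinearMap.lsmul ℝ ℝ
  obtain ⟨B, hB, hBd⟩ := conv_fderiv_bound μ (L.precompL E) hk1 hkc1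
  refine ⟨B, hB, ?_⟩
  intro Ψ P t ε hΨ hP ht hmod
  set G : E → ℝ := fun x => Ψ (t • x) with hG
  have hGc : Continuous G := by fun_prop
  have hGl : LocallyIntegrable G μ := hGc.locallyIntegrable
  set g := convolution k G L μ with hg
  have hgs : ContDiff ℝ 2 g := hkc.contDiff_convolution_left L hks hGl
  have d1 : fderiv ℝ g = convolution (fderiv ℝ k) G (L.precompL E) μ := by
    ext1 x
    exact (hkc.hasFDerivAt_convolution_left L (hks.of_le (by norm_num)) hGl x).fderiv
  have hb : ∀ x, ‖fderiv ℝ (fderiv ℝ g) x‖ ≤ B * P := by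
    intro x
    rw [d1]
    exact hBd G P hGc (fun x => hP _) x
  refine ⟨fun x => g (t⁻¹ • x), hgs.comp (contDiff_const_smul _), ?_, ?_⟩
  · intro x
    have h1 := φ.dist_normed_convolution_le (μ := μ) (g := G) (x₀ := t⁻¹ • x) (ε := ε)
      hGc.aestronglyMeasurable (fun y hy => by
        rw [Real.dist_eq]
        refine hmod _ _ ?_
        rw [← smul_sub, norm_smul, Real.norm_of_nonneg ht.le]
        rw [mem_ball, dist_eq_norm] at hy
        have : ‖y - t⁻¹ • x‖ ≤ 1 := hy.le
        exact mul_le_of_le_one_right ht.le this)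
    rw [Real.dist_eq] at h1
    have e : G (t⁻¹ • x) = Ψ x := by simp [hG, smul_smul, ht.ne']
    rw [e] at h1
    exact h1
  · intro x
    have e1 : fderiv ℝ (fun x => g (t⁻¹ • x)) = fun x => t⁻¹ • fderiv ℝ g (t⁻¹ • x) := by
      ext1 x; exact fderiv_comp_smul t⁻¹ 
    have hdg : Differentiable ℝ (fderiv ℝ g) := (hgs.fderiv_right (m := 1) (by norm_num)).differentiable (by norm_num)
    have e2 : fderiv ℝ (fun x => t⁻¹ • fderiv ℝ g (t⁻¹ • x)) x = t⁻¹ • t⁻¹ • fderiv ℝ (fderiv ℝ g) (t⁻¹ • x) := by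
      have hh : DifferentiableAt ℝ (fun x => fderiv ℝ g (t⁻¹ • x)) x :=
        (hdg.comp (differentiable_id.const_smul t⁻¹)) x
      have := fderiv_fun_const_smul hh t⁻¹
      rw [this]
      congr 1
      exact fderiv_comp_smul t⁻¹
    rw [e1, e2, norm_smul, norm_smul, Real.norm_of_nonneg (by positivity)]
    have := hb (t⁻¹ • x)
    calc _ ≤ t⁻¹ * (t⁻¹ * (B * P)) := by gcongr
      _ = _ := by ring
end moll
set_option maxSynthPendingDepth 1

end AH


open MeasureTheory Filter Topology Complex Metric

namespace AH
variable {n : ℕ} {A : AlphaForm n} {D K : Set (Cn n)} {ψ : Cn n → ℝ}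

lemma barrier (hD : IsStronglyAlphaRegularDomain A D) (hDc : Dᶜ.Nonempty) (hK : IsCompact K)
    (hKD : K ⊆ D) {P : ℝ} (hP : 0 ≤ P) (hψ : ∀ w ∈ K, -P ≤ ψ w) :
    ∃ v ∈ Uclass A K D ψ, ∃ L : ℝ, 0 ≤ L ∧ ∀ z ∈ D, - v z ≤ L * infDist z Dᶜ := by
  obtain ⟨hDo, hDn, hDb, Dp, hDp, hcl, ρ, hρ, hst, hDeq⟩ := hD
  have hcpt : IsCompact (closure D) := hDb.isCompact_closure
  obtain ⟨ε, hε, hsub⟩ := hst D hDo hcpt hcl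
  have hDDp : D ⊆ Dp := subset_closure.trans hcl
  have hρc : ContinuousOn ρ Dp := hρ.continuousOn
  have hneg : ∀ z ∈ D, ρ z < 0 := fun z hz => by rw [hDeq] at hz; exact hz.2
  have hdist : DistSub A D ρ := dist_of_strict hε
    ((hρc.mono hDDp).locallyIntegrableOn hDo.measurableSet) hsub
  -- the multiplier
  obtain ⟨M, hM0, hM⟩ : ∃ M : ℝ, 0 < M ∧ ∀ w ∈ K, M * ρ w ≤ ψ w := by
    rcases K.eq_empty_or_nonempty with rfl | hne
    · exact ⟨1, one_pos, by simp⟩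
    obtain ⟨w0, hw0, hmax⟩ := hK.exists_isMaxOn hne ((hρc.mono hDDp).mono hKD)
    have h0 := hneg w0 (hKD hw0)
    refine ⟨(P + 1) / (- ρ w0), div_pos (by linarith) (by linarith), fun w hw => ?_⟩
    have h1 : ρ w ≤ ρ w0 := hmax hw
    have h2 := hψ w hw
    have h3 : (P + 1) / (- ρ w0) * ρ w ≤ (P + 1) / (- ρ w0) * ρ w0 :=
      mul_le_mul_of_nonneg_left h1 (div_nonneg (by linarith) (by linarith))
    have h4 : (P + 1) / (- ρ w0) * ρ w0 = -(P + 1) := by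
      rw [div_neg, neg_mul, div_mul_cancel₀ _ h0.ne]
    linarith
  -- Lipschitz
  have hll : LocallyLipschitzOn (closure D) ρ := by
    intro x hx
    have : ContDiffAt ℝ 1 ρ x := (hρ.contDiffAt (hDp.mem_nhds (hcl hx))).of_le (by norm_num)
    obtain ⟨k, t, ht, hk⟩ := this.exists_lipschitzOnWith
    exact ⟨k, t, mem_nhdsWithin_of_mem_nhds ht, hk⟩
  obtain ⟨k, hk⟩ := hll.exists_lipschitzOnWith_of_compact hcpt
  have hest : ∀ z ∈ D, - ρ z ≤ k * infDist z Dᶜ := by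
    intro z hz
    have hp : 0 < infDist z Dᶜ := (hDo.isClosed_compl.notMem_iff_infDist_pos hDc).1 (by simpa using hz)
    obtain ⟨ζ, hζ, hd⟩ := hDo.isClosed_compl.exists_infDist_eq_dist hDc z
    have hζc : ζ ∈ closure D := by
      have h1 : ball z (infDist z Dᶜ) ⊆ D := by
        intro x hx
        by_contra hc
        have := infDist_le_dist_of_mem (x := z) (show x ∈ Dᶜ from hc)
        rw [mem_ball, dist_comm] at hx
        linarith
      refine closure_mono h1 ?_
      rw [closure_ball z hp.ne', mem_closedBall, dist_comm, hd]
    have hζ0 : 0 ≤ ρ ζ := by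
      by_contra hc
      push Not at hc
      exact hζ (by rw [hDeq]; exact ⟨hcl hζc, hc⟩)
    have := hk.dist_le_mul z (subset_closure hz) ζ hζc
    rw [Real.dist_eq, ← hd] at this
    have h2 := (abs_le.1 this).1
    linarith
  refine ⟨fun z => M * ρ z, ⟨sub_of_cont hDo (continuousOn_const.mul (hρc.mono hDDp))
    (dist_mul hdist hM0.le), hM, fun z hz => mul_neg_of_pos_of_neg hM0 (hneg z hz)⟩,
    M * k, by positivity, fun z hz => ?_⟩
  have := mul_le_mul_of_nonneg_left (hest z hz) hM0.le
  linarith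

lemma omega_bdd {z : Cn n} (hz : z ∈ D) : BddAbove ((fun u : Cn n → ℝ => u z) '' Uclass A K D ψ) :=
  ⟨0, by rintro _ ⟨u, hu, rfl⟩; exact (hu.2.2 z hz).le⟩

lemma le_omega {u : Cn n → ℝ} (hu : u ∈ Uclass A K D ψ) {z : Cn n} (hz : z ∈ D) :
    u z ≤ omegaW A K D ψ z := le_csSup (omega_bdd hz) ⟨u, hu, rfl⟩

lemma omega_le (hne : (Uclass A K D ψ).Nonempty) {z : Cn n} {c : ℝ} 
    (h : ∀ u ∈ Uclass A K D ψ, u z ≤ c) : omegaW A K D ψ z ≤ c := by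
  refine csSup_le (hne.image _) ?_
  rintro _ ⟨u, hu, rfl⟩; exact h u hu

lemma rpow_sub_le {a b μ : ℝ} (ha : 0 ≤ a) (hb : 0 ≤ b) (hμ : 0 ≤ μ) (hμ1 : μ ≤ 1) {d : ℝ} (hd : 0 ≤ d)
    (h : a ≤ b + d) : a ^ μ ≤ b ^ μ + d ^ μ :=
  (Real.rpow_le_rpow ha h hμ).trans (Real.rpow_add_le_add_rpow hb hd hμ hμ1)

/-- Hölder extension -/
lemma exists_Psi {om : Cn n → ℝ} (hK : IsCompact K) (hψH : ∃ C₁ > (0 : ℝ), ∃ lam₁ : ℝ, 0 < lam₁ ∧ lam₁ ≤ 1 ∧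
      ∀ z ∈ K, ∀ w ∈ K, |ψ z - ψ w| ≤ C₁ * ‖z - w‖ ^ lam₁)
    {P : ℝ} (hP : 0 ≤ P) (hψ : ∀ w ∈ K, -P ≤ ψ w) (hom : ∀ z ∈ D, om z ≤ 0)
    (hU : ∃ C > (0 : ℝ), ∃ lam : ℝ, 0 < lam ∧ lam ≤ 1 ∧
      ∃ U : Set (Cn n), IsOpen U ∧ K ⊆ U ∧
        ∀ z ∈ U, ∀ w ∈ K, dist z w = Metric.infDist z K →
          |om z - ψ w| ≤ C * (Metric.infDist z K) ^ lam) :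
    ∃ (Ψ : Cn n → ℝ) (H μ : ℝ), 0 ≤ H ∧ 0 < μ ∧ μ ≤ 1 ∧ (∀ x y, |Ψ x - Ψ y| ≤ H * ‖x - y‖ ^ μ) ∧
      (∀ x, Ψ x ≤ 0) ∧ (∀ x, |Ψ x| ≤ P) ∧ (∀ w ∈ K, Ψ w ≤ ψ w) ∧ ∀ z ∈ D, om z ≤ Ψ z := by
  rcases K.eq_empty_or_nonempty with rfl | hne
  · exact ⟨fun _ => 0, 0, 1, le_rfl, one_pos, le_rfl, by simp, by simp, by simpa using hP, by simp, hom⟩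
  obtain ⟨C₁, hC₁, l₁, hl₁, hl₁1, hH⟩ := hψH
  obtain ⟨C, hC, l, hl, hl1, U, hUo, hKU, hUe⟩ := hU
  set μ := min l l₁ with hμ
  have hμ0 : 0 < μ := lt_min hl hl₁
  have hμ1 : μ ≤ 1 := (min_le_left _ _).trans hl1
  obtain ⟨η, hη, hηU⟩ := hK.exists_thickening_subset_open hUo hKU
  set s0 := min η 1 with hs0
  have hs00 : 0 < s0 := lt_min hη one_pos
  set H := C + 2 * C₁ + P / s0 ^ μ with hHdef
  have hsp : 0 < s0 ^ μ := Real.rpow_pos_of_pos hs00 _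
  have hPs : 0 ≤ P / s0 ^ μ := by positivity
  have hH0 : 0 ≤ H := by positivity
  haveI : Nonempty K := hne.to_subtype
  have key : ∀ z ∈ D, ∀ w ∈ K, om z ≤ ψ w + H * ‖z - w‖ ^ μ := by
    intro z hz w hw
    set s := ‖z - w‖ with hs
    rcases lt_or_ge s s0 with hlt | hge
    · have hs1 : s < 1 := hlt.trans_le (min_le_right _ _)
      have hzU : z ∈ U := hηU (mem_thickening_iff.2 ⟨w, hw, by
        rw [dist_eq_norm]; exact hlt.trans_le (min_le_left _ _)⟩)
      obtain ⟨w', hw', hd⟩ := hK.exists_infDist_eq_dist hne z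
      have h1 := (abs_le.1 (hUe z hzU w' hw' hd.symm)).2
      have h2 := (abs_le.1 (hH w' hw' w hw)).2
      have hds : infDist z K ≤ s := by
        rw [hs, ← dist_eq_norm]; exact infDist_le_dist_of_mem hw
      have h3 : ‖w' - w‖ ≤ 2 * s := by
        have : dist w' w ≤ dist z w' + dist z w := by
          rw [dist_comm z w']; exact dist_triangle _ _ _
        rw [← hd, dist_eq_norm, dist_eq_norm, ← hs] at this
        linarith
      have hsn : 0 ≤ s := norm_nonneg _
      have q : ∀ p, μ ≤ p → s ^ p ≤ s ^ μ := by
        intro p hp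
        rcases hsn.eq_or_lt with h0 | h0
        · rw [← h0, Real.zero_rpow hμ0.ne', Real.zero_rpow (hμ0.trans_le hp).ne']
        · exact Real.rpow_le_rpow_of_exponent_ge h0 hs1.le hp
      have h4 : (infDist z K) ^ l ≤ s ^ μ :=
        (Real.rpow_le_rpow infDist_nonneg hds hl.le).trans (q l (min_le_left _ _))
      have h5 : ‖w' - w‖ ^ l₁ ≤ 2 * s ^ μ := by
        refine (Real.rpow_le_rpow (norm_nonneg _) h3 hl₁.le).trans ?_
        rw [Real.mul_rpow zero_le_two hsn]
        have : (2 : ℝ) ^ l₁ ≤ 2 := by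
          calc (2 : ℝ) ^ l₁ ≤ 2 ^ (1 : ℝ) := Real.rpow_le_rpow_of_exponent_le one_le_two hl₁1
            _ = 2 := Real.rpow_one 2
        exact mul_le_mul this (q l₁ (min_le_right _ _)) (by positivity) zero_le_two
      have h6 : C * (infDist z K) ^ l ≤ C * s ^ μ := by gcongr
      have h7 : C₁ * ‖w' - w‖ ^ l₁ ≤ C₁ * (2 * s ^ μ) := by gcongr
      have h8 : 0 ≤ P / s0 ^ μ * s ^ μ := by positivity
      rw [hHdef]
      linarith
    · have h1 : s0 ^ μ ≤ s ^ μ := Real.rpow_le_rpow hs00.le hge hμ0.le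
      have h2 : P ≤ H * s ^ μ := by
        calc P = P / s0 ^ μ * s0 ^ μ := by field_simp
          _ ≤ H * s ^ μ := by
            gcongr
            rw [hHdef]; linarith
      have := hψ w hw
      have := hom z hz
      linarith
  set g : Cn n → K → ℝ := fun z w => ψ w + H * ‖z - w‖ ^ μ with hg
  have hglow : ∀ z w, -P ≤ g z w := fun z w => by
    have := hψ w w.2
    have : 0 ≤ H * ‖z - w‖ ^ μ := by positivity
    simp only [hg]; linarith
  have hbdd : ∀ z, BddBelow (Set.range (g z)) := fun z => ⟨-P, by rintro _ ⟨w, rfl⟩; exact hglow z w⟩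
  have hone : ∀ x y, (⨅ w, g x w) ≤ (⨅ w, g y w) + H * ‖x - y‖ ^ μ := by
    intro x y
    rw [← sub_le_iff_le_add]
    refine le_ciInf fun w => ?_
    rw [sub_le_iff_le_add]
    refine (ciInf_le (hbdd x) w).trans ?_
    simp only [hg]
    have h1 : ‖x - (w : Cn n)‖ ≤ ‖y - w‖ + ‖x - y‖ := by
      have : x - (w : Cn n) = (y - w) + (x - y) := by abel
      rw [this]; exact norm_add_le _ _
    have h2 := rpow_sub_le (norm_nonneg _) (norm_nonneg _) hμ0.le hμ1 (norm_nonneg _) h1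
    have h3 := mul_le_mul_of_nonneg_left h2 hH0
    linarith
  have hone' : ∀ x y, min 0 (⨅ w, g x w) - min 0 (⨅ w, g y w) ≤ H * ‖x - y‖ ^ μ := by
    intro x y
    have h1 := hone x y
    have h2 : 0 ≤ H * ‖x - y‖ ^ μ := by positivity
    rcases min_choice 0 (⨅ w, g y w) with h | h <;> rw [h]
    · have := min_le_left 0 (⨅ w, g x w); linarith
    · have := min_le_right 0 (⨅ w, g x w); linarith
  refine ⟨fun z => min 0 (⨅ w, g z w), H, μ, hH0, hμ0, hμ1, ?_, fun x => min_le_left _ _, ?_, ?_, ?_⟩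
  · intro x y
    rw [abs_le]
    have := hone' y x
    rw [norm_sub_rev] at this
    exact ⟨by linarith, hone' x y⟩
  · intro x
    rw [abs_le]
    exact ⟨le_min (by linarith) (le_ciInf fun w => hglow x w), (min_le_left _ _).trans hP⟩
  · intro w hw
    refine (min_le_right _ _).trans ((ciInf_le (hbdd w) ⟨w, hw⟩).trans ?_)
    simp [hg, Real.zero_rpow hμ0.ne']
  · intro z hz
    exact le_min (hom z hz) (le_ciInf fun w => key z hz w w.2)

end AH


open MeasureTheory Filter Topology Complex Metric

namespace AH
variable {n : ℕ} {A : AlphaForm n} {D K : Set (Cn n)} {ψ : Cn n → ℝ}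

lemma pow_le_rpow {e μ : ℝ} (he : 0 < e) (he1 : e ≤ 1) (hμ1 : μ ≤ 1) {k : ℕ} (hk : 1 ≤ k) :
    e ^ k ≤ e ^ μ := by
  rw [← Real.rpow_natCast]
  refine Real.rpow_le_rpow_of_exponent_ge he he1 (hμ1.trans ?_)
  exact_mod_cast hk

lemma main_core (hDo : IsOpen D) (hDb : Bornology.IsBounded D) (hDc : Dᶜ.Nonempty)
    {Ψ : Cn n → ℝ} {H μ P L : ℝ} (hH : 0 ≤ H) (hμ : 0 < μ) (hμ1 : μ ≤ 1)
    (hΨH : ∀ x y, |Ψ x - Ψ y| ≤ H * ‖x - y‖ ^ μ) (hΨ0 : ∀ x, Ψ x ≤ 0) (hΨP : ∀ x, |Ψ x| ≤ P)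
    (hΨψ : ∀ w ∈ K, Ψ w ≤ ψ w) (hΨom : ∀ z ∈ D, omegaW A K D ψ z ≤ Ψ z) (hKD : K ⊆ D)
    (hne : (Uclass A K D ψ).Nonempty) (hL : 0 ≤ L)
    (hLom : ∀ z ∈ D, - omegaW A K D ψ z ≤ L * infDist z Dᶜ) :
    ∃ M : ℝ, 0 ≤ M ∧ ∀ z ∈ D, ∀ w ∈ D,
      omegaW A K D ψ z - omegaW A K D ψ w ≤ M * ‖z - w‖ ^ (μ / 8) := by
  have hom0 : ∀ z ∈ D, omegaW A K D ψ z ≤ 0 := fun z hz => (hΨom z hz).trans (hΨ0 z)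
  obtain ⟨R, hR⟩ := hDb.subset_closedBall (0 : Cn n)
  obtain ⟨C, hC1, r0, hr0, hr01, hreg⟩ := regularize A R
  obtain ⟨B, hB, hmol⟩ := mollify (volume : Measure (Cn n))
  have hP0 : 0 ≤ P := (abs_nonneg _).trans (hΨP 0)
  -- bound on the coefficients
  obtain ⟨Am, hAm0, hAm⟩ : ∃ Am : ℝ, 0 ≤ Am ∧ ∀ z ∈ D, Abd A z ≤ Am := by
    obtain ⟨a, ha⟩ := (isCompact_closedBall (0 : Cn n) R).bddAbove_image
      (f := Abd A) (continuous_Abd A).continuousOn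
    exact ⟨max a 0, le_max_right _ _, fun z hz => (ha ⟨z, hR hz, rfl⟩).trans (le_max_left _ _)⟩
  -- bound on omega
  obtain ⟨Q, hQ0, hQ⟩ : ∃ Q : ℝ, 0 ≤ Q ∧ ∀ z ∈ D, - omegaW A K D ψ z ≤ Q := by
    obtain ⟨p, hp⟩ := hDc
    refine ⟨L * (|R| + dist 0 p), by positivity, fun z hz => (hLom z hz).trans ?_⟩
    refine mul_le_mul_of_nonneg_left ?_ hL
    refine (infDist_le_dist_of_mem hp).trans ((dist_triangle z 0 p).trans ?_)
    have : dist z 0 ≤ R := hR hz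
    have := le_abs_self R
    linarith
  set F0 : ℝ := Am * (B * (P + H + 1)) with hF0
  have hF00 : 0 ≤ F0 := by positivity
  have hΨc : Continuous Ψ := by
    rw [continuous_iff_continuousAt]
    intro x
    rw [ContinuousAt, tendsto_iff_norm_sub_tendsto_zero]
    have h1 : Tendsto (fun y : Cn n => H * ‖y - x‖ ^ μ) (𝓝 x) (𝓝 0) := by
      have : Continuous (fun y : Cn n => H * ‖y - x‖ ^ μ) :=
        continuous_const.mul ((continuous_id.sub continuous_const).norm.rpow_const
          (fun _ => Or.inr hμ.le))
      have h := this.tendsto x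
      simpa [Real.zero_rpow hμ.ne'] using h
    exact squeeze_zero (fun _ => norm_nonneg _) (fun y => hΨH y x) h1
  have step : ∀ t : ℝ, 0 < t → t ≤ 1 → ∀ r, 0 < r → r ≤ r0 → ∀ z ∈ D, ∀ w ∈ D, ‖z - w‖ ≤ r →
      C * r ≤ infDist z Dᶜ →
      omegaW A K D ψ z - omegaW A K D ψ w ≤ C * (r + ‖z - w‖ / r) * Q
        + (1 + C * (r + ‖z - w‖ / r)) * ((2 * H + 1) * t ^ μ) + C * (F0 * (t⁻¹) ^ 2) * r ^ 2 := by
    intro t ht ht1 r hr hrr0 z hz w hw hzw hCr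
    have htp : 0 < t ^ μ := Real.rpow_pos_of_pos ht _
    have htp1 : t ^ μ ≤ 1 := Real.rpow_le_one ht.le ht1 hμ.le
    obtain ⟨b, hb2, hbΨ, hbd⟩ := hmol (fun x => Ψ x - (H + 1) * t ^ μ) (P + H + 1) t (H * t ^ μ)
      (hΨc.sub continuous_const)
      (fun x => by
        have h1 := abs_le.1 (hΨP x)
        have h2 : (H + 1) * t ^ μ ≤ (H + 1) * 1 := by gcongr
        have h3 : 0 ≤ (H + 1) * t ^ μ := by positivity
        rw [abs_le]; constructor <;> linarith [h1.1, h1.2])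
      ht
      (fun x y hxy => by
        have := hΨH x y
        rw [sub_sub_sub_cancel_right]
        refine this.trans ?_
        gcongr)
    have hbl : ∀ x, Ψ x - (2 * H + 1) * t ^ μ ≤ b x := fun x => by
      have := (abs_le.1 (hbΨ x)).1; linarith
    have hbu : ∀ x, b x ≤ Ψ x - t ^ μ := fun x => by
      have := (abs_le.1 (hbΨ x)).2; linarith
    have hF : ∀ x ∈ D, |alphaOpR A b x| ≤ F0 * (t⁻¹) ^ 2 := by
      intro x hx
      refine (alphaOpR_abs_le A hb2 x).trans ?_
      calc Abd A x * ‖fderiv ℝ (fderiv ℝ b) x‖ ≤ Am * (B * (P + H + 1) * (t⁻¹) ^ 2) :=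
            (mul_le_mul_of_nonneg_left (hbd x) (Abd_nonneg A x)).trans
              (mul_le_mul_of_nonneg_right (hAm x hx) (by positivity))
        _ = _ := by rw [hF0]; ring
    set X := C * (r + ‖z - w‖ / r) with hX
    have hX0 : 0 ≤ X := by positivity
    set c := (2 * H + 1) * t ^ μ with hc
    have hu : ∀ u ∈ Uclass A K D ψ, u z ≤
        (omegaW A K D ψ w + (1 + X) * c + C * (F0 * (t⁻¹) ^ 2) * r ^ 2) / (1 + X) := by
      intro u hu
      obtain ⟨v, hv, huv, hvb, hest⟩ := hreg D u b (F0 * (t⁻¹) ^ 2) c hDo hDb hDc hR hu.1 hb2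
        (fun x hx => by
          have h1 := (le_omega hu hx).trans (hΨom x hx)
          have h2 := hbl x
          linarith)
        (fun x hx => by have := hbu x; have := hΨ0 x; linarith)
        hF (by positivity)
      have hvU : v ∈ Uclass A K D ψ := ⟨hv, fun x hx => by
          have h1 := hvb x (hKD hx)
          have h2 := hbu x
          have h3 := hΨψ x hx
          linarith, fun x hx => by
          have h1 := hvb x hx
          have h2 := hbu x
          have h3 := hΨ0 x
          linarith⟩
      have h1 := hest z hz w r hr hrr0 hzw hCr
      have h2 := le_omega hvU hw
      have h3 := huv z hz
      have h4 : (1 + X) * (- v z) ≤ (1 + X) * (c - u z) :=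
        mul_le_mul_of_nonneg_left (by linarith) (by linarith)
      rw [le_div_iff₀ (by linarith)]
      linarith
    have h1 := omega_le hne hu
    rw [le_div_iff₀ (by linarith)] at h1
    have h2 := mul_le_mul_of_nonneg_left (hQ z hz) hX0
    linarith
  set M : ℝ := 2 * C * (Q + (2 * H + 1)) + (2 * H + 1) + C * F0 + Q / r0 + L * (C + 1) with hM
  have hM1 : 0 ≤ 2 * C * (Q + (2 * H + 1)) := by positivity
  have hM2 : 0 ≤ C * F0 := by positivity
  have hM3 : 0 ≤ Q / r0 := by positivity
  have hM4 : 0 ≤ L * (C + 1) := by positivity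
  have hM0 : 0 ≤ M := by rw [hM]; linarith
  refine ⟨M, hM0, fun z hz w hw => ?_⟩
  set δ := ‖z - w‖ with hδ
  rcases (norm_nonneg (z - w)).eq_or_lt with h0 | hδ0
  · have : z = w := by rw [← sub_eq_zero, ← norm_eq_zero]; exact h0.symm
    rw [this, sub_self]; positivity
  rw [← hδ] at hδ0
  set e := δ ^ (1 / 8 : ℝ) with he
  have he0 : 0 < e := Real.rpow_pos_of_pos hδ0 _
  have heδ : e ^ 8 = δ := by
    rw [he, ← Real.rpow_natCast, ← Real.rpow_mul hδ0.le]; norm_num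
  have heμ : δ ^ (μ / 8) = e ^ μ := by
    rw [he, ← Real.rpow_mul hδ0.le]; congr 1; ring
  rw [heμ]
  have hep : 0 < e ^ μ := Real.rpow_pos_of_pos he0 _
  have hoz := hom0 z hz
  have how := hom0 w hw
  rcases lt_or_ge e r0 with hlt | hge
  swap
  · have h1 := hQ w hw
    have h2 : r0 ≤ e ^ μ := by
      calc r0 = r0 ^ (1 : ℝ) := (Real.rpow_one _).symm
        _ ≤ r0 ^ μ := Real.rpow_le_rpow_of_exponent_ge hr0 hr01 hμ1
        _ ≤ e ^ μ := Real.rpow_le_rpow hr0.le hge hμ.le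
    calc _ ≤ Q := by linarith
      _ = Q / r0 * r0 := by field_simp
      _ ≤ M * e ^ μ := by
        gcongr
        rw [hM]; linarith
  have he1 : e ≤ 1 := hlt.le.trans hr01
  have h4 : e ^ 4 ≤ e ^ μ := pow_le_rpow he0 he1 hμ1 (by norm_num)
  have h8 : e ^ 8 ≤ e ^ μ := pow_le_rpow he0 he1 hμ1 (by norm_num)
  have h6 : e ^ 6 ≤ e ^ μ := pow_le_rpow he0 he1 hμ1 (by norm_num)
  have h44 : e ^ 4 ≤ 1 := pow_le_one₀ he0.le he1
  rcases lt_or_ge (infDist z Dᶜ) (C * e ^ 4) with hb | hb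
  · have h1 := hLom w hw
    have h2 : infDist w Dᶜ ≤ infDist z Dᶜ + δ := by
      have := infDist_le_infDist_add_dist (s := Dᶜ) (x := w) (y := z)
      rwa [dist_comm, dist_eq_norm, ← hδ] at this
    have h3 : infDist w Dᶜ ≤ (C + 1) * e ^ μ := by
      have : C * e ^ 4 ≤ C * e ^ μ := by gcongr
      rw [← heδ] at h2
      linarith
    calc _ ≤ L * infDist w Dᶜ := by linarith
      _ ≤ L * ((C + 1) * e ^ μ) := by gcongr
      _ = L * (C + 1) * e ^ μ := by ring
      _ ≤ M * e ^ μ := by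
        gcongr
        rw [hM]; linarith
  · have hδe : δ ≤ e ^ 4 := by
      rw [← heδ]; exact pow_le_pow_of_le_one he0.le he1 (by norm_num)
    have her0 : e ^ 4 ≤ r0 := by
      refine le_trans ?_ hlt.le
      calc e ^ 4 ≤ e ^ 1 := pow_le_pow_of_le_one he0.le he1 (by norm_num)
        _ = e := pow_one e
    have := step e he0 he1 (e ^ 4) (by positivity) her0 z hz w hw hδe hb
    rw [← hδ] at this
    have hq : δ / e ^ 4 = e ^ 4 := by rw [← heδ]; field_simp
    have hq2 : C * (F0 * (e⁻¹) ^ 2) * (e ^ 4) ^ 2 = C * F0 * e ^ 6 := by field_simp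
    rw [hq, hq2] at this
    have a1 : C * (e ^ 4 + e ^ 4) * Q ≤ 2 * C * Q * e ^ μ := by
      calc _ = 2 * C * Q * e ^ 4 := by ring
        _ ≤ _ := by gcongr
    have a2 : (1 + C * (e ^ 4 + e ^ 4)) * ((2 * H + 1) * e ^ μ)
        ≤ (1 + 2 * C) * ((2 * H + 1) * e ^ μ) := by
      have : C * (e ^ 4 + e ^ 4) ≤ C * (1 + 1) := by gcongr
      exact mul_le_mul_of_nonneg_right (by linarith) (by positivity)
    have a3 : C * F0 * e ^ 6 ≤ C * F0 * e ^ μ := by gcongr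
    have a4 : 0 ≤ (Q / r0 + L * (C + 1)) * e ^ μ := by positivity
    calc _ ≤ 2 * C * Q * e ^ μ + (1 + 2 * C) * ((2 * H + 1) * e ^ μ) + C * F0 * e ^ μ
          + (Q / r0 + L * (C + 1)) * e ^ μ := by linarith
      _ = M * e ^ μ := by rw [hM]; ring

lemma backward (hD : IsStronglyAlphaRegularDomain A D) (hK : IsCompact K) (hKD : K ⊆ D)
    (hψH : ∃ C₁ > (0 : ℝ), ∃ lam₁ : ℝ, 0 < lam₁ ∧ lam₁ ≤ 1 ∧
      ∀ z ∈ K, ∀ w ∈ K, |ψ z - ψ w| ≤ C₁ * ‖z - w‖ ^ lam₁)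
    (hU : ∃ C > (0 : ℝ), ∃ lam : ℝ, 0 < lam ∧ lam ≤ 1 ∧
      ∃ U : Set (Cn n), IsOpen U ∧ K ⊆ U ∧
        ∀ z ∈ U, ∀ w ∈ K, dist z w = Metric.infDist z K →
          |omegaW A K D ψ z - ψ w| ≤ C * (Metric.infDist z K) ^ lam) :
    ∃ C > (0 : ℝ), ∃ lam : ℝ, 0 < lam ∧ lam ≤ 1 ∧
      ∀ z ∈ D, ∀ w ∈ D,
        |omegaW A K D ψ z - omegaW A K D ψ w| ≤ C * ‖z - w‖ ^ lam := by
  rcases subsingleton_or_nontrivial (Cn n) with hs | hnt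
  · refine ⟨1, one_pos, 1, one_pos, le_rfl, fun z _ w _ => ?_⟩
    rw [Subsingleton.elim z w]; simp
  have hDc : Dᶜ.Nonempty := by
    rw [Set.nonempty_compl]
    intro h
    exact NormedSpace.unbounded_univ ℝ (Cn n) (h ▸ hD.2.2.1)
  obtain ⟨P, hP, hψ⟩ : ∃ P : ℝ, 0 ≤ P ∧ ∀ w ∈ K, -P ≤ ψ w := by
    rcases K.eq_empty_or_nonempty with rfl | ⟨w0, hw0⟩
    · exact ⟨0, le_rfl, by simp⟩
    obtain ⟨C₁, hC₁, l, hl, _, hh⟩ := hψH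
    refine ⟨|ψ w0| + C₁ * (diam K) ^ l, by have := diam_nonneg (s := K); positivity, fun w hw => ?_⟩
    have h1 := (abs_le.1 (hh w hw w0 hw0)).1
    have h2 : ‖w - w0‖ ≤ diam K := by
      rw [← dist_eq_norm]; exact dist_le_diam_of_mem hK.isBounded hw hw0
    have h3 : C₁ * ‖w - w0‖ ^ l ≤ C₁ * (diam K) ^ l := by gcongr
    have h4 := neg_abs_le (ψ w0)
    linarith
  obtain ⟨v, hv, L, hL, hvL⟩ := barrier hD hDc hK hKD hP hψ
  have hne : (Uclass A K D ψ).Nonempty := ⟨v, hv⟩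
  have hom : ∀ z ∈ D, omegaW A K D ψ z ≤ 0 := fun z hz =>
    omega_le hne (fun u hu => (hu.2.2 z hz).le)
  obtain ⟨Ψ, H, μ, hH, hμ, hμ1, hΨH, hΨ0, hΨP, hΨψ, hΨom⟩ := exists_Psi hK hψH hP hψ hom hU
  obtain ⟨M, hM, hMe⟩ := main_core hD.1 hD.2.2.1 hDc hH hμ hμ1 hΨH hΨ0 hΨP hΨψ hΨom hKD hne hL
    (fun z hz => by have := hvL z hz; have := le_omega hv hz; linarith)
  refine ⟨M + 1, by linarith, μ / 8, by linarith, by linarith, fun z hz w hw => ?_⟩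
  have h1 := hMe z hz w hw
  have h2 := hMe w hw z hz
  rw [norm_sub_rev] at h2
  have h3 : 0 ≤ ‖z - w‖ ^ (μ / 8) := by positivity
  rw [abs_le]
  constructor <;> linarith

end AH


/-- Let `D` be strongly `α`-regular, `K ⊆ D` compact and `ψ` Hölder
continuous on `K` with `sup_K ψ < 0`, admitting a negative `α`-subharmonic extension to
`D`.  Then `ω_α(·,K,D,ψ)` is Hölder continuous on `D` iff there are `C > 0` and
`0 < λ ≤ 1` with `|ω_α(z,K,D,ψ) - ψ(w)| ≤ C·dist(z,K)^λ` for every `z` in some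
neighborhood of `K`, where `w ∈ K` is a closest point of `K` to `z`. -/
theorem weighted_measure_holder_iff {n : ℕ} (A : AlphaForm n) (D K : Set (Cn n))
    (hD : IsStronglyAlphaRegularDomain A D) (hK : IsCompact K) (hKD : K ⊆ D)
    (ψ : Cn n → ℝ)
    (hψH : ∃ C₁ > (0 : ℝ), ∃ lam₁ : ℝ, 0 < lam₁ ∧ lam₁ ≤ 1 ∧
      ∀ z ∈ K, ∀ w ∈ K, |ψ z - ψ w| ≤ C₁ * ‖z - w‖ ^ lam₁)
    (hsup : ∃ c < (0 : ℝ), ∀ z ∈ K, ψ z ≤ c)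
    (hext : ∃ ψt : Cn n → ℝ, IsAlphaSubharmonic A D ψt ∧ (∀ z ∈ D, ψt z < 0) ∧
      ∀ z ∈ K, ψt z = ψ z) :
    (∃ C > (0 : ℝ), ∃ lam : ℝ, 0 < lam ∧ lam ≤ 1 ∧
      ∀ z ∈ D, ∀ w ∈ D,
        |omegaW A K D ψ z - omegaW A K D ψ w| ≤ C * ‖z - w‖ ^ lam) ↔
    (∃ C > (0 : ℝ), ∃ lam : ℝ, 0 < lam ∧ lam ≤ 1 ∧
      ∃ U : Set (Cn n), IsOpen U ∧ K ⊆ U ∧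
        ∀ z ∈ U, ∀ w ∈ K, dist z w = Metric.infDist z K →
          |omegaW A K D ψ z - ψ w| ≤ C * (Metric.infDist z K) ^ lam) := by
  constructor
  · rintro ⟨C, hC, l, hl, hl1, hh⟩
    refine ⟨C, hC, l, hl, hl1, D, hD.1, hKD, fun z hz w hw hd => ?_⟩
    obtain ⟨ψt, hs, hneg, heq⟩ := hext
    have hmem : ψt ∈ Uclass A K D ψ := ⟨hs, fun x hx => (heq x hx).le, hneg⟩
    have hw2 : omegaW A K D ψ w = ψ w := le_antisymm
      (AH.omega_le ⟨ψt, hmem⟩ (fun u hu => hu.2.1 w hw))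
      ((heq w hw).symm.le.trans (AH.le_omega hmem (hKD hw)))
    have := hh z hz w (hKD hw)
    rwa [hw2, ← dist_eq_norm, hd] at this
  · exact AH.backward hD hK hKD hψH
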